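/- Let 𝚫 ∈ Ã. Then there exists a gentle quiver 𝚫' without branch arrows and without branch triangles which is reflection-equivalent to 𝚫 (i.e. obtained from 𝚫 by a finite sequence of reflections and coreflections). -/

import Mathlib

/-! Common formalization infrastructure for gentle quivers (Bobinski–Buan,
    "Derived equivalence classification of gentle cluster tilted algebras"). -/

/-- A (finite) quiver with (length-two, monomial) relations.  Vertices and
arrows are natural numbers; `V` and `A` are the finite sets of vertices and
arrows, `src`/`tgt` give the start and terminus of each arrow, and `rel` is the
set of relations, a relation `(a, b)` standing for the length-two path
`a·b` (so `src a = tgt b`). -/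
structure QuivRel where
  V : Finset ℕ
  A : Finset ℕ
  src : ℕ → ℕ
  tgt : ℕ → ℕ
  rel : Finset (ℕ × ℕ)

namespace GentleQuiv

/-- Two vertices are adjacent if some arrow joins them (in either direction). -/
def Adj (Q : QuivRel) (x y : ℕ) : Prop :=
  ∃ a ∈ Q.A, (Q.src a = x ∧ Q.tgt a = y) ∨ (Q.src a = y ∧ Q.tgt a = x)

/-- A quiver is connected if any two of its vertices are joined by a walk. -/
def Connected (Q : QuivRel) : Prop :=
  ∀ x ∈ Q.V, ∀ y ∈ Q.V, Relation.ReflTransGen (Adj Q) x y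

/-- `l = [α₁, …, αₙ]` is a (nonempty) path in the quiver: consecutive arrows
compose, i.e. `s αᵢ = t αᵢ₊₁`. -/
def IsPathList (Q : QuivRel) (l : List ℕ) : Prop :=
  l ≠ [] ∧ (∀ a ∈ l, a ∈ Q.A) ∧ l.Chain' (fun a b => Q.src a = Q.tgt b)

/-- The path `l` contains a subpath (two consecutive arrows) lying in `R`. -/
def HasRelSubpath (Q : QuivRel) (l : List ℕ) : Prop :=
  ∃ a b, (a, b) ∈ Q.rel ∧ [a, b] <:+: l

/-- Gentle quiver: connected, relations are composable pairs of arrows, at most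
two arrows in/out of every vertex, the usual gentleness conditions on
relations, and a global bound forcing finite dimensionality. -/
def IsGentle (Q : QuivRel) : Prop :=
  Q.V.Nonempty ∧
  (∀ a ∈ Q.A, Q.src a ∈ Q.V ∧ Q.tgt a ∈ Q.V) ∧
  Connected Q ∧
  (∀ ρ ∈ Q.rel, ρ.1 ∈ Q.A ∧ ρ.2 ∈ Q.A ∧ Q.src ρ.1 = Q.tgt ρ.2) ∧
  (∀ x, (Q.A.filter fun a => Q.src a = x).card ≤ 2) ∧
  (∀ x, (Q.A.filter fun a => Q.tgt a = x).card ≤ 2) ∧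
  (∀ a ∈ Q.A, (Q.A.filter fun b => Q.src b = Q.tgt a ∧ (b, a) ∉ Q.rel).card ≤ 1) ∧
  (∀ a ∈ Q.A, (Q.A.filter fun c => Q.tgt c = Q.src a ∧ (a, c) ∉ Q.rel).card ≤ 1) ∧
  (∀ a ∈ Q.A, (Q.A.filter fun b => (b, a) ∈ Q.rel).card ≤ 1) ∧
  (∀ a ∈ Q.A, (Q.A.filter fun c => (a, c) ∈ Q.rel).card ≤ 1) ∧
  (∃ n : ℕ, ∀ l : List ℕ, IsPathList Q l → l.length = n → HasRelSubpath Q l)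

/-- A choice of functions `σ, τ : Δ₁ → {±1}` as in Avella-Alaminos–Geiss. -/
structure SigmaTau (Q : QuivRel) where
  σ : ℕ → ℤ
  τ : ℕ → ℤ
  σ_pm : ∀ a ∈ Q.A, σ a = 1 ∨ σ a = -1
  τ_pm : ∀ a ∈ Q.A, τ a = 1 ∨ τ a = -1
  σ_src : ∀ a ∈ Q.A, ∀ b ∈ Q.A, a ≠ b → Q.src a = Q.src b → σ a = -σ b
  τ_tgt : ∀ a ∈ Q.A, ∀ b ∈ Q.A, a ≠ b → Q.tgt a = Q.tgt b → τ a = -τ b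
  rel_iff : ∀ a ∈ Q.A, ∀ b ∈ Q.A, Q.src a = Q.tgt b → ((a, b) ∈ Q.rel ↔ σ a = τ b)

/-- A thread: either a trivial path/antipath `1_{x,ε}` at a vertex `x` with a
sign `ε`, or a sequence of arrows of positive length. -/
inductive Thread where
  | triv (x : ℕ) (ε : ℤ) : Thread
  | arrows (l : List ℕ) : Thread
deriving DecidableEq

/-- Source of a thread. -/
def Thread.source (Q : QuivRel) : Thread → ℕ
  | .triv x _ => x
  | .arrows l => Q.src l.getLast!

/-- Target of a thread. -/
def Thread.target (Q : QuivRel) : Thread → ℕ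
  | .triv x _ => x
  | .arrows l => Q.tgt l.head!

/-- `σω` (for paths and antipaths alike; `σ 1_{x,ε} = ε = σ 1'_{x,ε}`). -/
def Thread.sigma {Q : QuivRel} (st : SigmaTau Q) : Thread → ℤ
  | .triv _ ε => ε
  | .arrows l => st.σ l.getLast!

/-- `τω` when `ω` is regarded as a path (`τ 1_{x,ε} = -ε`). -/
def Thread.tauPath {Q : QuivRel} (st : SigmaTau Q) : Thread → ℤ
  | .triv _ ε => -ε
  | .arrows l => st.τ l.head!

/-- `τω` when `ω` is regarded as an antipath (`τ 1'_{x,ε} = ε`). -/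
def Thread.tauAnti {Q : QuivRel} (st : SigmaTau Q) : Thread → ℤ
  | .triv _ ε => ε
  | .arrows l => st.τ l.head!

/-- Length of a thread. -/
def Thread.len : Thread → ℕ
  | .triv _ _ => 0
  | .arrows l => l.length

/-- A path in `𝚫` of positive length (no two consecutive arrows in `R`). -/
def IsPermList (Q : QuivRel) (l : List ℕ) : Prop :=
  IsPathList Q l ∧ l.Chain' (fun a b => (a, b) ∉ Q.rel)

/-- An antipath in `𝚫` of positive length (all consecutive pairs in `R`). -/
def IsAntiList (Q : QuivRel) (l : List ℕ) : Prop :=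
  l ≠ [] ∧ (∀ a ∈ l, a ∈ Q.A) ∧ l.Chain' (fun a b => (a, b) ∈ Q.rel)

/-- A thread is a path in `𝚫` (including trivial ones). -/
def IsPathThread (Q : QuivRel) : Thread → Prop
  | .triv x ε => x ∈ Q.V ∧ (ε = 1 ∨ ε = -1)
  | .arrows l => IsPermList Q l

/-- A thread is an antipath in `𝚫` (including trivial ones). -/
def IsAntiThread (Q : QuivRel) : Thread → Prop
  | .triv x ε => x ∈ Q.V ∧ (ε = 1 ∨ ε = -1)
  | .arrows l => IsAntiList Q l

/-- `w ∈ ℳ`: `w` is a maximal path of `𝚫`. -/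
def InM (Q : QuivRel) (st : SigmaTau Q) (w : Thread) : Prop :=
  IsPathThread Q w ∧
  (¬ ∃ a ∈ Q.A, Q.src a = w.target Q ∧ st.σ a = -(w.tauPath st)) ∧
  (¬ ∃ b ∈ Q.A, Q.tgt b = w.source Q ∧ st.τ b = -(w.sigma st))

/-- `w ∈ 𝒩`: `w` is a maximal antipath of `𝚫`. -/
def InN (Q : QuivRel) (st : SigmaTau Q) (w : Thread) : Prop :=
  IsAntiThread Q w ∧
  (¬ ∃ a ∈ Q.A, Q.src a = w.target Q ∧ st.σ a = w.tauAnti st) ∧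
  (¬ ∃ b ∈ Q.A, Q.tgt b = w.source Q ∧ st.τ b = w.sigma st)

/-- The graph of the bijection `Φ = φ ∘ ψ : 𝒩 → 𝒩`:  `PhiRel Q st w w'` holds
iff `w, w' ∈ 𝒩` and the maximal path `ψ w` (with `s(ψw) = sw`, `σ(ψw) = -σw`)
satisfies `t w' = t (ψ w)` and `τ w' = -τ(ψ w)`, i.e. `w' = φ (ψ w) = Φ w`. -/
def PhiRel (Q : QuivRel) (st : SigmaTau Q) (w w' : Thread) : Prop :=
  InN Q st w ∧ InN Q st w' ∧
  ∃ m : Thread, InM Q st m ∧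
    m.source Q = w.source Q ∧ m.sigma st = -(w.sigma st) ∧
    w'.target Q = m.target Q ∧ w'.tauAnti st = -(m.tauPath st)

/-- `O` is an orbit of the `ℤ`-action on `𝒩` induced by `Φ`. -/
def NOrbit (Q : QuivRel) (st : SigmaTau Q) (O : Set Thread) : Prop :=
  ∃ w, InN Q st w ∧ O = {w' | Relation.EqvGen (PhiRel Q st) w w'}

/-- `p(𝒪) = |𝒪|` for an orbit `𝒪 ∈ 𝒩/ℤ`. -/
noncomputable def pN (O : Set Thread) : ℕ := O.ncard

/-- `q(𝒪) = Σ_{ω ∈ 𝒪} ℓ(ω)` for an orbit `𝒪 ∈ 𝒩/ℤ`. -/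
noncomputable def qN (O : Set Thread) : ℕ := ∑ᶠ w ∈ O, Thread.len w

/-- `a ∈ 𝒞`: the arrow `a` occurs in no maximal antipath. -/
def InC (Q : QuivRel) (st : SigmaTau Q) (a : ℕ) : Prop :=
  a ∈ Q.A ∧ ¬ ∃ l : List ℕ, InN Q st (.arrows l) ∧ a ∈ l

/-- The graph of the bijection `Ψ : 𝒞 → 𝒞`. -/
def PsiRel (Q : QuivRel) (st : SigmaTau Q) (a b : ℕ) : Prop :=
  InC Q st a ∧ InC Q st b ∧ Q.tgt b = Q.src a ∧ st.τ b = st.σ a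

/-- `O` is an orbit of the `ℤ`-action on `𝒞` induced by `Ψ`. -/
def COrbit (Q : QuivRel) (st : SigmaTau Q) (O : Set ℕ) : Prop :=
  ∃ a, InC Q st a ∧ O = {b | Relation.EqvGen (PsiRel Q st) a b}

/-- The Avella-Alaminos–Geiss invariant `f_𝚫 : ℕ² → ℕ`:  `f_𝚫 (p,q)` counts the
orbits `𝒪 ∈ 𝒩/ℤ ⊔ 𝒞/ℤ` with `p(𝒪) = p` and `q(𝒪) = q`. -/
noncomputable def fInv (Q : QuivRel) (st : SigmaTau Q) : ℕ × ℕ → ℕ := fun pq =>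
  {O : Set Thread | NOrbit Q st O ∧ pN O = pq.1 ∧ qN O = pq.2}.ncard +
  {O : Set ℕ | COrbit Q st O ∧ pq.1 = 0 ∧ O.ncard = pq.2}.ncard

/-- `[p, q] : ℕ² → ℕ`, the characteristic function of `{(p, q)}`. -/
def charFn (p q : ℕ) : ℕ × ℕ → ℕ := fun pq => if pq = (p, q) then 1 else 0

/-- Tree type: `|Δ₀| = |Δ₁| + 1`. -/
def TreeType (Q : QuivRel) : Prop := Q.V.card = Q.A.card + 1

/-- Removing a set of arrows (keeping all vertices); relations containing a
removed arrow are discarded. -/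
def deleteArrows (Q : QuivRel) (S : Finset ℕ) : QuivRel where
  V := Q.V
  A := Q.A \ S
  src := Q.src
  tgt := Q.tgt
  rel := Q.rel.filter fun ρ => ρ.1 ∉ S ∧ ρ.2 ∉ S

/-- Branch arrow: removing it disconnects the quiver. -/
def BranchArrow (Q : QuivRel) (a : ℕ) : Prop :=
  a ∈ Q.A ∧ ¬ Connected (deleteArrows Q {a})

/-- Cycle arrow: removing it leaves the quiver connected. -/
def CycleArrow (Q : QuivRel) (a : ℕ) : Prop :=
  a ∈ Q.A ∧ Connected (deleteArrows Q {a})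

/-- Branch relation: a relation one of whose arrows is a branch arrow. -/
def BranchRel (Q : QuivRel) (ρ : ℕ × ℕ) : Prop :=
  ρ ∈ Q.rel ∧ (BranchArrow Q ρ.1 ∨ BranchArrow Q ρ.2)

/-- A relation `ρ = (α, β)` is isolated if the antipath `(α, β)` is a maximal
antipath, i.e. `ρ ∈ 𝒩`. -/
def Isolated (Q : QuivRel) (st : SigmaTau Q) (ρ : ℕ × ℕ) : Prop :=
  ρ ∈ Q.rel ∧ InN Q st (.arrows [ρ.1, ρ.2])

/-- `Q'` is obtained from `Q` by completing the relations from `R₀`, the new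
arrow attached to `ρ ∈ R₀` being `γ ρ`. -/
structure IsCompletion (Q : QuivRel) (R0 : Finset (ℕ × ℕ)) (γ : ℕ × ℕ → ℕ)
    (Q' : QuivRel) : Prop where
  subset : R0 ⊆ Q.rel
  fresh : ∀ ρ ∈ R0, γ ρ ∉ Q.A
  inj : ∀ ρ ∈ R0, ∀ ρ' ∈ R0, γ ρ = γ ρ' → ρ = ρ'
  V_eq : Q'.V = Q.V
  A_eq : Q'.A = Q.A ∪ R0.image γ
  src_old : ∀ a ∈ Q.A, Q'.src a = Q.src a
  tgt_old : ∀ a ∈ Q.A, Q'.tgt a = Q.tgt a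
  src_new : ∀ ρ ∈ R0, Q'.src (γ ρ) = Q.tgt ρ.1
  tgt_new : ∀ ρ ∈ R0, Q'.tgt (γ ρ) = Q.src ρ.2
  rel_eq : Q'.rel = Q.rel ∪ R0.image (fun ρ => (γ ρ, ρ.1)) ∪
      R0.image (fun ρ => (ρ.2, γ ρ))

/-- A 3-cycle: three pairwise distinct arrows forming an oriented cycle. -/
def Is3Cycle (Q : QuivRel) (a0 a1 a2 : ℕ) : Prop :=
  a0 ∈ Q.A ∧ a1 ∈ Q.A ∧ a2 ∈ Q.A ∧ a0 ≠ a1 ∧ a1 ≠ a2 ∧ a0 ≠ a2 ∧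
  Q.src a0 = Q.tgt a1 ∧ Q.src a1 = Q.tgt a2 ∧ Q.src a2 = Q.tgt a0

/-- A triangle: a 3-cycle all of whose three compositions are relations. -/
def IsTriangleTriple (Q : QuivRel) (a0 a1 a2 : ℕ) : Prop :=
  Is3Cycle Q a0 a1 a2 ∧ (a0, a1) ∈ Q.rel ∧ (a1, a2) ∈ Q.rel ∧ (a2, a0) ∈ Q.rel

/-- The (unordered) set of arrows of a triangle. -/
def TriangleSet (Q : QuivRel) (O : Finset ℕ) : Prop :=
  ∃ a0 a1 a2, O = {a0, a1, a2} ∧ IsTriangleTriple Q a0 a1 a2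

/-- Branch triangle: removing any two of its arrows disconnects the quiver. -/
def BranchTriangle (Q : QuivRel) (O : Finset ℕ) : Prop :=
  TriangleSet Q O ∧ ∀ S ⊆ O, S.card = 2 → ¬ Connected (deleteArrows Q S)

/-- Free relation: a relation neither of whose arrows lies in `𝒞`. -/
def FreeRel (Q : QuivRel) (st : SigmaTau Q) (ρ : ℕ × ℕ) : Prop :=
  ρ ∈ Q.rel ∧ ¬ InC Q st ρ.1 ∧ ¬ InC Q st ρ.2

/-- The class `𝒜`: gentle quivers with `f_𝚫 = m·[0,3] + [p+m+2, p]`. -/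
def ClassA (Q : QuivRel) (st : SigmaTau Q) : Prop :=
  IsGentle Q ∧ ∃ m p : ℕ, ∀ x, fInv Q st x = m * charFn 0 3 x + charFn (p + m + 2) p x

/-- The class `Ã`: gentle quivers with
`f_𝚫 = (m₁+m₂)·[0,3] + [p+m₁, p] + [q+m₂, q]`, `p+m₁ > 0`, `q+m₂ > 0`. -/
def ClassAtilde (Q : QuivRel) (st : SigmaTau Q) : Prop :=
  IsGentle Q ∧ ∃ m1 m2 p q : ℕ, 0 < p + m1 ∧ 0 < q + m2 ∧
    ∀ x, fInv Q st x =
      (m1 + m2) * charFn 0 3 x + charFn (p + m1) p x + charFn (q + m2) q x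

/-- Isomorphism of quivers with relations. -/
def IsoQR (Q Q' : QuivRel) : Prop :=
  ∃ fV fA : ℕ → ℕ,
    Set.BijOn fV ↑Q.V ↑Q'.V ∧ Set.BijOn fA ↑Q.A ↑Q'.A ∧
    (∀ a ∈ Q.A, Q'.src (fA a) = fV (Q.src a) ∧ Q'.tgt (fA a) = fV (Q.tgt a)) ∧
    (∀ a ∈ Q.A, ∀ b ∈ Q.A, ((a, b) ∈ Q.rel ↔ (fA a, fA b) ∈ Q'.rel))

/-- The quiver has no loops. -/
def NoLoops (Q : QuivRel) : Prop := ∀ a ∈ Q.A, Q.src a ≠ Q.tgt a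

/-- The reflection at `x` is defined: every arrow starting at `x` admits a
(necessarily unique) companion arrow ending at `x` not bound by a relation. -/
def CanReflect (Q : QuivRel) (x : ℕ) : Prop :=
  x ∈ Q.V ∧ ∀ a ∈ Q.A, Q.src a = x → ∃ b ∈ Q.A, Q.tgt b = x ∧ (a, b) ∉ Q.rel

/-- `Q'` is the reflection of the gentle loop-free quiver `Q` at the vertex
`x`, following Brenner–Butler tilting. -/
def IsReflection (Q : QuivRel) (x : ℕ) (Q' : QuivRel) : Prop :=
  IsGentle Q ∧ NoLoops Q ∧ CanReflect Q x ∧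
  Q'.V = Q.V ∧ Q'.A = Q.A ∧
  (∀ a ∈ Q.A, Q.tgt a = x → Q'.src a = x ∧ Q'.tgt a = Q.src a) ∧
  (∀ a ∈ Q.A, Q.src a = x →
    ∀ b ∈ Q.A, Q.tgt b = x → (a, b) ∉ Q.rel → Q'.src a = Q.src b) ∧
  (∀ a ∈ Q.A, Q.tgt a ≠ x → Q.src a ≠ x → Q'.src a = Q.src a) ∧
  (∀ a ∈ Q.A, Q.tgt a ≠ x →
    ((∃ b ∈ Q.A, Q.tgt b = x ∧ Q.src b = Q.tgt a ∧ (b, a) ∈ Q.rel) → Q'.tgt a = x) ∧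
    ((¬ ∃ b ∈ Q.A, Q.tgt b = x ∧ Q.src b = Q.tgt a ∧ (b, a) ∈ Q.rel) →
      Q'.tgt a = Q.tgt a)) ∧
  (∀ a b : ℕ, (a, b) ∈ Q'.rel ↔
    (((a, b) ∈ Q.rel ∧ Q.tgt a ≠ x ∧ Q.src a ≠ x) ∨
     (a ∈ Q.A ∧ b ∈ Q.A ∧ Q.src a = x ∧ Q.tgt b = x ∧ (a, b) ∉ Q.rel) ∨
     (a ∈ Q.A ∧ b ∈ Q.A ∧ Q.tgt a = x ∧
       ∃ c ∈ Q.A, c ≠ a ∧ Q.tgt c = x ∧ Q.src c = Q.tgt b ∧ (c, b) ∈ Q.rel)))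

/-- The opposite quiver with relations. -/
def opQR (Q : QuivRel) : QuivRel where
  V := Q.V
  A := Q.A
  src := Q.tgt
  tgt := Q.src
  rel := Q.rel.image fun ρ => (ρ.2, ρ.1)

/-- Coreflection: the dual of reflection. -/
def IsCoreflection (Q : QuivRel) (x : ℕ) (Q' : QuivRel) : Prop :=
  IsReflection (opQR Q) x (opQR Q')

/-- One step of reflection equivalence: a reflection, a coreflection, or an
isomorphism of quivers with relations. -/
def RefStep (Q Q' : QuivRel) : Prop :=
  (∃ x, IsReflection Q x Q') ∨ (∃ x, IsCoreflection Q x Q') ∨ IsoQR Q Q'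

/-- Reflection equivalence: a finite sequence of reflections/coreflections,
up to isomorphism of quivers with relations. -/
def RefEquiv : QuivRel → QuivRel → Prop := Relation.ReflTransGen RefStep

/-- A cyclic orientation of a `1`-cycle quiver without branch arrows (i.e. a
cycle): enumerations of the vertices and arrows by `ZMod n` such that the
`i`-th arrow joins the `i`-th and `(i+1)`-st vertices. -/
structure CyclicOrientation (Q : QuivRel) (n : ℕ) where
  ev : ZMod n → ℕ
  ea : ZMod n → ℕ
  ev_mem : ∀ i, ev i ∈ Q.V
  ea_mem : ∀ i, ea i ∈ Q.A
  ev_inj : Function.Injective ev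
  ea_inj : Function.Injective ea
  ev_surj : ∀ v ∈ Q.V, ∃ i, ev i = v
  ea_surj : ∀ a ∈ Q.A, ∃ i, ea i = a
  compat : ∀ i : ZMod n,
    (Q.src (ea i) = ev i ∧ Q.tgt (ea i) = ev (i + 1)) ∨
    (Q.src (ea i) = ev (i + 1) ∧ Q.tgt (ea i) = ev i)

/-- Clockwise arrow with respect to a cyclic orientation. -/
def Clockwise (Q : QuivRel) {n : ℕ} (co : CyclicOrientation Q n) (a : ℕ) : Prop :=
  a ∈ Q.A ∧ ∃ i : ZMod n, co.ea i = a ∧ Q.src a = co.ev i ∧ Q.tgt a = co.ev (i + 1)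

/-- Anticlockwise arrow with respect to a cyclic orientation. -/
def Anticlockwise (Q : QuivRel) {n : ℕ} (co : CyclicOrientation Q n) (a : ℕ) : Prop :=
  a ∈ Q.A ∧ ∃ i : ZMod n, co.ea i = a ∧ Q.src a = co.ev (i + 1) ∧ Q.tgt a = co.ev i

end GentleQuiv

namespace GentleQuiv

section

/-- A half-edge: a vertex with a sign. -/
abbrev Slot := ℕ × Bool

/-- The other half-edge at the same vertex. -/
def flp (s : Slot) : Slot := (s.1, !s.2)

@[simp] theorem flp_flp (s : Slot) : flp (flp s) = s := by simp [flp]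
@[simp] theorem flp_fst (s : Slot) : (flp s).1 = s.1 := rfl
theorem flp_ne (s : Slot) : flp s ≠ s := by
  intro h; have := congrArg Prod.snd h; simp [flp] at this
theorem flp_inj {s t : Slot} (h : flp s = flp t) : s = t := by
  rw [← flp_flp s, h, flp_flp]
theorem flp_of {s t : Slot} (h : s.1 = t.1) (hn : s ≠ t) : s = flp t := by
  obtain ⟨a, b⟩ := s; obtain ⟨c, d⟩ := t
  simp only at h; subst h
  simp [flp] at *
  cases b <;> cases d <;> simp_all
theorem fst_eq {s t : Slot} (h : s.1 = t.1) : s = t ∨ s = flp t := by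
  by_cases e : s = t
  · exact Or.inl e
  · exact Or.inr (flp_of h e)

/-- Combinatorial model of a gentle quiver. -/
structure Mod where
  V : Finset ℕ
  A : Finset ℕ
  S : ℕ → Slot
  T : ℕ → Slot

/-- Quiver with relations of a model. -/
def toQ (M : Mod) : QuivRel where
  V := M.V
  A := M.A
  src := fun a => (M.S a).1
  tgt := fun a => (M.T a).1
  rel := (M.A ×ˢ M.A).filter fun p => M.S p.1 = M.T p.2

theorem mem_rel {M : Mod} {a b : ℕ} :
    (a, b) ∈ (toQ M).rel ↔ a ∈ M.A ∧ b ∈ M.A ∧ M.S a = M.T b := by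
  simp [toQ, and_assoc]

/-- basic conditions on a model -/
structure Good0 (M : Mod) : Prop where
  ne : M.V.Nonempty
  sv : ∀ a ∈ M.A, (M.S a).1 ∈ M.V
  tv : ∀ a ∈ M.A, (M.T a).1 ∈ M.V
  sinj : ∀ a ∈ M.A, ∀ b ∈ M.A, M.S a = M.S b → a = b
  tinj : ∀ a ∈ M.A, ∀ b ∈ M.A, M.T a = M.T b → a = b
  conn : ∀ P : ℕ → Prop, (∀ a ∈ M.A, P (M.S a).1 ↔ P (M.T a).1) →
    ∀ x ∈ M.V, ∀ y ∈ M.V, P x → P y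

/-- full conditions on a model -/
structure Good (M : Mod) : Prop extends Good0 M where
  noloop : ∀ a ∈ M.A, (M.S a).1 ≠ (M.T a).1
  rank : ∃ r : ℕ → ℕ, ∀ a ∈ M.A, ∀ b ∈ M.A, M.S a = flp (M.T b) → r b < r a

instance (M : Mod) : CoeOut (Good M) (Good0 M) := ⟨Good.toGood0⟩

/-- Opposite model. -/
def op (M : Mod) : Mod := ⟨M.V, M.A, M.T, M.S⟩

@[simp] theorem op_op (M : Mod) : op (op M) = M := rfl

theorem op_toQ (M : Mod) : opQR (toQ M) = toQ (op M) := by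
  unfold opQR toQ op
  congr 1
  ext ⟨a, b⟩
  simp only [Finset.mem_image, Finset.mem_filter, Finset.mem_product, Prod.mk.injEq, Prod.exists]
  constructor
  · rintro ⟨c, d, ⟨⟨h1, h2⟩, h3⟩, rfl, rfl⟩; exact ⟨⟨h2, h1⟩, h3.symm⟩
  · rintro ⟨⟨h1, h2⟩, h3⟩; exact ⟨b, a, ⟨⟨h2, h1⟩, h3.symm⟩, rfl, rfl⟩

theorem Good0.op {M : Mod} (h : Good0 M) : Good0 (op M) where
  ne := h.ne
  sv := h.tv
  tv := h.sv
  sinj := h.tinj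
  tinj := h.sinj
  conn := fun P hP => h.conn P fun a ha => (hP a ha).symm

theorem Good.op {M : Mod} (h : Good M) : Good (op M) where
  ne := h.ne
  sv := h.tv
  tv := h.sv
  sinj := h.tinj
  tinj := h.sinj
  noloop := fun a ha e => h.noloop a ha e.symm
  conn := fun P hP => h.conn P fun a ha => (hP a ha).symm
  rank := by
    obtain ⟨r, hr⟩ := h.rank
    refine ⟨fun a => M.A.sup r - r a, ?_⟩
    intro a ha b hb e
    have e' : M.S b = flp (M.T a) := by
      have : M.T a = flp (M.S b) := e
      rw [this, flp_flp]
    have h1 := hr b hb a ha e'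
    have h2 : r b ≤ M.A.sup r := Finset.le_sup hb
    show M.A.sup r - r b < M.A.sup r - r a
    omega

/-- connectivity of quivers via invariant predicates -/
theorem connected_of {Q : QuivRel}
    (h : ∀ P : ℕ → Prop, (∀ a ∈ Q.A, P (Q.src a) ↔ P (Q.tgt a)) →
    ∀ x ∈ Q.V, ∀ y ∈ Q.V, P x → P y) : Connected Q := by
  intro x hx y hy
  refine h (fun z => Relation.ReflTransGen (Adj Q) x z) ?_ x hx y hy Relation.ReflTransGen.refl
  intro a ha
  constructor
  · intro h; exact h.tail ⟨a, ha, Or.inl ⟨rfl, rfl⟩⟩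
  · intro h; exact h.tail ⟨a, ha, Or.inr ⟨rfl, rfl⟩⟩

theorem connected_elim {Q : QuivRel} (h : Connected Q)
    (P : ℕ → Prop) (hP : ∀ a ∈ Q.A, P (Q.src a) ↔ P (Q.tgt a)) :
    ∀ x ∈ Q.V, ∀ y ∈ Q.V, P x → P y := by
  intro x hx y hy px
  have h1 := h x hx y hy
  clear hy
  induction h1 with
  | refl => exact px
  | tail _ hs ih =>
    obtain ⟨a, ha, (⟨e1, e2⟩ | ⟨e1, e2⟩)⟩ := hs
    · rw [← e2, ← hP a ha, e1]; exact ih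
    · rw [← e1, hP a ha, e2]; exact ih

theorem Good.gentle {M : Mod} (h : Good M) : IsGentle (toQ M) := by
  refine ⟨h.ne, fun a ha => ⟨h.sv a ha, h.tv a ha⟩, connected_of h.conn, ?_, ?_, ?_, ?_, ?_, ?_, ?_, ?_⟩
  · rintro ⟨a, b⟩ hr
    obtain ⟨h1, h2, h3⟩ := mem_rel.1 hr
    exact ⟨h1, h2, congrArg Prod.fst h3⟩
  · intro x
    refine (Finset.card_le_card_of_injOn (t := Finset.univ) (fun a => (M.S a).2) (fun _ _ => Finset.mem_coe.2 (Finset.mem_univ _)) ?_).trans (by simp)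
    intro a ha b hb e
    rw [Finset.mem_coe, Finset.mem_filter] at ha hb
    exact h.sinj a ha.1 b hb.1 (Prod.ext (ha.2.trans hb.2.symm) e)
  · intro x
    refine (Finset.card_le_card_of_injOn (t := Finset.univ) (fun a => (M.T a).2) (fun _ _ => Finset.mem_coe.2 (Finset.mem_univ _)) ?_).trans (by simp)
    intro a ha b hb e
    rw [Finset.mem_coe, Finset.mem_filter] at ha hb
    exact h.tinj a ha.1 b hb.1 (Prod.ext (ha.2.trans hb.2.symm) e)
  · intro a ha
    rw [Finset.card_le_one]
    intro b hb c hc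
    simp only [Finset.mem_filter, mem_rel] at hb hc
    have h1 : M.S b = flp (M.T a) := flp_of hb.2.1 fun e => hb.2.2 ⟨hb.1, ha, e⟩
    have h2 : M.S c = flp (M.T a) := flp_of hc.2.1 fun e => hc.2.2 ⟨hc.1, ha, e⟩
    exact h.sinj b hb.1 c hc.1 (h1.trans h2.symm)
  · intro a ha
    rw [Finset.card_le_one]
    intro b hb c hc
    simp only [Finset.mem_filter, mem_rel] at hb hc
    have h1 : M.T b = flp (M.S a) := flp_of hb.2.1 fun e => hb.2.2 ⟨ha, hb.1, e.symm⟩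
    have h2 : M.T c = flp (M.S a) := flp_of hc.2.1 fun e => hc.2.2 ⟨ha, hc.1, e.symm⟩
    exact h.tinj b hb.1 c hc.1 (h1.trans h2.symm)
  · intro a ha
    rw [Finset.card_le_one]
    intro b hb c hc
    simp only [Finset.mem_filter, mem_rel] at hb hc
    exact h.sinj b hb.1 c hc.1 (hb.2.2.2.trans hc.2.2.2.symm)
  · intro a ha
    rw [Finset.card_le_one]
    intro b hb c hc
    simp only [Finset.mem_filter, mem_rel] at hb hc
    exact h.tinj b hb.1 c hc.1 (hb.2.2.2.symm.trans hc.2.2.2)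
  · obtain ⟨r, hr⟩ := h.rank
    refine ⟨M.A.sup r + 2, ?_⟩
    intro l hl hlen
    by_contra hc
    have key : ∀ (l : List ℕ) (a : ℕ), (∀ b ∈ a :: l, b ∈ M.A) →
        (a :: l).IsChain (fun a b => (M.S a).1 = (M.T b).1) →
        (¬ HasRelSubpath (toQ M) (a :: l)) → l.length ≤ r a := by
      intro l
      induction l with
      | nil => intros; simp
      | cons b l ih =>
        intro a h1 h2 h3
        rw [List.isChain_cons_cons] at h2
        have := ih b (fun c hc => h1 c (List.mem_cons_of_mem _ hc)) h2.2 (by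
          rintro ⟨c, d, hcd, hi⟩
          exact h3 ⟨c, d, hcd, hi.trans (List.suffix_cons _ _).isInfix⟩)
        have ha := h1 a (by simp)
        have hb := h1 b (by simp)
        have h4 : M.S a = flp (M.T b) := flp_of h2.1 fun e =>
          h3 ⟨a, b, mem_rel.2 ⟨ha, hb, e⟩, ⟨[], l, by simp⟩⟩
        have := hr a ha b hb h4
        simp only [List.length_cons]
        omega
    obtain ⟨h1, h2, h3⟩ := hl
    cases l with
    | nil => exact h1 rfl
    | cons a l =>
      have := key l a h2 h3 hc
      have h4 : r a ≤ M.A.sup r := Finset.le_sup (h2 a (by simp))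
      simp only [List.length_cons] at hlen
      omega

theorem Good.nl {M : Mod} (h : Good M) : NoLoops (toQ M) := h.noloop

/-- reflection is possible at `x` -/
def CanRef (M : Mod) (x : ℕ) : Prop :=
  x ∈ M.V ∧ ∀ a ∈ M.A, (M.S a).1 = x → ∃ b ∈ M.A, M.T b = flp (M.S a)

open Classical in
/-- reflection -/
noncomputable def rf (M : Mod) (x : ℕ) : Mod where
  V := M.V
  A := M.A
  S := fun a => if (M.T a).1 = x then flp (M.T a) else
    if h : (M.S a).1 = x ∧ ∃ b ∈ M.A, M.T b = flp (M.S a) then M.S h.2.choose else M.S a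
  T := fun a => if (M.T a).1 = x then M.S a else
    if h : ∃ b ∈ M.A, (M.T b).1 = x ∧ M.S b = M.T a then M.T h.choose else M.T a

theorem rf_kind {M : Mod} {x : ℕ} (h : Good M) (hx : CanRef M x) {a : ℕ} (ha : a ∈ M.A) :
    ((M.T a).1 = x ∧ (M.S a).1 ≠ x ∧ (rf M x).S a = flp (M.T a) ∧ (rf M x).T a = M.S a) ∨
    ((M.T a).1 ≠ x ∧
      (((M.S a).1 = x ∧ ∃ b ∈ M.A, M.T b = flp (M.S a) ∧ (M.T b).1 = x ∧ (M.S b).1 ≠ x ∧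
          (rf M x).S a = M.S b) ∨
        ((M.S a).1 ≠ x ∧ (rf M x).S a = M.S a)) ∧
      ((∃ b ∈ M.A, (M.T b).1 = x ∧ (M.S b).1 ≠ x ∧ M.S b = M.T a ∧ (rf M x).T a = M.T b) ∨
        ((∀ b ∈ M.A, (M.T b).1 = x → M.S b ≠ M.T a) ∧ (rf M x).T a = M.T a))) := by
  by_cases h1 : (M.T a).1 = x
  · left
    refine ⟨h1, fun e => h.noloop a ha (e.trans h1.symm), ?_, ?_⟩ <;> simp [rf, h1]
  · right
    refine ⟨h1, ?_, ?_⟩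
    · by_cases h2 : (M.S a).1 = x
      · left
        have h3 := hx.2 a ha h2
        refine ⟨h2, h3.choose, h3.choose_spec.1, h3.choose_spec.2, ?_, ?_, ?_⟩
        · rw [h3.choose_spec.2]; exact h2
        · have := h.noloop _ h3.choose_spec.1
          rw [h3.choose_spec.2, flp_fst, h2] at this
          exact this
        · have h4 : (M.S a).1 = x ∧ ∃ b ∈ M.A, M.T b = flp (M.S a) := ⟨h2, h3⟩
          simp only [rf, if_neg h1, dif_pos h4]
      · right
        refine ⟨h2, ?_⟩
        simp [rf, h1, h2]
    · by_cases h2 : ∃ b ∈ M.A, (M.T b).1 = x ∧ M.S b = M.T a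
      · left
        refine ⟨h2.choose, h2.choose_spec.1, h2.choose_spec.2.1, ?_, h2.choose_spec.2.2, ?_⟩
        · rw [h2.choose_spec.2.2]; exact h1
        · simp only [rf, if_neg h1, dif_pos h2]
      · right
        refine ⟨fun b hb hb1 e => h2 ⟨b, hb, hb1, e⟩, ?_⟩
        simp only [rf, if_neg h1, dif_neg h2]

@[simp] theorem rf_A (M : Mod) (x : ℕ) : (rf M x).A = M.A := rfl
@[simp] theorem rf_V (M : Mod) (x : ℕ) : (rf M x).V = M.V := rfl

theorem rf_good {M : Mod} {x : ℕ} (h : Good M) (hx : CanRef M x) : Good (rf M x) where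
  ne := h.ne
  sv := by
    intro a ha
    rcases rf_kind h hx ha with ⟨h1, h2, h3, h4⟩ | ⟨h1, (⟨h2, b, hb, h3, h4, h5, h6⟩ | ⟨h2, h3⟩), _⟩
    · rw [h3]; exact h.tv a ha
    · rw [h6]; exact h.sv b hb
    · rw [h3]; exact h.sv a ha
  tv := by
    intro a ha
    rcases rf_kind h hx ha with ⟨h1, h2, h3, h4⟩ | ⟨h1, _, (⟨b, hb, h3, h4, h5, h6⟩ | ⟨h2, h3⟩)⟩
    · rw [h4]; exact h.sv a ha
    · rw [h6]; exact h.tv b hb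
    · rw [h3]; exact h.tv a ha
  sinj := by
    intro a ha c hc e
    rcases rf_kind h hx ha with ⟨h1, h2, h3, h4⟩ | ⟨h1, (⟨h2, b, hb, h3, h4, h5, h6⟩ | ⟨h2, h3⟩), _⟩ <;>
    rcases rf_kind h hx hc with ⟨k1, k2, k3, k4⟩ | ⟨k1, (⟨k2, d, hd, k3, k4, k5, k6⟩ | ⟨k2, k3⟩), _⟩
    · rw [h3, k3] at e; exact h.tinj a ha c hc (flp_inj e)
    · rw [h3, k6] at e; exact absurd (e ▸ h1 : (M.S d).1 = x) k5
    · rw [h3, k3] at e; exact absurd (e ▸ h1 : (M.S c).1 = x) k2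
    · rw [h6, k3] at e; exact absurd (by rw [e]; exact k1) h5
    · rw [h6, k6] at e
      have := h.sinj _ hb _ hd e
      subst this
      exact h.sinj a ha c hc (flp_inj (h3.symm.trans k3))
    · rw [h6, k3] at e
      have := h.sinj _ hb _ hc e
      subst this
      exact absurd h4 k1
    · rw [h3, k3] at e; exact absurd (by rw [e]; exact k1) h2
    · rw [h3, k6] at e
      have := h.sinj _ ha _ hd e
      subst this
      exact absurd k4 h1
    · rw [h3, k3] at e; exact h.sinj a ha c hc e
  tinj := by
    intro a ha c hc e
    rcases rf_kind h hx ha with ⟨h1, h2, h3, h4⟩ | ⟨h1, _, (⟨b, hb, h3, h4, h5, h6⟩ | ⟨h2, h3⟩)⟩ <;>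
    rcases rf_kind h hx hc with ⟨k1, k2, k3, k4⟩ | ⟨k1, _, (⟨d, hd, k3, k4, k5, k6⟩ | ⟨k2, k3⟩)⟩
    · rw [h4, k4] at e; exact h.sinj a ha c hc e
    · rw [h4, k6] at e; exact absurd (by rw [e]; exact k3) h2
    · rw [h4, k3] at e; exact absurd e (k2 a ha h1)
    · rw [h6, k4] at e; exact absurd (by rw [← e]; exact h3) k2
    · rw [h6, k6] at e
      have := h.tinj _ hb _ hd e
      subst this
      exact h.tinj a ha c hc (h5.symm.trans k5)
    · rw [h6, k3] at e; exact absurd (by rw [← e]; exact h3) k1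
    · rw [h3, k4] at e; exact absurd e.symm (h2 c hc k1)
    · rw [h3, k6] at e; exact absurd (by rw [e]; exact k3) h1
    · rw [h3, k3] at e; exact h.tinj a ha c hc e
  noloop := by
    intro a ha
    obtain ⟨r, hr⟩ := h.rank
    rcases rf_kind h hx ha with ⟨h1, h2, h3, h4⟩ |
      ⟨h1, (⟨h2, b, hb, h3, h4, h5, h6⟩ | ⟨h2, h3⟩), (⟨d, hd, k3, k4, k5, k6⟩ | ⟨k2, k3⟩)⟩
    · rw [h3, h4, flp_fst]; exact fun e => h.noloop a ha e.symm
    · rw [h6, k6, k3]; exact h5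
    · rw [h6, k3]
      intro e
      rcases fst_eq e with e | e
      · exact k2 b hb h4 e
      · have a1 := hr b hb a ha e
        have a2 := hr a ha b hb (by rw [h3, flp_flp])
        omega
    · rw [h3, k6, k3]; exact h2
    · rw [h3, k3]; exact h.noloop a ha
  conn := by
    intro P hP
    apply h.conn P
    have hin : ∀ b ∈ M.A, (M.T b).1 = x → (P (M.S b).1 ↔ P x) := by
      intro b hb h1
      rcases rf_kind h hx hb with ⟨h1, h2, h3, h4⟩ | ⟨h1', _⟩
      · have := hP b hb
        rw [h3, h4, flp_fst, h1] at this
        exact this.symm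
      · exact absurd h1 h1'
    intro a ha
    have := hP a ha
    rcases rf_kind h hx ha with ⟨h1, h2, h3, h4⟩ |
      ⟨h1, (⟨h2, b, hb, h3, h4, h5, h6⟩ | ⟨h2, h3⟩), (⟨d, hd, k3, k4, k5, k6⟩ | ⟨k2, k3⟩)⟩
    · rw [h1]; exact hin a ha h1
    · rw [h2, ← k5]; exact (hin d hd k3).symm
    · rw [h6, k3] at this
      rw [h2, ← this]; exact (hin b hb h4).symm
    · rw [h3, k6, k3] at this
      rw [this, ← k5]; exact (hin d hd k3).symm
    · rw [h3, k3] at this; exact this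
  rank := by
    classical
    obtain ⟨r, hr⟩ := h.rank
    refine ⟨fun c => if (M.T c).1 = x then
      (if hg : ∃ g ∈ M.A, M.T g = M.S c then 2 * r hg.choose + 2 else 0) else 2 * r c + 1, ?_⟩
    intro a ha c hc e
    have hin1 : ∀ g ∈ M.A, M.T g = M.S a → (if hg : ∃ g ∈ M.A, M.T g = M.S a then 2 * r hg.choose + 2 else 0) = 2 * r g + 2 := by
      intro g hg e
      have h1 : ∃ g ∈ M.A, M.T g = M.S a := ⟨g, hg, e⟩
      rw [dif_pos h1]
      have := h.tinj _ h1.choose_spec.1 _ hg (h1.choose_spec.2.trans e.symm)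
      rw [this]
    have hin2 : ∀ k, 0 < k → (∀ g ∈ M.A, M.T g = M.S c → 2 * r g + 2 < k) → (if hg : ∃ g ∈ M.A, M.T g = M.S c then 2 * r hg.choose + 2 else 0) < k := by
      intro k hk hg
      split_ifs with h1
      · exact hg _ h1.choose_spec.1 h1.choose_spec.2
      · exact hk
    rcases rf_kind h hx ha with ⟨h1, h2, h3, h4⟩ | ⟨h1, (⟨h2, b, hb, h3, h4, h5, h6⟩ | ⟨h2, h3⟩), _⟩ <;>
    rcases rf_kind h hx hc with ⟨k1, k2, k3, k4⟩ | ⟨k1, _, (⟨d, hd, k3, k4, k5, k6⟩ | ⟨k2, k3⟩)⟩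
    · rw [h3, k4] at e; exact absurd (by rw [← flp_inj e]; exact h1) k2
    · rw [h3, k6] at e
      have := h.tinj _ ha _ hd (flp_inj e)
      subst this
      simp only [if_pos h1, if_neg k1]
      rw [hin1 c hc k5.symm]
      omega
    · rw [h3, k3] at e; exact absurd (by rw [← flp_inj e]; exact h1) k1
    · rw [h6, k4] at e
      simp only [if_pos k1, if_neg h1]
      apply hin2 _ (by omega)
      intro g hg e2
      have a1 := hr b hb g hg (by rw [e, e2])
      have a2 := hr a ha b hb (by rw [h3, flp_flp])
      omega
    · rw [h6, k6] at e; exact absurd (by rw [e]; exact k3) h5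
    · rw [h6, k3] at e
      simp only [if_neg k1, if_neg h1]
      have a1 := hr b hb c hc e
      have a2 := hr a ha b hb (by rw [h3, flp_flp])
      omega
    · rw [h3, k4] at e
      simp only [if_pos k1, if_neg h1]
      apply hin2 _ (by omega)
      intro g hg e2
      have a1 := hr a ha g hg (by rw [e, e2])
      omega
    · rw [h3, k6] at e; exact absurd (by rw [e]; exact k3) h2
    · rw [h3, k3] at e
      simp only [if_neg k1, if_neg h1]
      have a1 := hr a ha c hc e
      omega

theorem rf_isReflection {M : Mod} {x : ℕ} (h : Good M) (hx : CanRef M x) :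
    IsReflection (toQ M) x (toQ (rf M x)) := by
  refine ⟨h.gentle, h.nl, ⟨hx.1, ?_⟩, rfl, rfl, ?_, ?_, ?_, ?_, ?_⟩
  · intro a ha hs
    obtain ⟨b, hb, e⟩ := hx.2 a ha hs
    refine ⟨b, hb, ?_, ?_⟩
    · show (M.T b).1 = x
      rw [e]; exact hs
    · rw [mem_rel]
      rintro ⟨_, _, e2⟩
      exact flp_ne _ (e.symm.trans e2.symm)
  · intro a ha ht
    rcases rf_kind h hx ha with ⟨h1, h2, h3, h4⟩ | ⟨h1, _⟩
    · exact ⟨by show ((rf M x).S a).1 = x; rw [h3]; exact h1, by show ((rf M x).T a).1 = (M.S a).1; rw [h4]⟩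
    · exact absurd ht h1
  · intro a ha hs b hb ht hr
    show ((rf M x).S a).1 = (M.S b).1
    rw [mem_rel] at hr
    have e : M.T b = flp (M.S a) := flp_of (ht.trans hs.symm) fun e => hr ⟨ha, hb, e.symm⟩
    rcases rf_kind h hx ha with ⟨h1, h2, h3, h4⟩ | ⟨h1, (⟨h2, d, hd, h3, h4, h5, h6⟩ | ⟨h2, h3⟩), _⟩
    · exact absurd hs h2
    · rw [h6, h.tinj _ hd _ hb (h3.trans e.symm)]
    · exact absurd hs h2
  · intro a ha ht hs
    show ((rf M x).S a).1 = (M.S a).1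
    rcases rf_kind h hx ha with ⟨h1, h2, h3, h4⟩ | ⟨h1, (⟨h2, d, hd, h3, h4, h5, h6⟩ | ⟨h2, h3⟩), _⟩
    · exact absurd h1 ht
    · exact absurd h2 hs
    · rw [h3]
  · intro a ha ht
    simp only [mem_rel]
    show (_ → ((rf M x).T a).1 = x) ∧ (_ → ((rf M x).T a).1 = (M.T a).1)
    rcases rf_kind h hx ha with ⟨h1, h2, h3, h4⟩ | ⟨h1, _, (⟨b, hb, h3, h4, h5, h6⟩ | ⟨h2, h3⟩)⟩
    · exact absurd h1 ht
    · rw [h6, h3]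
      exact ⟨fun _ => rfl, fun hh => absurd ⟨b, hb, h3, congrArg Prod.fst h5, hb, ha, h5⟩ hh⟩
    · rw [h3]
      refine ⟨?_, fun _ => rfl⟩
      rintro ⟨b, hb, e1, e2, _, _, e3⟩
      exact absurd e3 (h2 b hb e1)
  · intro a b
    simp only [mem_rel]
    show a ∈ M.A ∧ b ∈ M.A ∧ (rf M x).S a = (rf M x).T b ↔
      (((a ∈ M.A ∧ b ∈ M.A ∧ M.S a = M.T b) ∧ (M.T a).1 ≠ x ∧ (M.S a).1 ≠ x) ∨
        (a ∈ M.A ∧ b ∈ M.A ∧ (M.S a).1 = x ∧ (M.T b).1 = x ∧ ¬ (a ∈ M.A ∧ b ∈ M.A ∧ M.S a = M.T b)) ∨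
        (a ∈ M.A ∧ b ∈ M.A ∧ (M.T a).1 = x ∧ ∃ c ∈ M.A, c ≠ a ∧ (M.T c).1 = x ∧
          (M.S c).1 = (M.T b).1 ∧ c ∈ M.A ∧ b ∈ M.A ∧ M.S c = M.T b))
    constructor
    · rintro ⟨ha, hb, e⟩
      rcases rf_kind h hx ha with ⟨h1, h2, h3, h4⟩ | ⟨h1, (⟨h2, c, hc, h3, h4, h5, h6⟩ | ⟨h2, h3⟩), _⟩ <;>
      rcases rf_kind h hx hb with ⟨k1, k2, k3, k4⟩ | ⟨k1, _, (⟨d, hd, k3, k4, k5, k6⟩ | ⟨k2, k3⟩)⟩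
      · rw [h3, k4] at e; exact absurd (by rw [← e]; exact h1) k2
      · rw [h3, k6] at e
        refine Or.inr (Or.inr ⟨ha, hb, h1, d, hd, ?_, k3, congrArg Prod.fst k5, hd, hb, k5⟩)
        rintro rfl
        exact flp_ne _ e
      · rw [h3, k3] at e; exact absurd (by rw [← e]; exact h1) k1
      · rw [h6, k4] at e
        have := h.sinj _ hc _ hb e
        subst this
        refine Or.inr (Or.inl ⟨ha, hb, h2, k1, ?_⟩)
        rintro ⟨_, _, e2⟩
        exact flp_ne _ (h3.symm.trans e2.symm)
      · rw [h6, k6] at e; exact absurd (by rw [e]; exact k3) h5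
      · rw [h6, k3] at e; exact absurd e (k2 c hc h4)
      · rw [h3, k4] at e
        have := h.sinj _ ha _ hb e
        subst this
        exact absurd k1 h1
      · rw [h3, k6] at e; exact absurd (by rw [e]; exact k3) h2
      · rw [h3, k3] at e; exact Or.inl ⟨⟨ha, hb, e⟩, h1, h2⟩
    · rintro (⟨⟨ha, hb, e⟩, e1, e2⟩ | ⟨ha, hb, e1, e2, e3⟩ | ⟨ha, hb, e1, c, hc, e2, e3, _, _, _, e4⟩)
      · refine ⟨ha, hb, ?_⟩
        rcases rf_kind h hx ha with ⟨h1, h2, h3, h4⟩ | ⟨h1, (⟨h2, c, hc, h3, h4, h5, h6⟩ | ⟨h2, h3⟩), _⟩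
        · exact absurd h1 e1
        · exact absurd h2 e2
        rcases rf_kind h hx hb with ⟨k1, k2, k3, k4⟩ | ⟨k1, _, (⟨d, hd, k3, k4, k5, k6⟩ | ⟨k2, k3⟩)⟩
        · exact absurd (by rw [e]; exact k1) e2
        · have := h.sinj _ ha _ hd (e.trans k5.symm)
          subst this
          exact absurd k3 h1
        · rw [h3, k3, e]
      · refine ⟨ha, hb, ?_⟩
        have e4 : M.T b = flp (M.S a) := flp_of (e2.trans e1.symm) fun e => e3 ⟨ha, hb, e.symm⟩
        rcases rf_kind h hx ha with ⟨h1, h2, h3, h4⟩ | ⟨h1, (⟨h2, c, hc, h3, h4, h5, h6⟩ | ⟨h2, h3⟩), _⟩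
        · exact absurd e1 h2
        · have := h.tinj _ hc _ hb (h3.trans e4.symm)
          subst this
          rcases rf_kind h hx hb with ⟨k1, k2, k3, k4⟩ | ⟨k1, _⟩
          · rw [h6, k4]
          · exact absurd e2 k1
        · exact absurd e1 h2
      · refine ⟨ha, hb, ?_⟩
        have e5 : M.T c = flp (M.T a) := flp_of (e3.trans e1.symm) fun e => e2 (h.tinj _ hc _ ha e)
        rcases rf_kind h hx ha with ⟨h1, h2, h3, h4⟩ | ⟨h1, _⟩
        · rcases rf_kind h hx hb with ⟨k1, k2, k3, k4⟩ | ⟨k1, _, (⟨d, hd, k3, k4, k5, k6⟩ | ⟨k2, k3⟩)⟩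
          · exfalso
            apply h.noloop c hc
            rw [e4, e3, k1]
          · have := h.sinj _ hd _ hc (k5.trans e4.symm)
            subst this
            rw [h3, k6, e5]
          · exact absurd e4 (k2 c hc e3)
        · exact absurd e1 h1

/-- One step at the level of models. -/
def MStep (M M' : Mod) : Prop :=
  (∃ x, CanRef M x ∧ M' = rf M x) ∨ (∃ x, CanRef (op M) x ∧ op M' = rf (op M) x)

def Reach : Mod → Mod → Prop := Relation.ReflTransGen MStep

theorem MStep.good {M M' : Mod} (h : Good M) (s : MStep M M') : Good M' := by
  rcases s with ⟨x, hx, rfl⟩ | ⟨x, hx, e⟩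
  · exact rf_good h hx
  · have := rf_good h.op hx
    rw [← e] at this
    exact this.op

theorem MStep.refStep {M M' : Mod} (h : Good M) (s : MStep M M') : RefStep (toQ M) (toQ M') := by
  rcases s with ⟨x, hx, rfl⟩ | ⟨x, hx, e⟩
  · exact Or.inl ⟨x, rf_isReflection h hx⟩
  · refine Or.inr (Or.inl ⟨x, ?_⟩)
    unfold IsCoreflection
    rw [op_toQ, op_toQ, e]
    exact rf_isReflection h.op hx

theorem MStep.op {M M' : Mod} (s : MStep M M') : MStep (op M) (op M') := by
  rcases s with ⟨x, hx, rfl⟩ | ⟨x, hx, e⟩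
  · exact Or.inr ⟨x, hx, rfl⟩
  · exact Or.inl ⟨x, hx, e⟩

theorem Reach.op {M M' : Mod} (s : Reach M M') : Reach (op M) (op M') := by
  induction s with
  | refl => exact .refl
  | tail _ h ih => exact ih.tail h.op

theorem Reach.spec {M M' : Mod} (h : Good M) (s : Reach M M') :
    Good M' ∧ RefEquiv (toQ M) (toQ M') ∧ M'.V = M.V := by
  induction s with
  | refl => exact ⟨h, .refl, rfl⟩
  | tail _ h1 ih =>
    refine ⟨h1.good ih.1, ih.2.1.tail (h1.refStep ih.1), ?_⟩
    rw [← ih.2.2]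
    rcases h1 with ⟨x, hx, rfl⟩ | ⟨x, hx, e⟩
    · rfl
    · have := congrArg Mod.V e
      exact this

end

section

/-- antipath adjacency of slots -/
def Next (M : Mod) (s t : Slot) : Prop := ∃ a ∈ M.A, M.S a = s ∧ M.T a = t

/-- same node -/
def Sm (M : Mod) (s t : Slot) : Prop := Relation.EqvGen (Next M) s t

theorem Sm.refl (M : Mod) (s : Slot) : Sm M s s := Relation.EqvGen.refl _
theorem Sm.symm {M : Mod} {s t : Slot} (h : Sm M s t) : Sm M t s := Relation.EqvGen.symm _ _ h
theorem Sm.trans {M : Mod} {s t u : Slot} (h : Sm M s t) (h2 : Sm M t u) : Sm M s u :=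
  Relation.EqvGen.trans _ _ _ h h2
theorem Next.sm {M : Mod} {s t : Slot} (h : Next M s t) : Sm M s t := .rel _ _ h

theorem Next.runiq {M : Mod} (g : Good0 M) {s t u : Slot} (h : Next M s t) (h2 : Next M s u) :
    t = u := by
  obtain ⟨a, ha, e1, e2⟩ := h
  obtain ⟨b, hb, f1, f2⟩ := h2
  have := g.sinj a ha b hb (e1.trans f1.symm)
  subst this
  exact e2.symm.trans f2

theorem Next.luniq {M : Mod} (g : Good0 M) {s t u : Slot} (h : Next M s u) (h2 : Next M t u) :
    s = t := by
  obtain ⟨a, ha, e1, e2⟩ := h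
  obtain ⟨b, hb, f1, f2⟩ := h2
  have := g.tinj a ha b hb (e2.trans f2.symm)
  subst this
  exact e1.symm.trans f1

theorem Next.fst_ne {M : Mod} (g : Good M) {s t : Slot} (h : Next M s t) : s.1 ≠ t.1 := by
  obtain ⟨a, ha, rfl, rfl⟩ := h
  exact g.noloop a ha

theorem Next.memL {M : Mod} (g : Good0 M) {s t : Slot} (h : Next M s t) : s.1 ∈ M.V := by
  obtain ⟨a, ha, rfl, rfl⟩ := h
  exact g.sv a ha

theorem Next.memR {M : Mod} (g : Good0 M) {s t : Slot} (h : Next M s t) : t.1 ∈ M.V := by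
  obtain ⟨a, ha, rfl, rfl⟩ := h
  exact g.tv a ha

theorem next_op {M : Mod} {s t : Slot} : Next (op M) s t ↔ Next M t s := by
  constructor <;> rintro ⟨a, ha, e1, e2⟩ <;> exact ⟨a, ha, e2, e1⟩

theorem Sm.induct {M : Mod} (P : Slot → Prop) (hP : ∀ s t, Next M s t → (P s ↔ P t))
    {s t : Slot} (h : Sm M s t) : P s ↔ P t := by
  induction h with
  | rel _ _ h => exact hP _ _ h
  | refl => exact Iff.rfl
  | symm _ _ _ ih => exact ih.symm
  | trans _ _ _ _ _ i1 i2 => exact i1.trans i2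

theorem sm_op {M : Mod} {s t : Slot} : Sm (op M) s t ↔ Sm M s t := by
  constructor
  · intro h
    refine (Sm.induct (fun u => Sm M s u) ?_ h).1 (Sm.refl _ _)
    intro u v huv
    have := (next_op.1 huv).sm
    exact ⟨fun h => h.trans this.symm, fun h => h.trans this⟩
  · intro h
    refine (Sm.induct (fun u => Sm (op M) s u) ?_ h).1 (Sm.refl _ _)
    intro u v huv
    have := (next_op.2 huv).sm
    exact ⟨fun h => h.trans this.symm, fun h => h.trans this⟩

theorem Sm.mem {M : Mod} (g : Good0 M) {s t : Slot} (h : Sm M s t) : s.1 ∈ M.V ↔ t.1 ∈ M.V :=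
  Sm.induct (fun u => u.1 ∈ M.V) (fun _ _ h => ⟨fun _ => h.memR g, fun _ => h.memL g⟩) h

theorem Sm.memV {M : Mod} (g : Good0 M) {s t : Slot} (h : Sm M s t) (hn : t ≠ s) : t.1 ∈ M.V := by
  by_contra hc
  apply hn
  have : (t = s ↔ s = s) := by
    refine Sm.induct (fun u => u = s) ?_ h.symm
    intro u v huv
    constructor
    · intro e
      subst e
      exact absurd ((h.mem g).1 (huv.memL g)) hc
    · intro e
      subst e
      exact absurd ((h.mem g).1 (huv.memR g)) hc
  exact this.2 rfl

abbrev Rch (M : Mod) := Relation.ReflTransGen (Next M)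

theorem Rch.sm {M : Mod} {s t : Slot} (h : Rch M s t) : Sm M s t := by
  induction h with
  | refl => exact Sm.refl _ _
  | tail _ h ih => exact ih.trans h.sm

theorem rch_op {M : Mod} {s t : Slot} : Rch (op M) s t ↔ Rch M t s := by
  have : Next (op M) = Function.swap (Next M) := by
    ext s t; exact next_op
  rw [Rch, this, Relation.reflTransGen_swap]

theorem Rch.total_right {M : Mod} (g : Good0 M) {s t u : Slot} (h : Rch M s t) (h2 : Rch M s u) :
    Rch M t u ∨ Rch M u t :=
  Relation.ReflTransGen.total_of_right_unique (fun _ _ _ h1 h2 => h1.runiq g h2) h h2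

theorem Rch.total_left {M : Mod} (g : Good0 M) {s t u : Slot} (h : Rch M t s) (h2 : Rch M u s) :
    Rch M t u ∨ Rch M u t := by
  have := Rch.total_right g.op (rch_op.2 h) (rch_op.2 h2)
  rw [rch_op, rch_op] at this
  exact this.symm

theorem Sm.rch {M : Mod} (g : Good0 M) {s t : Slot} (h : Sm M s t) : Rch M s t ∨ Rch M t s := by
  refine (Sm.induct (fun u => Rch M s u ∨ Rch M u s) ?_ h).1 (Or.inl .refl)
  intro u v huv
  constructor
  · rintro (h | h)
    · exact Or.inl (h.tail huv)
    · exact (Rch.total_right g h (.single huv))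
  · rintro (h | h)
    · exact Rch.total_left g h (.single huv)
    · exact Or.inr (h.head huv)

/-- last slot of a chain, or the chain is cyclic -/
theorem exists_last {M : Mod} (g : Good0 M) (h : Slot) :
    (∃ l, Rch M h l ∧ ∀ t, ¬ Next M l t) ∨ (∃ u, Next M u h ∧ Rch M h u) := by
  by_cases hl : ∃ l, Rch M h l ∧ ∀ t, ¬ Next M l t
  · exact Or.inl hl
  · right
    push Not at hl
    choose f hf using hl
    let X := {s : Slot // Rch M h s}
    have hfin : Finite X := by
      have : ({s : Slot | Rch M h s}).Finite := by
        apply Set.Finite.subset ((Finset.finite_toSet (M.V ×ˢ Finset.univ)))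
        intro s hs
        have := (hf s hs).memL g
        simp [this]
      exact this.to_subtype
    let F : X → X := fun s => ⟨f s.1 s.2, s.2.tail (hf s.1 s.2)⟩
    have hinj : Function.Injective F := by
      intro s t e
      have e' : f s.1 s.2 = f t.1 t.2 := congrArg Subtype.val e
      have h1 := hf s.1 s.2
      rw [e'] at h1
      exact Subtype.ext (h1.luniq g (hf t.1 t.2))
    obtain ⟨u, hu⟩ := Finite.injective_iff_surjective.1 hinj ⟨h, .refl⟩
    have e' : f u.1 u.2 = h := congrArg Subtype.val hu
    have := hf u.1 u.2
    rw [e'] at this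
    exact ⟨u.1, this, u.2⟩

/-- node as a set -/
def cls (M : Mod) (s : Slot) : Set Slot := {t | Sm M s t}

theorem cls_eq {M : Mod} {s t : Slot} : cls M s = cls M t ↔ Sm M s t := by
  constructor
  · intro h
    have : t ∈ cls M t := Sm.refl _ _
    rw [← h] at this
    exact this
  · intro h
    ext u
    exact ⟨fun h1 => h.symm.trans h1, fun h1 => h.trans h1⟩

abbrev slots (M : Mod) : Finset Slot := M.V ×ˢ Finset.univ

theorem mem_slots {M : Mod} {s : Slot} : s ∈ slots M ↔ s.1 ∈ M.V := by simp

open Classical in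
/-- set of nodes -/
noncomputable def nodes (M : Mod) : Finset (Set Slot) := (slots M).image (cls M)

theorem nodes_op (M : Mod) : nodes (op M) = nodes M := by
  have : cls (op M) = cls M := by
    ext s t
    exact sm_op
  unfold nodes
  rw [this]
  rfl

theorem card_image_le_of {X : Finset Slot} [DecidableEq (Set Slot)] (f g : Slot → Set Slot) (φ : Slot → Slot)
    (h1 : ∀ s ∈ X, ∀ t ∈ X, f s = f t → g (φ s) = g (φ t))
    (h2 : ∀ t ∈ X, ∃ s ∈ X, g (φ s) = g t) : (X.image g).card ≤ (X.image f).card := by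
  classical
  refine Finset.card_le_card_of_surjOn
    (fun y => if h : ∃ s ∈ X, f s = y then g (φ h.choose) else ∅) ?_
  intro z hz
  rw [Finset.mem_coe, Finset.mem_image] at hz
  obtain ⟨t, ht, rfl⟩ := hz
  obtain ⟨s, hs, e⟩ := h2 t ht
  refine ⟨f s, by rw [Finset.mem_coe]; exact Finset.mem_image_of_mem _ hs, ?_⟩
  have h3 : ∃ s' ∈ X, f s' = f s := ⟨s, hs, rfl⟩
  simp only [dif_pos h3]
  rw [← e]
  exact h1 _ h3.choose_spec.1 _ hs h3.choose_spec.2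

/-! Reflection and nodes -/

/-- predecessor of a slot at x -/
def Pre (M : Mod) (x : ℕ) (s : Slot) : Prop := ∃ t, Next M s t ∧ t.1 = x

open Classical in
noncomputable def ph (M : Mod) (x : ℕ) (s : Slot) : Slot :=
  if h : Pre M x s then h.choose else s

open Classical in
noncomputable def ph2 (M : Mod) (x : ℕ) (s : Slot) : Slot :=
  if h : Pre M x s then flp h.choose else s

theorem ph_pre {M : Mod} (g : Good M) {x : ℕ} {s t : Slot} (h : Next M s t) (hx : t.1 = x) :
    ph M x s = t := by
  have : Pre M x s := ⟨t, h, hx⟩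
  simp only [ph, dif_pos this]
  exact this.choose_spec.1.runiq g h

theorem ph2_pre {M : Mod} (g : Good M) {x : ℕ} {s t : Slot} (h : Next M s t) (hx : t.1 = x) :
    ph2 M x s = flp t := by
  have : Pre M x s := ⟨t, h, hx⟩
  simp only [ph2, dif_pos this]
  rw [this.choose_spec.1.runiq g h]

theorem ph_not {M : Mod} {x : ℕ} {s : Slot} (h : ¬ Pre M x s) : ph M x s = s := by
  simp only [ph, dif_neg h]

theorem ph2_not {M : Mod} {x : ℕ} {s : Slot} (h : ¬ Pre M x s) : ph2 M x s = s := by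
  simp only [ph2, dif_neg h]

theorem not_pre_at {M : Mod} (g : Good M) {x : ℕ} {s : Slot} (h : s.1 = x) : ¬ Pre M x s := by
  rintro ⟨t, h1, h2⟩
  exact h1.fst_ne g (h.trans h2.symm)

section
variable {M : Mod} {x : ℕ}

theorem rf_N1 (g : Good M) (hx : CanRef M x) {y q : Slot} (h : Next M y q) (hq : q.1 = x) :
    Next (rf M x) (flp q) y := by
  obtain ⟨a, ha, rfl, rfl⟩ := h
  rcases rf_kind g hx ha with ⟨h1, h2, h3, h4⟩ | ⟨h1, _⟩
  · exact ⟨a, ha, h3, h4⟩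
  · exact absurd hq h1

theorem rf_N2 (g : Good M) (hx : CanRef M x) {u y q : Slot} (h0 : Next M u y) (h : Next M y q)
    (hq : q.1 = x) (hu : u.1 ≠ x) : Next (rf M x) u q := by
  obtain ⟨b, hb, e1, e2⟩ := h
  obtain ⟨a, ha, f1, f2⟩ := h0
  rcases rf_kind g hx ha with ⟨h1, h2, h3, h4⟩ | ⟨h1, (⟨h2, c, hc, h3, h4, h5, h6⟩ | ⟨h2, h3⟩), h7⟩
  · rw [f2] at h1
    refine absurd ?_ (g.noloop b hb)
    rw [e1, h1, e2, hq]
  · rw [f1] at h2; exact absurd h2 hu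
  · rcases h7 with ⟨d, hd, k3, k4, k5, k6⟩ | ⟨k2, k3⟩
    · refine ⟨a, ha, h3.trans f1, ?_⟩
      rw [k6, ← e2, g.sinj _ hd _ hb (k5.trans (f2.trans e1.symm))]
    · exact absurd (e1.trans f2.symm) (k2 b hb (by rw [e2, hq]))

theorem rf_N4 (g : Good M) (hx : CanRef M x) {s t : Slot} (h : Next M s t)
    (hs : s.1 ≠ x) (ht : t.1 ≠ x) (hp : ¬ Pre M x t) : Next (rf M x) s t := by
  obtain ⟨a, ha, f1, f2⟩ := h
  rcases rf_kind g hx ha with ⟨h1, h2, h3, h4⟩ | ⟨h1, (⟨h2, c, hc, h3, h4, h5, h6⟩ | ⟨h2, h3⟩), h7⟩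
  · rw [f2] at h1; exact absurd h1 ht
  · rw [f1] at h2; exact absurd h2 hs
  · rcases h7 with ⟨d, hd, k3, k4, k5, k6⟩ | ⟨k2, k3⟩
    · exact absurd ⟨_, ⟨d, hd, k5.trans f2, rfl⟩, k3⟩ hp
    · exact ⟨a, ha, h3.trans f1, k3.trans f2⟩

/-- successors of slots at x after reflection -/
theorem rf_succ_at (g : Good M) (hx : CanRef M x) {q t : Slot} (hq : q.1 = x)
    (h : Next (rf M x) q t) : Next M t (flp q) := by
  obtain ⟨a, ha, f1, f2⟩ := h
  rcases rf_kind g hx ha with ⟨h1, h2, h3, h4⟩ | ⟨h1, (⟨h2, c, hc, h3, h4, h5, h6⟩ | ⟨h2, h3⟩), h7⟩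
  · refine ⟨a, ha, h4.symm.trans f2, ?_⟩
    rw [← f1, h3, flp_flp]
  · rw [f1] at h6; rw [← h6] at h5; exact absurd hq h5
  · rw [f1] at h3; rw [← h3] at h2; exact absurd hq h2

theorem rf_last (g : Good M) (hx : CanRef M x) {y q : Slot} (h : Next M y q) (hq : q.1 = x)
    (hl : ∀ t, ¬ Next M (flp q) t) : ∀ t, ¬ Next (rf M x) y t := by
  rintro t ⟨a, ha, f1, f2⟩
  obtain ⟨b, hb, e1, e2⟩ := h
  rcases rf_kind g hx ha with ⟨h1, h2, h3, h4⟩ | ⟨h1, (⟨h2, c, hc, h3, h4, h5, h6⟩ | ⟨h2, h3⟩), h7⟩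
  · apply g.noloop b hb
    rw [e1, ← f1, h3, e2, hq, flp_fst, h1]
  · have := g.sinj _ hc _ hb (h6.symm.trans (f1.trans e1.symm))
    subst this
    apply hl (M.T a)
    refine ⟨a, ha, ?_, rfl⟩
    rw [← e2, h3, flp_flp]
  · have := g.sinj _ ha _ hb (h3.symm.trans (f1.trans e1.symm))
    subst this
    exact h1 (by rw [e2, hq])

theorem rf_E1 (g : Good M) (hx : CanRef M x) {s t : Slot} (h : Sm M s t) :
    Sm (rf M x) (ph M x s) (ph M x t) := by
  refine (Sm.induct (fun u => Sm (rf M x) (ph M x s) (ph M x u)) ?_ h).1 (Sm.refl _ _)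
  have key : ∀ s t, Next M s t → Sm (rf M x) (ph M x s) (ph M x t) := by
    intro s t hst
    by_cases ht : t.1 = x
    · rw [ph_pre g hst ht, ph_not (not_pre_at g ht)]; exact Sm.refl _ _
    · have hs : ¬ Pre M x s := by
        rintro ⟨u, hu, e⟩
        rw [hst.runiq g hu] at ht
        exact ht e
      rw [ph_not hs]
      by_cases hp : Pre M x t
      · obtain ⟨q, hq, eq⟩ := hp
        rw [ph_pre g hq eq]
        by_cases hsx : s.1 = x
        · obtain ⟨a, ha, rfl, rfl⟩ := hst
          rcases rf_kind g hx ha with ⟨h1, h2, h3, h4⟩ | ⟨h1, (⟨h2, c, hc, h3, h4, h5, h6⟩ | ⟨h2, h3⟩), h7⟩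
          · exact absurd h1 ht
          · have n1 := rf_N1 g hx ⟨c, hc, rfl, rfl⟩ h4
            rw [h3, flp_flp] at n1
            rcases h7 with ⟨d, hd, k3, k4, k5, k6⟩ | ⟨k2, k3⟩
            · have : q = M.T d := hq.runiq g ⟨d, hd, k5, rfl⟩
              rw [this]
              exact n1.sm.trans (Next.sm ⟨a, ha, h6, k6⟩)
            · obtain ⟨d, hd, e1, e2⟩ := hq
              exact absurd e1 (k2 d hd (by rw [e2, eq]))
          · exact absurd hsx h2
        · exact (rf_N2 g hx hst hq eq hsx).sm
      · rw [ph_not hp]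
        by_cases hsx : s.1 = x
        · obtain ⟨a, ha, rfl, rfl⟩ := hst
          rcases rf_kind g hx ha with ⟨h1, h2, h3, h4⟩ | ⟨h1, (⟨h2, c, hc, h3, h4, h5, h6⟩ | ⟨h2, h3⟩), h7⟩
          · exact absurd h1 ht
          · have n1 := rf_N1 g hx ⟨c, hc, rfl, rfl⟩ h4
            rw [h3, flp_flp] at n1
            rcases h7 with ⟨d, hd, k3, k4, k5, k6⟩ | ⟨k2, k3⟩
            · exact absurd ⟨_, ⟨d, hd, k5, rfl⟩, k3⟩ hp
            · exact n1.sm.trans (Next.sm ⟨a, ha, h6, k3⟩)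
          · exact absurd hsx h2
        · exact (rf_N4 g hx hst hsx ht hp).sm
  intro u v huv
  have := key u v huv
  exact ⟨fun h => h.trans this, fun h => h.trans this.symm⟩

theorem rf_E2 (g : Good M) (hx : CanRef M x) {s t : Slot} (h : Sm (rf M x) s t) :
    Sm M (ph2 M x s) (ph2 M x t) := by
  refine (Sm.induct (fun u => Sm M (ph2 M x s) (ph2 M x u)) ?_ h).1 (Sm.refl _ _)
  have key : ∀ s t, Next (rf M x) s t → Sm M (ph2 M x s) (ph2 M x t) := by
    rintro s t ⟨a, ha, rfl, rfl⟩
    have ha : a ∈ M.A := ha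
    rcases rf_kind g hx ha with ⟨h1, h2, h3, h4⟩ | ⟨h1, h8, h7⟩
    · rw [h3, h4, ph2_not (not_pre_at g (s := flp (M.T a)) h1), ph2_pre g ⟨a, ha, rfl, rfl⟩ h1]
      exact Sm.refl _ _
    · have e1 : ph2 M x ((rf M x).S a) = M.S a := by
        rcases h8 with ⟨h2, c, hc, h3, h4, h5, h6⟩ | ⟨h2, h3⟩
        · rw [h6, ph2_pre g ⟨c, hc, rfl, rfl⟩ h4, h3, flp_flp]
        · rw [h3, ph2_not]
          rintro ⟨u, hu, e⟩
          rw [← hu.runiq g ⟨a, ha, rfl, rfl⟩] at h1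
          exact h1 e
      rw [e1]
      have n1 : Next M (M.S a) (M.T a) := ⟨a, ha, rfl, rfl⟩
      rcases h7 with ⟨d, hd, k3, k4, k5, k6⟩ | ⟨k2, k3⟩
      · rw [k6, ph2_not (not_pre_at g k3)]
        exact n1.sm.trans (Next.sm ⟨d, hd, k5, rfl⟩)
      · rw [k3, ph2_not]
        · exact n1.sm
        · rintro ⟨u, ⟨d, hd, f1, f2⟩, e⟩
          exact k2 d hd (by rw [f2, e]) f1
  intro u v huv
  have := key u v huv
  exact ⟨fun h => h.trans this, fun h => h.trans this.symm⟩

theorem rf_sm (g : Good M) (hx : CanRef M x) {s t : Slot} (h : Sm M s t)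
    (hs : ¬ Pre M x s) (ht : ¬ Pre M x t) : Sm (rf M x) s t := by
  have := rf_E1 g hx h
  rwa [ph_not hs, ph_not ht] at this

theorem rf_nodes (g : Good M) (hx : CanRef M x) : (nodes (rf M x)).card = (nodes M).card := by
  classical
  unfold nodes
  have hph : ∀ s ∈ slots M, ph M x s ∈ slots M := by
    intro s hs
    rw [mem_slots] at *
    by_cases hp : Pre M x s
    · obtain ⟨q, hq, e⟩ := hp
      rw [ph_pre g hq e, e]; exact hx.1
    · rwa [ph_not hp]
  have hph2 : ∀ s ∈ slots M, ph2 M x s ∈ slots M := by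
    intro s hs
    rw [mem_slots] at *
    by_cases hp : Pre M x s
    · obtain ⟨q, hq, e⟩ := hp
      rw [ph2_pre g hq e, flp_fst, e]; exact hx.1
    · rwa [ph2_not hp]
  apply le_antisymm
  · refine card_image_le_of (X := slots M) (cls M) (cls (rf M x)) (ph M x) ?_ ?_
    · intro s _ t _ h
      rw [cls_eq] at *
      exact rf_E1 g hx h
    · intro t ht
      refine ⟨ph2 M x t, hph2 t ht, ?_⟩
      rw [cls_eq]
      by_cases hp : Pre M x t
      · obtain ⟨q, hq, e⟩ := hp
        rw [ph2_pre g hq e, ph_not (not_pre_at g (s := flp q) e)]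
        exact (rf_N1 g hx hq e).sm
      · rw [ph2_not hp, ph_not hp]; exact Sm.refl _ _
  · refine card_image_le_of (X := slots M) (cls (rf M x)) (cls M) (ph2 M x) ?_ ?_
    · intro s _ t _ h
      rw [cls_eq] at *
      exact rf_E2 g hx h
    · intro t ht
      refine ⟨ph M x t, hph t ht, ?_⟩
      rw [cls_eq]
      by_cases hp : Pre M x t
      · obtain ⟨q, hq, e⟩ := hp
        rw [ph_pre g hq e, ph2_not (not_pre_at g e)]
        exact hq.sm.symm
      · rw [ph_not hp, ph2_not hp]; exact Sm.refl _ _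

end

theorem MStep.nodes {M M' : Mod} (g : Good M) (s : MStep M M') :
    (nodes M').card = (nodes M).card := by
  rcases s with ⟨x, hx, rfl⟩ | ⟨x, hx, e⟩
  · exact rf_nodes g hx
  · rw [← nodes_op M', e, rf_nodes g.op hx, nodes_op]

theorem Reach.nodes {M M' : Mod} (g : Good M) (s : Reach M M') :
    (nodes M').card = (nodes M).card := by
  induction s with
  | refl => rfl
  | tail h1 h2 ih => rw [← ih]; exact h2.nodes (Reach.spec g h1).1

/-! Trees -/

def R (M : Mod) (d h : Slot) : Prop := Sm M h (flp d) ∧ flp d ≠ h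
def Tr (M : Mod) (h : Slot) : Prop := Acc (R M) h
abbrev N (M : Mod) (h : Slot) : Prop := ¬ Tr M h

theorem R_op (M : Mod) : R (op M) = R M := by
  ext d h
  simp only [R, sm_op]

theorem tr_op {M : Mod} {h : Slot} : Tr (op M) h ↔ Tr M h := by
  unfold Tr; rw [R_op]

theorem N_iff {M : Mod} {h : Slot} : N M h ↔ ∃ k, k ≠ h ∧ Sm M h k ∧ N M (flp k) := by
  constructor
  · intro hn
    by_contra hc
    apply hn
    constructor
    intro d hd
    by_contra hd2
    exact hc ⟨flp d, hd.2, hd.1, by rwa [flp_flp]⟩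
  · rintro ⟨k, h1, h2, h3⟩ ht
    exact h3 (ht.inv ⟨by rwa [flp_flp], by rwa [flp_flp]⟩)

theorem N_of {M : Mod} {h k : Slot} (h1 : k ≠ h) (h2 : Sm M h k) (h3 : N M (flp k)) : N M h :=
  N_iff.2 ⟨k, h1, h2, h3⟩

theorem N_coind {M : Mod} (P : Slot → Prop)
    (hP : ∀ h, P h → ∃ k, k ≠ h ∧ Sm M h k ∧ P (flp k)) {h : Slot} (hh : P h) : N M h := by
  intro ht
  induction ht with
  | intro h _ ih =>
    obtain ⟨k, h1, h2, h3⟩ := hP h hh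
    exact ih (flp k) ⟨by rwa [flp_flp], by rwa [flp_flp]⟩ h3

theorem Tr.child {M : Mod} {h k : Slot} (ht : Tr M h) (h1 : k ≠ h) (h2 : Sm M h k) : Tr M (flp k) :=
  ht.inv ⟨by rwa [flp_flp], by rwa [flp_flp]⟩

theorem Tr.irrefl {M : Mod} {h : Slot} (ht : Tr M h) : ¬ Sm M h (flp h) := by
  intro hc
  have : ∀ h, Tr M h → ¬ R M h h := by
    intro h ht
    induction ht with
    | intro h _ ih => exact fun hr => ih h hr hr
  exact this h ht ⟨hc, flp_ne h⟩

/-- Lemma K -/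
theorem lemK {M : Mod} (g : Good M) {m : Slot} (hx : CanRef M m.1) (ht : Tr M (flp m))
    (hN : N M m) {h : Slot}
    (hh : (N M h ∧ (h ≠ m ∨ ∃ c, Sm M m c ∧ ¬ Next M c m ∧ N M (flp c))) ∨
      (h = flp m ∧ ∃ z, Next M z m ∧ N M (flp z))) : N (rf M m.1) h := by
  have hirr : ¬ Sm M m (flp m) := fun e => ht.irrefl (by rw [flp_flp]; exact e.symm)
  have pre_cases : ∀ k, Pre M m.1 k → Next M k m ∨ Next M k (flp m) := by
    rintro k ⟨q, hq, e⟩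
    rcases fst_eq e with rfl | rfl
    · exact Or.inl hq
    · exact Or.inr hq
  have nm : ¬ Pre M m.1 m := not_pre_at g rfl
  have nfm : ¬ Pre M m.1 (flp m) := not_pre_at g rfl
  -- regular c in the node of m, not the predecessor of m
  have creg : ∀ c, Sm M m c → ¬ Next M c m → ¬ Pre M m.1 c := by
    intro c h1 h2 h3
    rcases pre_cases c h3 with h4 | h4
    · exact h2 h4
    · exact hirr (h1.trans h4.sm)
  have zne : ∀ z, Next M z m → flp z ≠ m := by
    intro z hz e
    apply hz.fst_ne g
    rw [← e, flp_fst]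
  refine N_coind (fun h => (N M h ∧ (h ≠ m ∨ ∃ c, Sm M m c ∧ ¬ Next M c m ∧ N M (flp c))) ∨
      (h = flp m ∧ ∃ z, Next M z m ∧ N M (flp z))) ?_ hh
  clear hh h
  rintro h (⟨hn, hc⟩ | ⟨rfl, z, hz, hzc⟩)
  · by_cases hm : h = m
    · subst hm
      rcases hc with hc | ⟨c, h1, h2, h3⟩
      · exact absurd rfl hc
      · refine ⟨c, ?_, rf_sm g hx h1 nm (creg c h1 h2), Or.inl ⟨h3, Or.inl ?_⟩⟩
        · rintro rfl; exact h3 ht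
        · rintro e
          rw [← e, flp_flp] at hirr
          apply hirr
          rw [e]; exact h1
    · clear hc
      by_cases hp : Pre M m.1 h
      · rcases pre_cases h hp with hz | hz
        · -- h = z
          refine ⟨flp m, ?_, ?_, Or.inl ⟨by rwa [flp_flp], Or.inr ?_⟩⟩
          · intro e
            apply hz.fst_ne g
            rw [← e, flp_fst]
          · exact (rf_N1 g hx hz rfl).sm.symm
          · obtain ⟨k, k1, k2, k3⟩ := N_iff.1 hn
            exact ⟨k, hz.sm.symm.trans k2, fun e => k1 (e.luniq g hz), k3⟩
        · -- h = p
          have hpm : Sm (rf M m.1) h m := by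
            have := (rf_N1 g hx hz rfl).sm.symm
            rwa [flp_flp] at this
          by_cases hgood : ∃ c, Sm M m c ∧ ¬ Next M c m ∧ N M (flp c)
          · obtain ⟨c, h1, h2, h3⟩ := hgood
            refine ⟨c, ?_, hpm.trans (rf_sm g hx h1 nm (creg c h1 h2)), Or.inl ⟨h3, Or.inl ?_⟩⟩
            · rintro rfl
              exact hirr (h1.trans hz.sm)
            · rintro e
              rw [← e, flp_flp] at hirr
              apply hirr
              rw [e]; exact h1
          · refine ⟨m, fun e => hm e.symm, hpm, Or.inr ⟨rfl, ?_⟩⟩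
            obtain ⟨k, k1, k2, k3⟩ := N_iff.1 hN
            by_contra hcc
            exact hgood ⟨k, k2, fun e => hcc ⟨k, e, k3⟩, k3⟩
      · obtain ⟨k, k1, k2, k3⟩ := N_iff.1 hn
        by_cases hkp : Pre M m.1 k
        · rcases pre_cases k hkp with hz | hz
          · refine ⟨m, fun e => hm e.symm, ?_, Or.inr ⟨rfl, k, hz, k3⟩⟩
            have := rf_E1 g hx k2
            rwa [ph_not hp, ph_pre g hz rfl] at this
          · exfalso
            refine N_of ?_ hz.sm.symm k3 ht
            rintro e
            apply hz.fst_ne g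
            rw [e]
        · by_cases hgood : ∃ c, Sm M m c ∧ ¬ Next M c m ∧ N M (flp c)
          · exact ⟨k, k1, rf_sm g hx k2 hp hkp, Or.inl ⟨k3, Or.inr hgood⟩⟩
          · by_cases hk : flp k = m
            · have hk' : k = flp m := by rw [← hk, flp_flp]
              obtain ⟨z, z1, z2, z3⟩ := N_iff.1 hN
              have hz : Next M z m := by
                by_contra hcc
                exact hgood ⟨z, z2, hcc, z3⟩
              refine ⟨z, ?_, ?_, Or.inl ⟨z3, Or.inl (zne z hz)⟩⟩
              · rintro rfl
                exact hp ⟨m, hz, rfl⟩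
              · have h5 := rf_sm g hx k2 hp hkp
                rw [hk'] at h5
                exact h5.trans (rf_N1 g hx hz rfl).sm
            · exact ⟨k, k1, rf_sm g hx k2 hp hkp, Or.inl ⟨k3, Or.inl hk⟩⟩
  · refine ⟨z, ?_, (rf_N1 g hx hz rfl).sm, Or.inl ⟨hzc, Or.inl (zne z hz)⟩⟩
    rintro rfl
    exact hz.fst_ne g rfl

open Classical in
/-- core edges -/
noncomputable def coreE (M : Mod) : Finset ℕ := M.V.filter fun x => ∀ b, N M (x, b)

theorem mem_coreE {M : Mod} {x : ℕ} : x ∈ coreE M ↔ x ∈ M.V ∧ ∀ b, N M (x, b) := by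
  simp only [coreE, Finset.mem_filter]

/-- number of core edges -/
noncomputable def Lc (M : Mod) : ℕ := (coreE M).card

theorem Lc_op (M : Mod) : Lc (op M) = Lc M := by
  have : coreE (op M) = coreE M := by
    ext x
    rw [mem_coreE, mem_coreE]
    simp only [N, tr_op]
    rfl
  rw [Lc, this, Lc]

theorem Lc_le_card (M : Mod) : Lc M ≤ M.V.card :=
  Finset.card_le_card fun _ h => (mem_coreE.1 h).1

theorem both {P : Slot → Prop} {s : Slot} (h1 : P s) (h2 : P (flp s)) (b : Bool) : P (s.1, b) := by
  rcases fst_eq (s := (s.1, b)) (t := s) rfl with e | e <;> rw [e] <;> assumption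

theorem Lc_le {M : Mod} (g : Good M) {m : Slot} (hx : CanRef M m.1) (ht : Tr M (flp m))
    (hN : N M m) : Lc M ≤ Lc (rf M m.1) := by
  apply Finset.card_le_card
  intro y hy
  rw [mem_coreE] at *
  refine ⟨hy.1, fun b => lemK g hx ht hN (Or.inl ⟨hy.2 b, Or.inl ?_⟩)⟩
  rintro rfl
  exact hy.2 (!b) ht

theorem Lc_lt {M : Mod} (g : Good M) {m : Slot} (hx : CanRef M m.1) (ht : Tr M (flp m))
    (hN : N M m) {q : Slot} (hq : q.1 ∈ M.V) (hq1 : Tr M q) (hq2 : N (rf M m.1) q)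
    (hq3 : N (rf M m.1) (flp q)) : Lc M < Lc (rf M m.1) := by
  apply Finset.card_lt_card
  rw [Finset.ssubset_iff_of_subset]
  · refine ⟨q.1, ?_, ?_⟩
    · rw [mem_coreE]
      exact ⟨hq, both hq2 hq3⟩
    · rw [mem_coreE]
      rintro ⟨_, h⟩
      exact h q.2 hq1
  · intro y hy
    rw [mem_coreE] at *
    refine ⟨hy.1, fun b => lemK g hx ht hN (Or.inl ⟨hy.2 b, Or.inl ?_⟩)⟩
    rintro rfl
    exact hy.2 (!b) ht

/-- Frame -/
theorem frame {M : Mod} (g : Good M) {x : ℕ} (hx : CanRef M x) {s : Slot}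
    (hs : ∀ q : Slot, q.1 = x → ¬ Sm M s q) :
    (∀ t, Sm M s t ↔ Sm (rf M x) s t) ∧ (∀ t, Next M t s → Next (rf M x) t s) := by
  have np : ∀ t, Sm M s t → ¬ Pre M x t := by
    rintro t h ⟨q, hq, e⟩
    exact hs q e (h.trans hq.sm)
  refine ⟨fun t => ⟨fun h => rf_sm g hx h (np s (Sm.refl _ _)) (np t h), ?_⟩, ?_⟩
  · intro h
    have := rf_E2 g hx h
    rw [ph2_not (np s (Sm.refl _ _))] at this
    by_cases hp : Pre M x t
    · obtain ⟨q, hq, e⟩ := hp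
      rw [ph2_pre g hq e] at this
      exact absurd this (hs _ e)
    · rwa [ph2_not hp] at this
  · intro t h
    exact rf_N4 g hx h (fun e => hs t e h.sm.symm) (fun e => hs s e (Sm.refl _ _)) (np s (Sm.refl _ _))

end

section

/-- chains of given length -/
def Nx (M : Mod) : ℕ → Slot → Slot → Prop
  | 0, s, t => s = t
  | n + 1, s, t => ∃ u, Nx M n s u ∧ Next M u t

theorem Nx.rch {M : Mod} : ∀ {n : ℕ} {s t : Slot}, Nx M n s t → Rch M s t
  | 0, _, _, h => by cases h; exact .refl
  | _ + 1, _, _, ⟨_, h1, h2⟩ => h1.rch.tail h2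

theorem Rch.nx {M : Mod} {s t : Slot} (h : Rch M s t) : ∃ n, Nx M n s t := by
  induction h with
  | refl => exact ⟨0, rfl⟩
  | tail _ h ih => obtain ⟨n, hn⟩ := ih; exact ⟨n + 1, _, hn, h⟩

/-- bounded height -/
def Ht (M : Mod) : ℕ → Slot → Prop
  | 0, _ => False
  | n + 1, h => ∀ d, R M d h → Ht M n d

theorem Ht.succ {M : Mod} : ∀ {n : ℕ} {h : Slot}, Ht M n h → Ht M (n + 1) h
  | 0, _, h => h.elim
  | _ + 1, _, h => fun d hd => (h d hd).succ

theorem Ht.mono {M : Mod} {n m : ℕ} (hnm : n ≤ m) {h : Slot} (hh : Ht M n h) : Ht M m h := by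
  induction hnm with
  | refl => exact hh
  | step _ ih => exact ih.succ

theorem ht_exists {M : Mod} (g : Good M) {h : Slot} (ht : Tr M h) : ∃ n, Ht M n h := by
  induction ht with
  | intro h _ ih =>
    choose! f hf using ih
    refine ⟨(slots M).sup f + 1, fun d hd => (hf d hd).mono ?_⟩
    apply Finset.le_sup (f := f)
    rw [mem_slots]
    exact (Sm.memV g hd.1 hd.2 : (flp d).1 ∈ M.V)

theorem R_flp {M : Mod} {d e : Slot} (h : R M d e) : R M (flp e) (flp d) :=
  ⟨by rw [flp_flp]; exact h.1.symm, by rw [flp_flp]; exact h.2.symm⟩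

theorem TR_flp {M : Mod} {d e : Slot} (h : Relation.TransGen (R M) d e) :
    Relation.TransGen (R M) (flp e) (flp d) := by
  induction h with
  | single h => exact .single (R_flp h)
  | tail _ h ih => exact Relation.TransGen.head (R_flp h) ih

theorem Tr.trans_irrefl {M : Mod} {h : Slot} (ht : Tr M h) : ¬ Relation.TransGen (R M) h h := by
  have h2 : Acc (Relation.TransGen (R M)) h := Acc.transGen ht
  induction h2 with
  | intro h _ ih => exact fun hr => ih h hr ht hr

theorem Tr.desc {M : Mod} {d h : Slot} (ht : Tr M h) (hd : Relation.TransGen (R M) d h) :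
    Tr M d := by
  induction hd using Relation.TransGen.head_induction_on with
  | single h => exact ht.inv h
  | head h _ ih => exact ih.inv h

theorem Tr.asymm {M : Mod} {h l : Slot} (ht : Tr M h) (hne : l ≠ h) (hs : Sm M h l) :
    ¬ Sm M (flp l) (flp h) := by
  intro hc
  refine N_coind (fun s => s = h ∨ s = flp l) ?_ (Or.inl rfl) ht
  rintro s (rfl | rfl)
  · exact ⟨l, hne, hs, Or.inr rfl⟩
  · exact ⟨flp h, fun e => hne (flp_inj e).symm, hc, Or.inl (flp_flp _)⟩

theorem desc_free {M : Mod} {l d : Slot} (ht : Tr M (flp l)) (hN : N M l)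
    (hd : Relation.TransGen (R M) d (flp l)) : ∀ q : Slot, q.1 = l.1 → ¬ Sm M d q := by
  intro q hq hs
  rcases fst_eq hq with rfl | rfl
  · by_cases e : q = d
    · subst e; exact hN (ht.desc hd)
    · have : R M (flp q) d := ⟨by rwa [flp_flp], by rwa [flp_flp]⟩
      exact ht.trans_irrefl (Relation.TransGen.head this hd)
  · by_cases e : d = flp l
    · subst e; exact ht.trans_irrefl hd
    · have h1 : R M (flp d) (flp l) := ⟨by rw [flp_flp]; exact hs.symm, by rwa [flp_flp]⟩
      have h2 := TR_flp hd
      rw [flp_flp] at h2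
      exact hN (ht.desc (h2.tail h1))

theorem ht_transport {M : Mod} (g : Good M) {l : Slot} (hx : CanRef M l.1) (ht : Tr M (flp l))
    (hN : N M l) : ∀ k d, Relation.TransGen (R M) d (flp l) → Ht M k d → Ht (rf M l.1) k d := by
  intro k
  induction k with
  | zero => intro d _ h; exact h.elim
  | succ k ih =>
    intro d hd h d' hd'
    have hf := (frame g hx (desc_free ht hN hd)).1
    have h1 : R M d' d := ⟨(hf _).2 hd'.1, hd'.2⟩
    exact ih d' (Relation.TransGen.head h1 hd) (h d' h1)

def Keep (M M1 : Mod) (h : Slot) : Prop :=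
  ∀ s, Sm M s (flp h) → Sm M1 s (flp h) ∧ (N M (flp s) → N M1 (flp s)) ∧
    ∀ t, Next M t s → Next M1 t s

theorem Keep.trans {M M1 M2 : Mod} {h : Slot} (h1 : Keep M M1 h) (h2 : Keep M1 M2 h) :
    Keep M M2 h := by
  intro s hs
  obtain ⟨a1, a2, a3⟩ := h1 s hs
  obtain ⟨b1, b2, b3⟩ := h2 s a1
  exact ⟨b1, fun h => b2 (a2 h), fun t h => b3 t (a3 t h)⟩

theorem lemTwo : ∀ (n k : ℕ) (M : Mod) (h l : Slot), Good M → N M (flp h) → Tr M h →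
    Nx M (n + 1) h l → (∀ t, ¬ Next M l t) → Ht M k (flp l) → (∀ u, ¬ Next M u h) →
    ∃ M1, Reach M M1 ∧ (Lc M < Lc M1 ∨ (Lc M ≤ Lc M1 ∧ Tr M1 h ∧ N M1 (flp h) ∧
      (∃ u, Next M1 u h) ∧ Keep M M1 h)) := by
  intro n
  induction n with
  | zero => ?_
  | succ n ihn => ?_
  all_goals
    intro k
    induction k with
    | zero => intro M h l _ _ _ _ _ hk _; exact hk.elim
    | succ k ihk => ?_
    intro M h l g hNf ht hnx hlast hk hfirst
  all_goals
    obtain ⟨c, hc1, hc2⟩ := hnx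
    have hlh : l ≠ h := by rintro rfl; exact hfirst _ hc2
    have hsm : Sm M h l := hc1.rch.sm.trans hc2.sm
    have hx : CanRef M l.1 := by
      refine ⟨hc2.memR g, ?_⟩
      intro a ha e
      rcases fst_eq e with e | e
      · exact absurd ⟨a, ha, e, rfl⟩ (hlast (M.T a))
      · obtain ⟨b, hb, _, e2⟩ := hc2
        exact ⟨b, hb, by rw [e2, e, flp_flp]⟩
    have htl : Tr M (flp l) := ht.child hlh hsm
    have hNl : N M l := N_of hlh.symm hsm.symm hNf
    have hasym := ht.asymm hlh hsm
    have hirr := ht.irrefl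
    have hfree : ∀ s, Sm M s (flp h) → ∀ q : Slot, q.1 = l.1 → ¬ Sm M s q := by
      intro s hs q hq hs2
      rcases fst_eq hq with rfl | rfl
      · exact hirr ((hsm.trans hs2.symm).trans hs)
      · exact hasym (hs2.symm.trans hs)
    have hN' : N (rf M l.1) (flp h) := by
      refine lemK g hx htl hNl (Or.inl ⟨hNf, Or.inl ?_⟩)
      intro e
      apply hirr
      rw [e]; exact hsm
    have hkeep : Keep M (rf M l.1) h := by
      intro s hs
      obtain ⟨f1, f2⟩ := frame g hx (hfree s hs)
      refine ⟨(f1 _).1 hs, ?_, f2⟩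
      intro hn
      refine lemK g hx htl hNl (Or.inl ⟨hn, Or.inl ?_⟩)
      intro e
      refine hfree s hs s ?_ (Sm.refl _ _)
      rw [← e, flp_fst]
    have hle := Lc_le g hx htl hNl
    have hstep : MStep M (rf M l.1) := Or.inl ⟨_, hx, rfl⟩
    have g' := rf_good g hx
    by_cases ht' : Tr (rf M l.1) h
    swap
    · refine ⟨_, .single hstep, Or.inl ?_⟩
      exact Lc_lt g hx htl hNl (Sm.memV g hsm.symm hlh.symm) ht ht' hN'
    by_cases hpred : ∃ u, Next (rf M l.1) u h
    · exact ⟨_, .single hstep, Or.inr ⟨hle, ht', hN', hpred, hkeep⟩⟩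
    push Not at hpred
  · cases hc1
    exact absurd (rf_N1 g hx hc2 rfl) (hpred _)
  · obtain ⟨u, hu1, hu2⟩ := hc1
    have huh : Sm M h u := hu1.rch.sm
    have hirl : ¬ Sm M l (flp l) := by
      intro e; apply htl.irrefl; rw [flp_flp]; exact e.symm
    have tp : ∀ j w, Nx M j h w → (∃ v, Next M w v ∧ ∃ v2, Next M v v2) → Nx (rf M l.1) j h w := by
      intro j
      induction j with
      | zero => intro w hw _; exact hw
      | succ j ih =>
        rintro w ⟨w0, hw1, hw2⟩ ⟨v, hv, v2, hv2⟩
        refine ⟨w0, ih w0 hw1 ⟨w, hw2, v, hv⟩, ?_⟩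
        have hw0s : Sm M l w0 := hsm.symm.trans hw1.rch.sm
        have notat : ∀ y v, Sm M l y → Next M y v → y.1 ≠ l.1 := by
          intro y v h1 h2 e
          rcases fst_eq e with rfl | rfl
          · exact hlast _ h2
          · exact hirl h1
        refine rf_N4 g hx hw2 (notat w0 w hw0s hw2) (notat w v (hw0s.trans hw2.sm) hv) ?_
        rintro ⟨q, hq1, hq2⟩
        rw [← hv.runiq g hq1] at hq2
        exact notat v v2 ((hw0s.trans hw2.sm).trans hv.sm) hv2 hq2
    have hu' : Nx (rf M l.1) n h u := tp n u hu1 ⟨c, hu2, l, hc2⟩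
    have hul : Next (rf M l.1) u l := by
      refine rf_N2 g hx hu2 hc2 rfl ?_
      intro e
      rcases fst_eq e with rfl | rfl
      · exact hlast _ hu2
      · exact hirl (hsm.symm.trans huh)
    have hl' : Nx (rf M l.1) (n + 1) h l := ⟨u, hu', hul⟩
    have fin : ∀ M1, Reach (rf M l.1) M1 → (Lc (rf M l.1) < Lc M1 ∨ (Lc (rf M l.1) ≤ Lc M1 ∧ Tr M1 h ∧ N M1 (flp h) ∧
      (∃ u, Next M1 u h) ∧ Keep (rf M l.1) M1 h)) → ∃ M1, Reach M M1 ∧ (Lc M < Lc M1 ∨ (Lc M ≤ Lc M1 ∧ Tr M1 h ∧ N M1 (flp h) ∧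
      (∃ u, Next M1 u h) ∧ Keep M M1 h)) := by
      intro M1 hr hd
      refine ⟨M1, Relation.ReflTransGen.head hstep hr, ?_⟩
      rcases hd with hd | ⟨d1, d2, d3, d4, d5⟩
      · exact Or.inl (hle.trans_lt hd)
      · exact Or.inr ⟨hle.trans d1, d2, d3, d4, hkeep.trans d5⟩
    by_cases hg : ∃ v, Next M v (flp l)
    · obtain ⟨v, hv⟩ := hg
      have n1 := rf_N1 g hx hv rfl
      rw [flp_flp] at n1
      have hchild : R M (flp v) (flp l) := by
        refine ⟨by rw [flp_flp]; exact hv.sm.symm, ?_⟩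
        rw [flp_flp]
        intro e
        exact hv.fst_ne g (by rw [e])
      obtain ⟨M1, r1, r2⟩ := ihk (rf M l.1) h v g' hN' ht' ⟨l, hl', n1⟩
        (rf_last g hx hv rfl (by rw [flp_flp]; exact hlast))
        (ht_transport g hx htl hNl k _ (.single hchild) (hk _ hchild)) hpred
      exact fin M1 r1 r2
    · push Not at hg
      have htl' : Tr (rf M l.1) (flp l) := ht'.child hlh hl'.rch.sm
      obtain ⟨k2, hk2⟩ := ht_exists g' htl'
      obtain ⟨M1, r1, r2⟩ := ihn k2 (rf M l.1) h l g' hN' ht' hl'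
        (fun t h => hg t (rf_succ_at g hx rfl h)) hk2 hpred
      exact fin M1 r1 r2

/-- backward distance to a core-out slot -/
def Bk (M : Mod) : ℕ → Slot → Prop
  | 0, s => N M (flp s)
  | n + 1, s => ¬ N M (flp s) ∧ ∃ u, Next M u s ∧ Bk M n u

theorem Bk.uniq {M : Mod} (g : Good M) : ∀ {n m : ℕ} {s : Slot}, Bk M n s → Bk M m s → n = m
  | 0, 0, _, _, _ => rfl
  | 0, _ + 1, _, h, h' => absurd h h'.1
  | _ + 1, 0, _, h, h' => absurd h' h.1
  | n + 1, m + 1, _, ⟨_, u, h1, h2⟩, ⟨_, v, k1, k2⟩ => by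
    have := h1.luniq g k1
    subst this
    rw [Bk.uniq g h2 k2]

theorem bk_exists {M : Mod} {c z : Slot} (h : Rch M c z) (hc : N M (flp c)) : ∃ n, Bk M n z := by
  induction h with
  | refl => exact ⟨0, hc⟩
  | tail _ h ih =>
    rename_i b z _
    by_cases hz : N M (flp z)
    · exact ⟨0, hz⟩
    · obtain ⟨n, hn⟩ := ih
      exact ⟨n + 1, hz, _, h, hn⟩

theorem main1a : ∀ (n : ℕ) (M : Mod) (x0 z c d k : Slot), Good M → Tr M (flp x0) →
    k ≠ flp x0 → Sm M (flp x0) k → Sm M x0 c → Sm M x0 d → c ≠ d → N M (flp c) → N M (flp d) →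
    Next M z x0 → Bk M n z → ∃ M', Reach M M' ∧ Lc M < Lc M' := by
  intro n
  induction n using Nat.strong_induction_on with
  | _ n ih => ?_
  -- the case when flp x0 has a predecessor
  have A : ∀ (M : Mod) (x0 z c d p : Slot), Good M → Tr M (flp x0) →
    Next M p (flp x0) → Sm M x0 c → Sm M x0 d → c ≠ d → N M (flp c) → N M (flp d) →
    Next M z x0 → Bk M n z → ∃ M', Reach M M' ∧ Lc M < Lc M' := by
    intro M x0 z c d p g ht hp hc hd hcd hNc hNd hz hb
    have hx : CanRef M x0.1 := by
      refine ⟨hz.memR g, ?_⟩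
      intro a ha e
      rcases fst_eq e with e | e
      · obtain ⟨b, hb, _, e2⟩ := hp
        exact ⟨b, hb, by rw [e2, e]⟩
      · obtain ⟨b, hb, _, e2⟩ := hz
        exact ⟨b, hb, by rw [e2, e, flp_flp]⟩
    have hcx : c ≠ x0 := by rintro rfl; exact hNc ht
    have hN : N M x0 := N_of hcx hc hNc
    have hirr : ¬ Sm M x0 (flp x0) := by
      intro e; apply ht.irrefl; rw [flp_flp]; exact e.symm
    have hle := Lc_le g hx ht hN
    have hstep : MStep M (rf M x0.1) := Or.inl ⟨_, hx, rfl⟩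
    have g' := rf_good g hx
    have hzV : (flp x0).1 ∈ M.V := hz.memR g
    have hgood : (∃ c, Sm M x0 c ∧ ¬ Next M c x0 ∧ N M (flp c)) := by
      by_cases e : Next M c x0
      · exact ⟨d, hd, fun e2 => hcd (e.luniq g e2), hNd⟩
      · exact ⟨c, hc, e, hNc⟩
    have hN' : N (rf M x0.1) x0 := lemK g hx ht hN (Or.inl ⟨hN, Or.inr hgood⟩)
    have core' : ∀ w, Sm M x0 w → N M (flp w) → N (rf M x0.1) (flp w) := by
      intro w hw hn
      refine lemK g hx ht hN (Or.inl ⟨hn, Or.inl ?_⟩)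
      intro e
      apply hirr
      rw [← e, flp_flp, e]; exact hw
    by_cases ht' : N (rf M x0.1) (flp x0)
    · refine ⟨_, .single hstep, ?_⟩
      exact Lc_lt g hx ht hN hzV ht ht' (by rwa [flp_flp])
    have ht'' : Tr (rf M x0.1) (flp x0) := not_not.1 ht'
    cases n with
    | zero => exact absurd (lemK g hx ht hN (Or.inr ⟨rfl, z, hz, hb⟩)) ht'
    | succ n =>
      have hb0 := hb
      obtain ⟨hzc, u, hu, hbu⟩ := hb
      have bkx : ∀ j, j ≤ n + 1 → ¬ Bk M j x0 := by
        intro j hj hbj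
        cases j with
        | zero => exact hbj ht
        | succ j =>
          obtain ⟨_, v, hv, hbv⟩ := hbj
          have := hv.luniq g hz
          subst this
          have := hbv.uniq g hb0
          omega
      have nat : ∀ j w, j ≤ n → Bk M j w → Sm M x0 w → w.1 ≠ x0.1 := by
        intro j w hj hbw hw e
        rcases fst_eq e with rfl | rfl
        · exact bkx j (by omega) hbw
        · exact hirr hw
      have hux : u.1 ≠ x0.1 := nat n u le_rfl hbu (hz.sm.symm.trans hu.sm.symm)
      have n2 := rf_N2 g hx hu hz rfl hux
      have tp : ∀ j w, j ≤ n → Bk M j w → Sm M x0 w → ∃ j' ≤ j, Bk (rf M x0.1) j' w := by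
        intro j
        induction j with
        | zero => intro w _ hw hs; exact ⟨0, le_rfl, core' w hs hw⟩
        | succ j ihj =>
          intro w hj hw hs
          have hw0 := hw
          obtain ⟨hw1, v, hv, hbv⟩ := hw
          have hvs : Sm M x0 v := hs.trans hv.sm.symm
          by_cases hwn : N (rf M x0.1) (flp w)
          · exact ⟨0, by omega, hwn⟩
          · obtain ⟨j', hj', hbj'⟩ := ihj v (by omega) hbv hvs
            refine ⟨j' + 1, by omega, hwn, v, ?_, hbj'⟩
            refine rf_N4 g hx hv (nat j v (by omega) hbv hvs) (nat (j+1) w hj hw0 hs) ?_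
            rintro ⟨q, hq1, hq2⟩
            rcases fst_eq hq2 with rfl | rfl
            · have := hq1.luniq g hz
              subst this
              have := hw0.uniq g hb0
              omega
            · exact hirr (hs.trans hq1.sm)
      obtain ⟨j', hj', hbj⟩ := tp n u le_rfl hbu (hz.sm.symm.trans hu.sm.symm)
      have creg : ∀ c, Sm M x0 c → N M (flp c) → Sm (rf M x0.1) x0 c := by
        intro c hc hNc
        refine rf_sm g hx hc (not_pre_at g rfl) ?_
        rintro ⟨q, hq1, hq2⟩
        rcases fst_eq hq2 with rfl | rfl
        · have := hq1.luniq g hz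
          subst this
          exact hzc hNc
        · exact hirr (hc.trans hq1.sm)
      have hzf : z ≠ flp x0 := by
        rintro rfl
        exact hz.fst_ne g rfl
      obtain ⟨M1, r1, r2⟩ := ih j' (by omega) (rf M x0.1) x0 u c d z g' ht'' hzf
        (rf_N1 g hx hz rfl).sm (creg c hc hNc) (creg d hd hNd) hcd (core' c hc hNc)
        (core' d hd hNd) n2 hbj
      exact ⟨M1, Relation.ReflTransGen.head hstep r1, hle.trans_lt r2⟩
  intro M x0 z c d k g ht hk hks hc hd hcd hNc hNd hz hb
  by_cases hp : ∃ p, Next M p (flp x0)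
  · obtain ⟨p, hp⟩ := hp
    exact A M x0 z c d p g ht hp hc hd hcd hNc hNd hz hb
  · push Not at hp
    obtain ⟨l, hl1, hl2⟩ : ∃ l, Rch M (flp x0) l ∧ ∀ t, ¬ Next M l t := by
      rcases exists_last g.toGood0 (flp x0) with h | ⟨u, hu, _⟩
      · exact h
      · exact absurd hu (hp u)
    have hcx : c ≠ x0 := by rintro rfl; exact hNc ht
    have hN : N M x0 := N_of hcx hc hNc
    have hlf : l ≠ flp x0 := by
      rintro rfl
      rcases hks.rch g with h | h
      · rcases Relation.ReflTransGen.cases_head h with e | ⟨y, hy, _⟩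
        · exact hk e.symm
        · exact hl2 _ hy
      · rcases Relation.ReflTransGen.cases_tail h with e | ⟨y, _, hy⟩
        · exact hk e.symm
        · exact hp _ hy
    obtain ⟨m, hm⟩ := hl1.nx
    cases m with
    | zero => exact absurd hm.symm hlf
    | succ m =>
      obtain ⟨q, hq⟩ := ht_exists g (ht.child hlf hl1.sm)
      obtain ⟨M1, r1, r2⟩ := lemTwo m q M (flp x0) l g (by rwa [flp_flp]) ht hm hl2 hq hp
      rcases r2 with r2 | ⟨s1, s2, s3, ⟨p, s4⟩, s5⟩
      · exact ⟨M1, r1, r2⟩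
      · have g1 := (Reach.spec g r1).1
        have s5' : ∀ s, Sm M x0 s → Sm M1 x0 s ∧ (N M (flp s) → N M1 (flp s)) ∧
            ∀ t, Next M t s → Next M1 t s := by
          intro s hs
          have := s5 s (by rw [flp_flp]; exact hs.symm)
          rw [flp_flp] at this
          exact ⟨this.1.symm, this.2⟩
        have tp : ∀ j w, Sm M x0 w → Bk M j w → ∃ j' ≤ j, Bk M1 j' w := by
          intro j
          induction j with
          | zero => intro w hw hb; exact ⟨0, le_rfl, (s5' w hw).2.1 hb⟩
          | succ j ihj =>
            rintro w hw ⟨_, v, hv, hbv⟩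
            by_cases hn : N M1 (flp w)
            · exact ⟨0, by omega, hn⟩
            · obtain ⟨j', h1, h2⟩ := ihj v (hw.trans hv.sm.symm) hbv
              exact ⟨j' + 1, by omega, hn, v, (s5' w hw).2.2 v hv, h2⟩
        obtain ⟨j', hj', hbj⟩ := tp n z hz.sm.symm hb
        have hz1 := (s5' x0 (Sm.refl _ _)).2.2 z hz
        obtain ⟨M2, t1, t2⟩ : ∃ M', Reach M1 M' ∧ Lc M1 < Lc M' := by
          rcases Nat.lt_or_eq_of_le hj' with h | h
          · refine ih j' h M1 x0 z c d p g1 s2 ?_ s4.sm.symm (s5' c hc).1 (s5' d hd).1 hcd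
              ((s5' c hc).2.1 hNc) ((s5' d hd).2.1 hNd) hz1 hbj
            rintro rfl
            exact s4.fst_ne g1 rfl
          · subst h
            exact A M1 x0 z c d p g1 s2 s4 (s5' c hc).1 (s5' d hd).1 hcd
              ((s5' c hc).2.1 hNc) ((s5' d hd).2.1 hNd) hz1 hbj
        exact ⟨M2, Relation.ReflTransGen.trans r1 t1, s1.trans_lt t2⟩

theorem main1 {M : Mod} (g : Good M) {x0 c d k : Slot} (ht : Tr M (flp x0))
    (hk : k ≠ flp x0) (hks : Sm M (flp x0) k) (hc : Sm M x0 c) (hd : Sm M x0 d) (hcd : c ≠ d)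
    (hNc : N M (flp c)) (hNd : N M (flp d)) : ∃ M', Reach M M' ∧ Lc M < Lc M' := by
  have hcx : c ≠ x0 := by rintro rfl; exact hNc ht
  rcases hc.symm.rch g with h | h
  · rcases Relation.ReflTransGen.cases_tail h with e | ⟨z, hz1, hz⟩
    · exact absurd e.symm hcx
    · obtain ⟨n, hn⟩ := bk_exists hz1 hNc
      exact main1a n M x0 z c d k g ht hk hks hc hd hcd hNc hNd hz hn
  · have h' := rch_op.2 h
    rcases Relation.ReflTransGen.cases_tail h' with e | ⟨z, hz1, hz⟩
    · exact absurd e.symm hcx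
    · have hNc' : N (op M) (flp c) := by rwa [N, tr_op]
      have hNd' : N (op M) (flp d) := by rwa [N, tr_op]
      obtain ⟨n, hn⟩ := bk_exists hz1 hNc'
      obtain ⟨M', r1, r2⟩ := main1a n (op M) x0 z c d k g.op (tr_op.2 ht) hk (sm_op.2 hks) (sm_op.2 hc)
        (sm_op.2 hd) hcd hNc' hNd' hz hn
      refine ⟨op M', r1.op, ?_⟩
      rwa [Lc_op, ← Lc_op M]

theorem main2 {M : Mod} (g : Good M) {x0 c d : Slot} (ht : Tr M (flp x0))
    (hleaf : ∀ k, Sm M (flp x0) k → k = flp x0) (hc : Sm M x0 c) (hd : Sm M x0 d) (hcd : c ≠ d)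
    (hNc : N M (flp c)) (hNd : N M (flp d)) (hl : ∀ t, ¬ Next M x0 t) :
    ∃ M', Reach M M' ∧ Lc M < Lc M' := by
  have hcx : c ≠ x0 := by rintro rfl; exact hNc ht
  have hN : N M x0 := N_of hcx hc hNc
  obtain ⟨z, hz⟩ : ∃ z, Next M z x0 := by
    rcases hc.rch g with h | h
    · rcases Relation.ReflTransGen.cases_head h with e | ⟨y, hy, _⟩
      · exact absurd e.symm hcx
      · exact absurd hy (hl y)
    · rcases Relation.ReflTransGen.cases_tail h with e | ⟨y, _, hy⟩
      · exact absurd e.symm hcx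
      · exact ⟨y, hy⟩
  have hx : CanRef M x0.1 := by
    refine ⟨hz.memR g, ?_⟩
    intro a ha e
    rcases fst_eq e with e | e
    · exact absurd ⟨a, ha, e, rfl⟩ (hl (M.T a))
    · have n1 : Next M (flp x0) (M.T a) := ⟨a, ha, e, rfl⟩
      have := hleaf _ n1.sm
      exact absurd (by rw [this]) (n1.fst_ne g)
  have hirr : ¬ Sm M x0 (flp x0) := by
    intro e; apply ht.irrefl; rw [flp_flp]; exact e.symm
  have hle := Lc_le g hx ht hN
  have hstep : MStep M (rf M x0.1) := Or.inl ⟨_, hx, rfl⟩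
  have g' := rf_good g hx
  have hzV : (flp x0).1 ∈ M.V := hz.memR g
  have hgood : (∃ c, Sm M x0 c ∧ ¬ Next M c x0 ∧ N M (flp c)) := by
    by_cases e : Next M c x0
    · exact ⟨d, hd, fun e2 => hcd (e.luniq g e2), hNd⟩
    · exact ⟨c, hc, e, hNc⟩
  have hN' : N (rf M x0.1) x0 := lemK g hx ht hN (Or.inl ⟨hN, Or.inr hgood⟩)
  have core' : ∀ w, Sm M x0 w → N M (flp w) → N (rf M x0.1) (flp w) := by
    intro w hw hn
    refine lemK g hx ht hN (Or.inl ⟨hn, Or.inl ?_⟩)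
    intro e
    apply hirr
    rw [← e, flp_flp, e]; exact hw
  by_cases ht' : N (rf M x0.1) (flp x0)
  · refine ⟨_, .single hstep, ?_⟩
    exact Lc_lt g hx ht hN hzV ht ht' (by rwa [flp_flp])
  have ht'' : Tr (rf M x0.1) (flp x0) := not_not.1 ht'
  have hzc : ¬ N M (flp z) := fun h => ht' (lemK g hx ht hN (Or.inr ⟨rfl, z, hz, h⟩))
  have creg : ∀ c, Sm M x0 c → N M (flp c) → Sm (rf M x0.1) x0 c := by
    intro c hc hNc
    refine rf_sm g hx hc (not_pre_at g rfl) ?_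
    rintro ⟨q, hq1, hq2⟩
    rcases fst_eq hq2 with rfl | rfl
    · have := hq1.luniq g hz
      subst this
      exact hzc hNc
    · exact hirr (hc.trans hq1.sm)
  obtain ⟨M1, r1, r2⟩ := main1 g' ht'' (k := z) (by rintro rfl; exact hz.fst_ne g rfl)
    (rf_N1 g hx hz rfl).sm (creg c hc hNc) (creg d hd hNd) hcd (core' c hc hNc) (core' d hd hNd)
  exact ⟨M1, Relation.ReflTransGen.head hstep r1, hle.trans_lt r2⟩

/-- maximal models -/
def Mx (M : Mod) : Prop := ∀ M', Reach M M' → Lc M' ≤ Lc M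

theorem exists_mx {M : Mod} (g : Good M) : ∃ M', Reach M M' ∧ Mx M' := by
  have : ∀ n (M : Mod), Good M → M.V.card - Lc M = n → ∃ M', Reach M M' ∧ Mx M' := by
    intro n
    induction n using Nat.strong_induction_on with
    | _ n ih =>
      intro M g hn
      by_cases h : Mx M
      · exact ⟨M, .refl, h⟩
      · unfold Mx at h
        push Not at h
        obtain ⟨M1, r1, r2⟩ := h
        obtain ⟨g1, _, e⟩ := Reach.spec g r1
        have h1 := Lc_le_card M1
        rw [e] at h1
        obtain ⟨M2, t1, t2⟩ := ih (M1.V.card - Lc M1) (by rw [e]; omega) M1 g1 rfl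
        exact ⟨M2, Relation.ReflTransGen.trans r1 t1, t2⟩
  exact this _ M g rfl

theorem E1 {M : Mod} (g : Good M) (hm : Mx M) {x0 c d : Slot} (ht : Tr M (flp x0))
    (hc : Sm M x0 c) (hd : Sm M x0 d) (hcd : c ≠ d)
    (hNc : N M (flp c)) (hNd : N M (flp d)) :
    (∀ k, Sm M (flp x0) k → k = flp x0) ∧ (∃ t, Next M x0 t) ∧ (∃ t, Next M t x0) := by
  have hleaf : ∀ k, Sm M (flp x0) k → k = flp x0 := by
    intro k hk
    by_contra hc2
    obtain ⟨M', r1, r2⟩ := main1 g ht hc2 hk hc hd hcd hNc hNd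
    have := hm M' r1
    omega
  refine ⟨hleaf, ?_, ?_⟩
  · by_contra h
    push Not at h
    obtain ⟨M', r1, r2⟩ := main2 g ht hleaf hc hd hcd hNc hNd h
    have := hm M' r1
    omega
  · by_contra h
    push Not at h
    have hNc' : N (op M) (flp c) := by rwa [N, tr_op]
    have hNd' : N (op M) (flp d) := by rwa [N, tr_op]
    obtain ⟨M', r1, r2⟩ := main2 g.op (tr_op.2 ht) (fun k hk => hleaf k (sm_op.1 hk)) (sm_op.2 hc)
      (sm_op.2 hd) hcd hNc' hNd' (fun t ht => h t (next_op.1 ht))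
    have := hm (op M') r1.op
    rw [Lc_op] at this r2
    omega

end

section

open Classical in
noncomputable def inc (M : Mod) (W : Finset (Set Slot)) : Finset ℕ :=
  M.V.filter fun x => ∃ b, cls M (x, b) ∈ W

theorem mem_inc {M : Mod} {W : Finset (Set Slot)} {x : ℕ} :
    x ∈ inc M W ↔ x ∈ M.V ∧ ∃ b, cls M (x, b) ∈ W := by
  classical
  simp [inc]

theorem mem_nodes {M : Mod} {c : Set Slot} : c ∈ nodes M ↔ ∃ s : Slot, s.1 ∈ M.V ∧ cls M s = c := by
  classical
  unfold nodes
  rw [Finset.mem_image]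
  simp only [mem_slots]

theorem crossing {M : Mod} (g : Good0 M) {W : Finset (Set Slot)} (hW : W ⊂ nodes M)
    (hne : W.Nonempty) : ∃ s : Slot, s.1 ∈ M.V ∧ cls M s ∈ W ∧ cls M (flp s) ∉ W := by
  by_contra hcon
  push Not at hcon
  have key : ∀ s : Slot, s.1 ∈ M.V → (cls M s ∈ W ↔ cls M (s.1, true) ∈ W) := by
    intro s hs
    rcases fst_eq (s := s) (t := (s.1, true)) rfl with e | e
    · rw [← e]
    · constructor
      · intro h
        have := hcon s hs h
        have e2 : flp s = (s.1, true) := by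
          conv_lhs => rw [e]
          exact flp_flp _
        rwa [e2] at this
      · intro h
        have := hcon (s.1, true) hs h
        rwa [← e] at this
  obtain ⟨c, hc⟩ := hne
  obtain ⟨s, hs, rfl⟩ := mem_nodes.1 (hW.1 hc)
  apply hW.2
  intro c' hc'
  obtain ⟨s', hs', rfl⟩ := mem_nodes.1 hc'
  rw [key s' hs']
  refine g.conn (fun x => cls M (x, true) ∈ W) ?_ s.1 hs s'.1 hs' ((key s hs).1 hc)
  intro a ha
  show cls M ((M.S a).1, true) ∈ W ↔ cls M ((M.T a).1, true) ∈ W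
  rw [← key _ (g.sv a ha), ← key _ (g.tv a ha)]
  have : cls M (M.S a) = cls M (M.T a) := cls_eq.2 (Next.sm ⟨a, ha, rfl, rfl⟩)
  rw [this]

theorem hall_aux {M : Mod} (g : Good0 M) : ∀ (n : ℕ) (W : Finset (Set Slot)), W.card = n →
    W ⊂ nodes M → W.card ≤ (inc M W).card := by
  classical
  intro n
  induction n with
  | zero => intro W h _; omega
  | succ n ih =>
    intro W hn hW
    have hne : W.Nonempty := Finset.card_pos.1 (by omega)
    obtain ⟨s, hs, h1, h2⟩ := crossing g hW hne
    have hc : (W.erase (cls M s)).card = n := by rw [Finset.card_erase_of_mem h1]; omega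
    have h3 := ih (W.erase (cls M s)) hc (lt_of_le_of_lt (Finset.erase_subset _ _) hW)
    have h4 : inc M (W.erase (cls M s)) ⊂ inc M W := by
      rw [Finset.ssubset_iff_of_subset]
      · refine ⟨s.1, mem_inc.2 ⟨hs, s.2, h1⟩, ?_⟩
        rw [mem_inc]
        rintro ⟨_, b, hb⟩
        rw [Finset.mem_erase] at hb
        rcases fst_eq (s := (s.1, b)) (t := s) rfl with e | e
        · rw [e] at hb; exact hb.1 rfl
        · rw [e] at hb; exact h2 hb.2
      · intro x hx
        obtain ⟨hx1, b, hb⟩ := mem_inc.1 hx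
        exact mem_inc.2 ⟨hx1, b, Finset.mem_of_mem_erase hb⟩
    have := Finset.card_lt_card h4
    omega

theorem orient {M : Mod} (g : Good0 M) (hcard : (nodes M).card = M.V.card) :
    ∃ Tl : Slot → Prop, (∀ s, s.1 ∈ M.V → ∃ t, Sm M s t ∧ Tl t) ∧
      (∀ s t, Tl s → Tl t → Sm M s t → s = t) ∧
      (∀ s, s.1 ∈ M.V → (Tl s ↔ ¬ Tl (flp s))) ∧ (∀ s, Tl s → s.1 ∈ M.V) := by
  classical
  let t : {c // c ∈ nodes M} → Finset ℕ := fun c => inc M {c.1}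
  have hall : ∀ s : Finset {c // c ∈ nodes M}, s.card ≤ (s.biUnion t).card := by
    intro s
    have e1 : (s.image Subtype.val).card = s.card :=
      Finset.card_image_of_injective _ Subtype.val_injective
    have e2 : s.biUnion t = inc M (s.image Subtype.val) := by
      ext x
      simp only [Finset.mem_biUnion, t, mem_inc, Finset.mem_singleton, Finset.mem_image]
      constructor
      · rintro ⟨c, hc, hx, b, hb⟩; exact ⟨hx, b, c, hc, hb.symm⟩
      · rintro ⟨hx, b, c, hc, hb⟩; exact ⟨c, hc, hx, b, hb.symm⟩
    rw [e2, ← e1]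
    have hsub : s.image Subtype.val ⊆ nodes M := by
      intro c hc
      rw [Finset.mem_image] at hc
      obtain ⟨d, _, rfl⟩ := hc
      exact d.2
    by_cases h : s.image Subtype.val = nodes M
    · rw [h, hcard]
      apply Finset.card_le_card
      intro x hx
      exact mem_inc.2 ⟨hx, true, mem_nodes.2 ⟨(x, true), hx, rfl⟩⟩
    · exact hall_aux g _ _ rfl (lt_of_le_of_ne hsub h)
  obtain ⟨f, hf1, hf2⟩ := (Finset.all_card_le_biUnion_card_iff_exists_injective t).1 hall
  have hf3 : ∀ c, f c ∈ M.V ∧ ∃ b, cls M (f c, b) = c.1 := by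
    intro c
    have := mem_inc.1 (hf2 c)
    simpa using this
  choose hf4 b hb using hf3
  have hsurj : ∀ x ∈ M.V, ∃ c, f c = x := by
    have e : Finset.univ.image f = M.V := by
      apply Finset.eq_of_subset_of_card_le
      · intro x hx
        rw [Finset.mem_image] at hx
        obtain ⟨c, _, rfl⟩ := hx
        exact hf4 c
      · rw [Finset.card_image_of_injective _ hf1, Finset.card_univ, Fintype.card_coe, hcard]
    intro x hx
    rw [← e, Finset.mem_image] at hx
    obtain ⟨c, _, h⟩ := hx
    exact ⟨c, h⟩
  refine ⟨fun s => ∃ c, (f c, b c) = s, ?_, ?_, ?_, ?_⟩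
  · intro s hs
    refine ⟨(f ⟨cls M s, mem_nodes.2 ⟨s, hs, rfl⟩⟩, b ⟨cls M s, mem_nodes.2 ⟨s, hs, rfl⟩⟩), ?_, _, rfl⟩
    rw [← cls_eq, hb]
  · rintro s t ⟨c, rfl⟩ ⟨d, rfl⟩ h
    rw [← cls_eq, hb, hb] at h
    rw [Subtype.ext h]
  · intro s hs
    constructor
    · rintro ⟨c, rfl⟩ ⟨d, hd⟩
      have := hf1 (congrArg Prod.fst hd)
      subst this
      exact flp_ne _ hd.symm
    · intro h
      obtain ⟨c, hc⟩ := hsurj s.1 hs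
      refine ⟨c, ?_⟩
      rcases fst_eq (s := (f c, b c)) (t := s) hc with e | e
      · exact e
      · exact absurd ⟨c, e⟩ h
  · rintro s ⟨c, rfl⟩; exact hf4 c

/-- core slots -/
def Co (M : Mod) (s : Slot) : Prop := s.1 ∈ M.V ∧ N M s ∧ N M (flp s)

theorem Co.flp {M : Mod} {s : Slot} (h : Co M s) : Co M (flp s) :=
  ⟨h.1, h.2.2, by rw [flp_flp]; exact h.2.1⟩

theorem head_N {M : Mod} {Tl : Slot → Prop} (g : Good M)
    (h1 : ∀ s, s.1 ∈ M.V → ∃ t, Sm M s t ∧ Tl t)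
    (h3 : ∀ s, s.1 ∈ M.V → (Tl s ↔ ¬ Tl (flp s))) {s : Slot} (hs : s.1 ∈ M.V) (ht : ¬ Tl s) :
    N M s := by
  refine N_coind (fun s => s.1 ∈ M.V ∧ ¬ Tl s) ?_ ⟨hs, ht⟩
  rintro s ⟨hs, ht⟩
  obtain ⟨k, hk1, hk2⟩ := h1 s hs
  have hkV : k.1 ∈ M.V := (hk1.mem g).1 hs
  exact ⟨k, by rintro rfl; exact ht hk2, hk1, hkV, (h3 k hkV).1 hk2⟩

theorem flp_N {M : Mod} (g : Good M) (hcard : (nodes M).card = M.V.card) {s : Slot}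
    (hs : s.1 ∈ M.V) (ht : Tr M s) : N M (flp s) := by
  obtain ⟨Tl, h1, h2, h3, h4⟩ := orient g hcard
  have : Tl s := by
    by_contra h
    exact head_N g h1 h3 hs h ht
  exact head_N (s := flp s) g h1 h3 hs ((h3 s hs).1 this)

theorem E2 {M : Mod} (g : Good M) (hcard : (nodes M).card = M.V.card) (hm : Mx M) {t : Slot}
    (hV : t.1 ∈ M.V) (ht : Tr M t) :
    ∃ c d, Sm M (flp t) c ∧ Sm M (flp t) d ∧ c ≠ d ∧ N M (flp c) ∧ N M (flp d) := by
  classical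
  let X := {s : Slot // s ∈ slots M ∧ Tr M s}
  let r : X → X → Prop := fun c t => Relation.TransGen (R M) t.1 c.1
  have : Finite X := Set.Finite.subset (Finset.finite_toSet (slots M)) (fun s hs => hs.1)
  have : IsTrans X r := ⟨fun a b c h1 h2 => Relation.TransGen.trans h2 h1⟩
  have : Std.Irrefl r := ⟨fun a h => a.2.2.trans_irrefl h⟩
  have wf : WellFounded r := Finite.wellFounded_of_trans_of_irrefl r
  suffices H : ∀ x : X, ∃ c d, Sm M (flp x.1) c ∧ Sm M (flp x.1) d ∧ c ≠ d ∧ N M (flp c) ∧ N M (flp d) from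
    H ⟨t, mem_slots.2 hV, ht⟩
  intro x
  induction x using wf.induction with
  | _ x ih =>
    obtain ⟨t, htV, ht⟩ := x
    have htV' := mem_slots.1 htV
    have hN := flp_N g hcard htV' ht
    obtain ⟨c, hc1, hc2, hc3⟩ := N_iff.1 hN
    by_contra hcon
    push Not at hcon
    have hu : ∀ d, Sm M (flp t) d → c ≠ d → ¬ N M (flp d) := fun d h1 h2 h3 => h3 (hcon c d hc2 h1 h2 hc3)
    have hTc : Tr M c := by
      by_contra hn
      obtain ⟨k, k1, k2, k3⟩ := N_iff.1 hn
      exact hu k (hc2.trans k2) k1.symm k3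
    have hR : R M t c := ⟨hc2.symm, hc1.symm⟩
    have hcV : c.1 ∈ M.V := (hc2.mem g).1 htV'
    obtain ⟨e, d, h1, h2, h3, h4, h5⟩ := ih ⟨c, mem_slots.2 hcV, hTc⟩ (.single hR)
    have := (E1 g hm (x0 := flp c) (by rwa [flp_flp]) h1 h2 h3 h4 h5).1 (flp t) (by rw [flp_flp]; exact hc2.symm)
    rw [flp_flp] at this
    exact hc1 this.symm

/-- the final form of a model -/
structure Fin1 (M : Mod) : Prop where
  g : Good M
  leaf : ∀ t : Slot, t.1 ∈ M.V → Tr M t → (∀ k, Sm M t k → k = t) ∧ (∃ u, Next M (flp t) u) ∧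
    (∃ u, Next M u (flp t))
  deg : ∀ u v w, Co M u → Co M v → Co M w → Sm M u v → Sm M u w → u ≠ v → u ≠ w → v = w
  ex : ∀ s, s.1 ∈ M.V → N M s → ∃ u v, u ≠ v ∧ Co M u ∧ Co M v ∧ Sm M s u ∧ Sm M s v

theorem fin1 {M : Mod} (g : Good M) (hcard : (nodes M).card = M.V.card) (hm : Mx M) : Fin1 M := by
  classical
  have leaf : ∀ t : Slot, t.1 ∈ M.V → Tr M t → (∀ k, Sm M t k → k = t) ∧ (∃ u, Next M (flp t) u) ∧
    (∃ u, Next M u (flp t)) := by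
    intro t hV ht
    obtain ⟨c, d, h1, h2, h3, h4, h5⟩ := E2 g hcard hm hV ht
    have := E1 g hm (x0 := flp t) (by rwa [flp_flp]) h1 h2 h3 h4 h5
    rwa [flp_flp] at this
  have big : ∀ s k, s.1 ∈ M.V → N M s → Sm M s k → N M k := by
    intro s k hs hN h ht
    have := (leaf k ((h.mem g).1 hs) ht).1 s h.symm
    subst this
    exact hN ht
  have ex : ∀ s, s.1 ∈ M.V → N M s → ∃ u v, u ≠ v ∧ Co M u ∧ Co M v ∧ Sm M s u ∧ Sm M s v := by
    intro s hs hN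
    obtain ⟨u, _, u2, u3⟩ := N_iff.1 hN
    have huN := big s u hs hN u2
    have huV := (u2.mem g).1 hs
    obtain ⟨v, v1, v2, v3⟩ := N_iff.1 huN
    exact ⟨u, v, v1.symm, ⟨huV, huN, u3⟩, ⟨(v2.mem g).1 huV, big u v huV huN v2, v3⟩, u2, u2.trans v2⟩
  refine ⟨g, leaf, ?_, ex⟩
  obtain ⟨Tl, h1, h2, h3, h4⟩ := orient g hcard
  let CT := (slots M).filter fun s => Co M s ∧ Tl s
  let CH := (slots M).filter fun s => Co M s ∧ ¬ Tl s
  have mT : ∀ s, s ∈ CT ↔ Co M s ∧ Tl s := by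
    intro s
    simp only [CT, Finset.mem_filter, mem_slots]
    exact ⟨fun h => h.2, fun h => ⟨h.1.1, h⟩⟩
  have mH : ∀ s, s ∈ CH ↔ Co M s ∧ ¬ Tl s := by
    intro s
    simp only [CH, Finset.mem_filter, mem_slots]
    exact ⟨fun h => h.2, fun h => ⟨h.1.1, h⟩⟩
  have hcd : CH.card ≤ CT.card := by
    apply Finset.card_le_card_of_injOn flp
    · intro s hs
      rw [Finset.mem_coe, mH] at hs
      rw [Finset.mem_coe, mT]
      refine ⟨hs.1.flp, ?_⟩
      rw [h3 _ hs.1.flp.1, flp_flp]; exact hs.2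
    · intro s _ t _ h; exact flp_inj h
  have hch : ∀ u, ∃ v, u ∈ CT → v ∈ CH ∧ Sm M u v := by
    intro u
    by_cases hu : u ∈ CT
    · obtain ⟨hu1, hu2⟩ := (mT u).1 hu
      obtain ⟨v, w, hvw, hv, hw, sv, sw⟩ := ex u hu1.1 hu1.2.1
      by_cases e : v = u
      · refine ⟨w, fun _ => ⟨(mH w).2 ⟨hw, fun tw => ?_⟩, sw⟩⟩
        exact hvw (e.trans (h2 u w hu2 tw sw))
      · refine ⟨v, fun _ => ⟨(mH v).2 ⟨hv, fun tv => ?_⟩, sv⟩⟩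
        exact e (h2 u v hu2 tv sv).symm
    · exact ⟨u, fun h => absurd h hu⟩
  choose ch hch using hch
  have himg : CT.image ch = CH := by
    apply Finset.eq_of_subset_of_card_le
    · intro v hv
      rw [Finset.mem_image] at hv
      obtain ⟨u, hu, rfl⟩ := hv
      exact (hch u hu).1
    · rw [Finset.card_image_of_injOn]
      · exact hcd
      · intro u hu v hv e
        refine h2 u v ((mT u).1 hu).2 ((mT v).1 hv).2 ?_
        exact (hch u hu).2.trans (e ▸ (hch v hv).2.symm)
  have hH : ∀ v w, Co M v → Co M w → ¬ Tl v → ¬ Tl w → Sm M v w → v = w := by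
    intro v w hv hw tv tw hs
    have hv' := (mH v).2 ⟨hv, tv⟩
    have hw' := (mH w).2 ⟨hw, tw⟩
    rw [← himg, Finset.mem_image] at hv' hw'
    obtain ⟨u, hu, rfl⟩ := hv'
    obtain ⟨u', hu', rfl⟩ := hw'
    have := h2 u u' ((mT u).1 hu).2 ((mT u').1 hu').2
      ((hch u hu).2.trans (hs.trans (hch u' hu').2.symm))
    rw [this]
  intro u v w hu hv hw suv suw huv huw
  by_cases tu : Tl u
  · refine hH v w hv hw (fun tv => huv (h2 u v tu tv suv)) (fun tw => huw (h2 u w tu tw suw)) (suv.symm.trans suw)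
  · have tv : Tl v := by by_contra tv; exact huv (hH u v hu hv tu tv suv)
    have tw : Tl w := by by_contra tw; exact huw (hH u w hu hw tu tw suw)
    exact h2 v w tv tw (suv.symm.trans suw)

theorem card_even_of {X : Finset Slot} (φ : Slot → Slot) (h1 : ∀ u ∈ X, φ u ∈ X)
    (h2 : ∀ u ∈ X, φ u ≠ u) (h3 : ∀ u ∈ X, φ (φ u) = u) : Even X.card := by
  have : ∑ x ∈ X, (1 : ZMod 2) = 0 :=
    Finset.sum_involution (fun a _ => φ a) (fun _ _ => by decide) (fun a ha _ => h2 a ha)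
      (fun a ha => h1 a ha) (fun a ha => h3 a ha)
  rw [Finset.sum_const, nsmul_eq_mul, mul_one] at this
  exact (ZMod.natCast_eq_zero_iff_even).1 this

theorem PAR {M : Mod} (F : Fin1 M) {P : ℕ → Prop} {f l : Slot} (hf : Co M f) (hl : Co M l)
    (hfl : f ≠ l) (hs : Sm M f l)
    (hP : ∀ u v, Sm M u v → ¬ Sm M u f → (P u.1 ↔ P v.1)) : P f.1 → P l.1 := by
  classical
  intro pf
  by_contra pl
  let X := (slots M).filter fun u => Co M u ∧ P u.1
  have mX : ∀ u, u ∈ X ↔ Co M u ∧ P u.1 := by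
    intro s
    simp only [X, Finset.mem_filter, mem_slots]
    exact ⟨fun h => h.2, fun h => ⟨h.1.1, h⟩⟩
  have e1 : Even X.card := by
    apply card_even_of flp
    · intro u hu
      rw [mX] at *
      exact ⟨hu.1.flp, hu.2⟩
    · intro u _; exact flp_ne u
    · intro u _; exact flp_flp u
  have hpr : ∀ u, ∃ v, Co M u → Co M v ∧ v ≠ u ∧ Sm M u v := by
    intro u
    by_cases hu : Co M u
    · obtain ⟨v, w, hvw, hv, hw, sv, sw⟩ := F.ex u hu.1 hu.2.1
      by_cases e : v = u
      · exact ⟨w, fun _ => ⟨hw, fun e2 => hvw (e.trans e2.symm), sw⟩⟩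
      · exact ⟨v, fun _ => ⟨hv, e, sv⟩⟩
    · exact ⟨u, fun h => absurd h hu⟩
  choose pr hpr using hpr
  have hfX : f ∈ X := (mX f).2 ⟨hf, pf⟩
  have e2 : Even (X.erase f).card := by
    apply card_even_of pr
    · intro u hu
      rw [Finset.mem_erase, mX] at hu
      obtain ⟨huf, hu, pu⟩ := hu
      obtain ⟨a1, a2, a3⟩ := hpr u hu
      have hn : ¬ Sm M u f := by
        intro h
        have : u = l := F.deg f u l hf hu hl h.symm hs huf.symm hfl
        exact pl (this ▸ pu)
      rw [Finset.mem_erase, mX]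
      exact ⟨fun e => hn (e ▸ a3), a1, (hP u _ a3 hn).1 pu⟩
    · intro u hu
      rw [Finset.mem_erase, mX] at hu
      exact (hpr u hu.2.1).2.1
    · intro u hu
      rw [Finset.mem_erase, mX] at hu
      obtain ⟨a1, a2, a3⟩ := hpr u hu.2.1
      obtain ⟨b1, b2, b3⟩ := hpr _ a1
      exact F.deg (pr u) _ u a1 b1 hu.2.1 b3 a3.symm b2.symm a2
  rw [Finset.card_erase_of_mem hfX] at e2
  have : 0 < X.card := Finset.card_pos.2 ⟨f, hfX⟩
  obtain ⟨i, hi⟩ := e1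
  obtain ⟨j, hj⟩ := e2
  omega

theorem PAR_iff {M : Mod} (F : Fin1 M) {P : ℕ → Prop} {f l : Slot} (hf : Co M f) (hl : Co M l)
    (hfl : f ≠ l) (hs : Sm M f l)
    (hP : ∀ u v, Sm M u v → ¬ Sm M u f → (P u.1 ↔ P v.1)) : P f.1 ↔ P l.1 :=
  ⟨PAR F hf hl hfl hs hP, PAR F hl hf hfl.symm hs.symm
    (fun u v h1 h2 => hP u v h1 (fun h => h2 (h.trans hs)))⟩

/-- invariance along a node none of whose arrows is removed -/
theorem inv_node {M : Mod} {P : ℕ → Prop} {D : Finset ℕ} {f : Slot}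
    (hP : ∀ b ∈ M.A, b ∉ D → (P (M.S b).1 ↔ P (M.T b).1)) (hD : ∀ b ∈ D, Sm M (M.S b) f) :
    ∀ u v, Sm M u v → ¬ Sm M u f → (P u.1 ↔ P v.1) := by
  intro u v h hn
  have := Sm.induct (M := M) (fun w => Sm M u w ∧ (P u.1 ↔ P w.1)) ?_ h
  · exact (this.1 ⟨Sm.refl _ _, Iff.rfl⟩).2
  · rintro s t ⟨b, hb, rfl, rfl⟩
    have hsm : Sm M (M.S b) (M.T b) := Next.sm ⟨b, hb, rfl, rfl⟩
    constructor
    · rintro ⟨h1, h2⟩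
      refine ⟨h1.trans hsm, h2.trans (hP b hb fun hbD => hn (h1.trans (hD b hbD)))⟩
    · rintro ⟨h1, h2⟩
      have h1' := h1.trans hsm.symm
      refine ⟨h1', h2.trans (hP b hb fun hbD => hn (h1'.trans (hD b hbD))).symm⟩

theorem conn_del {M : Mod} (g : Good M) (D : Finset ℕ)
    (h : ∀ P : ℕ → Prop, (∀ b ∈ M.A, b ∉ D → (P (M.S b).1 ↔ P (M.T b).1)) →
      ∀ b ∈ D, b ∈ M.A → (P (M.S b).1 ↔ P (M.T b).1)) : Connected (deleteArrows (toQ M) D) := by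
  apply connected_of
  intro P hP
  have hP' : ∀ b ∈ M.A, b ∉ D → (P (M.S b).1 ↔ P (M.T b).1) := by
    intro b hb hD
    exact hP b (Finset.mem_sdiff.2 ⟨hb, hD⟩)
  refine g.conn P ?_
  intro a ha
  by_cases hD : a ∈ D
  · exact h P hP' a hD ha
  · exact hP' a ha hD

theorem first_or {M : Mod} (g : Good0 M) {s : Slot} : (∃ f, Rch M f s ∧ ∀ t, ¬ Next M t f) ∨
    (∃ u, Next M s u ∧ Rch M u s) := by
  rcases exists_last g.op s with ⟨l, h1, h2⟩ | ⟨u, h1, h2⟩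
  · exact Or.inl ⟨l, rch_op.1 h1, fun t h => h2 t (next_op.2 h)⟩
  · exact Or.inr ⟨u, next_op.1 h1, rch_op.1 h2⟩

theorem no_branch {M : Mod} (F : Fin1 M) (a : ℕ) : ¬ BranchArrow (toQ M) a := by
  rintro ⟨ha, hc⟩
  have ha : a ∈ M.A := ha
  apply hc
  have g := F.g
  apply conn_del g
  intro P hP b hb _
  rw [Finset.mem_singleton] at hb
  subst hb
  have hP' : ∀ c ∈ M.A, c ≠ b → (P (M.S c).1 ↔ P (M.T c).1) := fun c hc h =>
    hP c hc (by simpa using h)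
  have hst : Next M (M.S b) (M.T b) := ⟨b, ha, rfl, rfl⟩
  have c1 : ∀ u, Rch M (M.T b) u → (P (M.T b).1 ↔ P u.1) := by
    intro u hu
    induction hu with
    | refl => exact Iff.rfl
    | tail _ h ih =>
      obtain ⟨c, hc, rfl, rfl⟩ := h
      by_cases e : c = b
      · subst e; exact Iff.rfl
      · exact ih.trans (hP' c hc e)
  have c2 : ∀ u, Rch M u (M.S b) → (P u.1 ↔ P (M.S b).1) := by
    intro u hu
    induction hu using Relation.ReflTransGen.head_induction_on with
    | refl => exact Iff.rfl
    | head h _ ih =>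
      obtain ⟨c, hc, rfl, rfl⟩ := h
      by_cases e : c = b
      · subst e; exact Iff.rfl
      · exact (hP' c hc e).trans ih
  by_cases hcy : Rch M (M.T b) (M.S b)
  · exact (c1 _ hcy).symm
  obtain ⟨l, hl1, hl2⟩ : ∃ l, Rch M (M.T b) l ∧ ∀ t, ¬ Next M l t := by
    rcases exists_last g.toGood0 (M.T b) with h | ⟨u, hu1, hu2⟩
    · exact h
    · have := hu1.luniq g hst
      subst this
      exact absurd hu2 hcy
  obtain ⟨f, hf1, hf2⟩ : ∃ f, Rch M f (M.S b) ∧ ∀ t, ¬ Next M t f := by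
    rcases first_or g.toGood0 (s := M.S b) with h | ⟨u, hu1, hu2⟩
    · exact h
    · have := hu1.runiq g hst
      subst this
      exact absurd hu2 hcy
  have hfs : Sm M f (M.S b) := Rch.sm hf1
  have htl : Sm M (M.T b) l := Rch.sm hl1
  have hsV := g.sv b ha
  have hfV : f.1 ∈ M.V := (hfs.mem g).2 hsV
  have hlV : l.1 ∈ M.V := (htl.mem g).1 (g.tv b ha)
  have hne : M.S b ≠ M.T b := fun e => g.noloop b ha (congrArg Prod.fst e)
  have co : ∀ x : Slot, x.1 ∈ M.V → Sm M x (M.S b) → ((∀ t, ¬ Next M x t) ∨ ∀ t, ¬ Next M t x) → Co M x := by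
    intro x hx hs hnn
    refine ⟨hx, ?_, ?_⟩
    · intro ht
      have h1 := (F.leaf x hx ht).1 _ hs
      have h2 := (F.leaf x hx ht).1 _ (hs.trans hst.sm)
      exact hne (h1.trans h2.symm)
    · intro ht
      obtain ⟨_, ⟨u, hu⟩, ⟨v, hv⟩⟩ := F.leaf (flp x) hx ht
      rw [flp_flp] at hu hv
      rcases hnn with h | h
      · exact h _ hu
      · exact h _ hv
  have hls : Sm M l (M.S b) := htl.symm.trans hst.sm.symm
  have hfl : f ≠ l := by
    rintro rfl
    exact hcy (Relation.ReflTransGen.trans hl1 hf1)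
  have := PAR_iff F (P := P) (co f hfV hfs (Or.inr hf2)) (co l hlV hls (Or.inl hl2)) hfl (hfs.trans hls.symm)
    (inv_node hP (by
      intro c hc
      rw [Finset.mem_singleton] at hc
      subst hc
      exact hfs.symm))
  exact ((c2 f hf1).symm.trans this).trans (c1 l hl1).symm

theorem tri_aux {M : Mod} (F : Fin1 M) {a0 a1 a2 : ℕ} (h0 : a0 ∈ M.A) (h1 : a1 ∈ M.A) (h2 : a2 ∈ M.A)
    (n01 : a0 ≠ a1) (n02 : a0 ≠ a2)
    (r01 : M.S a0 = M.T a1) (r12 : M.S a1 = M.T a2) (r20 : M.S a2 = M.T a0)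
    (c0 : Co M (M.S a0)) (c1 : Co M (M.S a1)) : Connected (deleteArrows (toQ M) {a1, a2}) := by
  apply conn_del F.g
  intro P hP b hb hbA
  have s10 : Sm M (M.S a1) (M.S a0) := Next.sm ⟨a1, h1, rfl, r01.symm⟩
  have s21 : Sm M (M.S a2) (M.S a1) := Next.sm ⟨a2, h2, rfl, r12.symm⟩
  have k : P (M.S a0).1 ↔ P (M.S a1).1 := by
    refine PAR_iff F c0 c1 (fun e => n01 (F.g.sinj _ h0 _ h1 e)) s10.symm (inv_node hP ?_)
    intro c hc
    rw [Finset.mem_insert, Finset.mem_singleton] at hc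
    rcases hc with rfl | rfl
    · exact s10
    · exact s21.trans s10
  have k0 : P (M.S a0).1 ↔ P (M.S a2).1 := by
    rw [r20]
    exact hP a0 h0 (by simp [n01, n02])
  rw [Finset.mem_insert, Finset.mem_singleton] at hb
  rcases hb with rfl | rfl
  · rw [← r01]; exact k.symm
  · rw [← r12]; exact k0.symm.trans k

theorem no_tri {M : Mod} (F : Fin1 M) (O : Finset ℕ) : ¬ BranchTriangle (toQ M) O := by
  rintro ⟨⟨a0, a1, a2, rfl, ⟨h0, h1, h2, n01, n12, n02, _⟩, r01, r12, r20⟩, hS⟩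
  have g := F.g
  have h0 : a0 ∈ M.A := h0
  have h1 : a1 ∈ M.A := h1
  have h2 : a2 ∈ M.A := h2
  have r01 := (mem_rel.1 r01).2.2
  have r12 := (mem_rel.1 r12).2.2
  have r20 := (mem_rel.1 r20).2.2
  have x10 : Next M (M.S a1) (M.S a0) := ⟨a1, h1, rfl, r01.symm⟩
  have x21 : Next M (M.S a2) (M.S a1) := ⟨a2, h2, rfl, r12.symm⟩
  have x02 : Next M (M.S a0) (M.S a2) := ⟨a0, h0, rfl, r20.symm⟩
  have hnode : ∀ w, Sm M (M.S a0) w → w = M.S a0 ∨ w = M.S a1 ∨ w = M.S a2 := by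
    intro w hw
    refine (Sm.induct (M := M) (fun w => w = M.S a0 ∨ w = M.S a1 ∨ w = M.S a2) ?_ hw).1 (Or.inl rfl)
    intro s t h
    constructor
    · rintro (rfl | rfl | rfl)
      · exact Or.inr (Or.inr (h.runiq g x02))
      · exact Or.inl (h.runiq g x10)
      · exact Or.inr (Or.inl (h.runiq g x21))
    · rintro (rfl | rfl | rfl)
      · exact Or.inr (Or.inl (h.luniq g x10))
      · exact Or.inr (Or.inr (h.luniq g x21))
      · exact Or.inl (h.luniq g x02)
  have hN : N M (M.S a0) := by
    intro ht
    have := (F.leaf _ (g.sv a0 h0) ht).1 _ x10.sm.symm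
    exact n01 (g.sinj _ h1 _ h0 this).symm
  obtain ⟨u, v, huv, cu, cv, su, sv⟩ := F.ex _ (g.sv a0 h0) hN
  have A : ¬ (Co M (M.S a0) ∧ Co M (M.S a1)) := fun ⟨p, q⟩ =>
    hS {a1, a2} (by intro x; simp; tauto) (Finset.card_pair n12)
      (tri_aux F h0 h1 h2 n01 n02 r01 r12 r20 p q)
  have B : ¬ (Co M (M.S a1) ∧ Co M (M.S a2)) := fun ⟨p, q⟩ =>
    hS {a2, a0} (by intro x; simp; tauto) (Finset.card_pair n02.symm)
      (tri_aux F h1 h2 h0 n12 n01.symm r12 r20 r01 p q)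
  have C : ¬ (Co M (M.S a2) ∧ Co M (M.S a0)) := fun ⟨p, q⟩ =>
    hS {a0, a1} (by intro x; simp; tauto) (Finset.card_pair n01)
      (tri_aux F h2 h0 h1 n02.symm n12.symm r20 r01 r12 p q)
  rcases hnode u su with rfl | rfl | rfl <;> rcases hnode v sv with rfl | rfl | rfl <;> tauto

theorem final_of {M : Mod} (g : Good M) (hcard : (nodes M).card = M.V.card) :
    ∃ Q', RefEquiv (toQ M) Q' ∧ IsGentle Q' ∧ (∀ a, ¬ BranchArrow Q' a) ∧ ∀ O, ¬ BranchTriangle Q' O := by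
  obtain ⟨M', r, hm⟩ := exists_mx g
  obtain ⟨g', h1, h2⟩ := Reach.spec g r
  have hn := Reach.nodes g r
  have F := fin1 g' (by rw [hn, hcard, h2]) hm
  exact ⟨toQ M', h1, g'.gentle, no_branch F, no_tri F⟩

end

section

/-- predicate on slots constant along boundary components -/
structure Inv (M : Mod) (Z : Slot → Prop) : Prop where
  i : ∀ v w, Next M v w → (Z v ↔ Z (flp w))
  ii : ∀ f l, f.1 ∈ M.V → Sm M f l → (∀ t, ¬ Next M t f) → (∀ t, ¬ Next M l t) →
    (Z l ↔ Z (flp f))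

theorem Inv.xor {M : Mod} {Z Y : Slot → Prop} (h : Inv M Z) (h2 : Inv M Y) :
    Inv M (fun u => ¬ (Z u ↔ Y u)) where
  i := fun v w hn => by rw [h.i v w hn, h2.i v w hn]
  ii := fun f l a b c d => by rw [h.ii f l a b c d, h2.ii f l a b c d]

theorem Inv.propC {M : Mod} (g : Good0 M) {Z : Slot → Prop} (h : Inv M Z) {u : Slot}
    (hu : u.1 ∈ M.V) (hb : ¬ (Z u ↔ Z (flp u))) :
    ∃ k, k ≠ u ∧ Sm M u k ∧ ¬ (Z k ↔ Z (flp k)) := by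
  by_contra hc
  have hk : ∀ k, k ≠ u → Sm M u k → (Z k ↔ Z (flp k)) := by
    intro k h1 h2
    by_contra h3
    exact hc ⟨k, h1, h2, h3⟩
  have fw : ∀ v, Rch M u v → (Z u ↔ Z v) := by
    intro v hv
    induction hv with
    | refl => exact Iff.rfl
    | @tail b c h1 h2 ih =>
      have h3 := ih.trans (h.i _ _ h2)
      by_cases e : c = u
      · subst e; exact absurd h3 hb
      · exact h3.trans (hk c e ((Rch.sm h1).trans h2.sm)).symm
  have bw : ∀ v, Rch M v u → (Z (flp v) ↔ Z (flp u)) := by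
    intro v hv
    induction hv using Relation.ReflTransGen.head_induction_on with
    | refl => exact Iff.rfl
    | @head b c h2 h1 ih =>
      have h3 := (h.i _ _ h2).trans ih
      by_cases e : b = u
      · subst e; exact absurd h3 hb
      · exact (hk b e (h2.sm.trans (Rch.sm h1)).symm).symm.trans h3
  rcases exists_last g u with ⟨l, hl1, hl2⟩ | ⟨v, hv1, hv2⟩
  swap
  · exact hb ((fw v hv2).trans (h.i _ _ hv1))
  rcases first_or g (s := u) with ⟨f, hf1, hf2⟩ | ⟨v, hv1, hv2⟩
  swap
  · exact hb ((h.i _ _ hv1).trans (bw v hv2))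
  apply hb
  refine (fw l hl1).trans ((h.ii f l ?_ (hf1.sm.trans hl1.sm) hf2 hl2).trans (bw f hf1))
  exact (hf1.sm.mem g).2 hu

/-- constant on slots of the model -/
def Cst (M : Mod) (Z : Slot → Prop) : Prop := ∀ u v : Slot, u.1 ∈ M.V → v.1 ∈ M.V → (Z u → Z v)

theorem Inv.cst {M : Mod} (g : Good0 M) {Z : Slot → Prop} (h : Inv M Z)
    (hb : ∀ u : Slot, u.1 ∈ M.V → (Z u ↔ Z (flp u))) : Cst M Z := by
  have h1 : ∀ u : Slot, u.1 ∈ M.V → (Z u ↔ Z (u.1, true)) := by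
    intro u hu
    rcases fst_eq (s := u) (t := (u.1, true)) rfl with e | e
    · rw [← e]
    · rw [hb u hu, e, flp_flp]; rfl
  intro u v hu hv hz
  rw [h1 v hv]
  refine g.conn (fun x => Z (x, true)) ?_ u.1 hu v.1 hv ((h1 u hu).1 hz)
  intro a ha
  show Z ((M.S a).1, true) ↔ Z ((M.T a).1, true)
  rw [← h1 _ (g.sv a ha), ← h1 _ (g.tv a ha), hb _ (g.tv a ha)]
  exact h.i _ _ ⟨a, ha, rfl, rfl⟩

theorem topo {M : Mod} (g : Good0 M) (hcard : (nodes M).card = M.V.card) {Z Y : Slot → Prop}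
    (hZ : Inv M Z) (hY : Inv M Y) :
    Cst M Z ∨ Cst M Y ∨ Cst M (fun u => ¬ (Z u ↔ Y u)) := by
  classical
  obtain ⟨Tl, t1, t2, t3, t4⟩ := orient g hcard
  have hphi : ∀ y ∈ M.V, ∃ z ∈ M.V, ∀ h : Slot, h.1 = y → ¬ Tl h → ∃ t, Sm M h t ∧ Tl t ∧ t.1 = z := by
    intro y hy
    obtain ⟨h, h1, h2⟩ : ∃ h : Slot, h.1 = y ∧ ¬ Tl h := by
      by_cases e : Tl (y, true)
      · exact ⟨flp (y, true), rfl, (t3 (y, true) hy).1 e⟩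
      · exact ⟨_, rfl, e⟩
    obtain ⟨t, ht1, ht2⟩ := t1 h (by rw [h1]; exact hy)
    refine ⟨t.1, t4 t ht2, ?_⟩
    intro k hk1 hk2
    rcases fst_eq (hk1.trans h1.symm) with e | e
    · subst e; exact ⟨t, ht1, ht2, rfl⟩
    · exfalso
      rw [e] at hk2
      exact h2 ((t3 h (by rw [h1]; exact hy)).2 hk2)
  choose! φ hφ1 hφ2 using hphi
  let r : ℕ → ℕ → Prop := fun y z => φ y = z
  have cr : ∀ a b c, r a b → r a c → ∃ d, Relation.ReflGen r b d ∧ Relation.ReflTransGen r c d := by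
    intro a b c h1 h2
    have : b = c := h1.symm.trans h2
    subst this
    exact ⟨b, .refl, .refl⟩
  have eqv := Relation.equivalence_join_reflTransGen cr
  have tojoin : ∀ s t : Slot, s.1 ∈ M.V → Sm M s t → Tl t → Relation.ReflTransGen r s.1 t.1 := by
    intro s t hs h1 h2
    by_cases e : Tl s
    · rw [t2 s t e h2 h1]
    · obtain ⟨t', ht1, ht2, ht3⟩ := hφ2 s.1 hs s rfl e
      have := t2 t t' h2 ht2 (h1.symm.trans ht1)
      subst this
      exact .single ht3.symm
  have join : ∀ x ∈ M.V, ∀ y ∈ M.V, Relation.Join (Relation.ReflTransGen r) x y := by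
    intro x hx y hy
    refine g.conn (fun z => Relation.Join (Relation.ReflTransGen r) x z) ?_ x hx y hy (eqv.refl x)
    intro a ha
    obtain ⟨t, h1, h2⟩ := t1 (M.S a) (g.sv a ha)
    have e1 := tojoin _ t (g.sv a ha) h1 h2
    have hn : Next M (M.S a) (M.T a) := ⟨a, ha, rfl, rfl⟩
    have e2 := tojoin _ t (g.tv a ha) (hn.sm.symm.trans h1) h2
    have e3 : Relation.Join (Relation.ReflTransGen r) (M.S a).1 (M.T a).1 := ⟨_, e1, e2⟩
    exact ⟨fun h => eqv.trans h e3, fun h => eqv.trans h (eqv.symm e3)⟩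
  let EC : (Slot → Prop) → Finset ℕ := fun W => M.V.filter fun y => ¬ (W (y, true) ↔ W (y, false))
  have hEC : ∀ W (u : Slot), u.1 ∈ M.V → (u.1 ∈ EC W ↔ ¬ (W u ↔ W (flp u))) := by
    rintro W ⟨x, b⟩ hu
    simp only [EC, Finset.mem_filter]
    cases b
    · simp only [flp, Bool.not_false]
      constructor
      · intro h e; exact h.2 e.symm
      · intro h; exact ⟨hu, fun e => h e.symm⟩
    · simp only [flp, Bool.not_true]
      exact ⟨fun h => h.2, fun h => ⟨hu, h⟩⟩
  have closed : ∀ W, Inv M W → ∀ y ∈ EC W, φ y ∈ EC W := by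
    intro W hW
    have hsub : EC W ⊆ (EC W).image φ := by
      intro y hy
      have hyV : y ∈ M.V := (Finset.mem_filter.1 hy).1
      obtain ⟨t, h1, h2⟩ : ∃ t : Slot, t.1 = y ∧ Tl t := by
        by_cases e : Tl (y, true)
        · exact ⟨_, rfl, e⟩
        · refine ⟨flp (y, true), rfl, ?_⟩
          by_contra h; exact e ((t3 (y, true) hyV).2 h)
      subst h1
      obtain ⟨k, hk1, hk2, hk3⟩ := hW.propC g hyV ((hEC W t hyV).1 hy)
      have hkV := (hk2.mem g).1 hyV
      rw [Finset.mem_image]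
      refine ⟨k.1, (hEC W k hkV).2 hk3, ?_⟩
      have hkt : ¬ Tl k := fun e => hk1 (t2 k t e h2 hk2.symm)
      obtain ⟨t', e1, e2, e3⟩ := hφ2 k.1 hkV k rfl hkt
      rw [← e3, t2 t' t e2 h2 (e1.symm.trans hk2.symm)]
    have := Finset.eq_of_subset_of_card_le hsub Finset.card_image_le
    intro y hy
    rw [this]
    exact Finset.mem_image_of_mem _ hy
  have closed' : ∀ W, Inv M W → ∀ y z, Relation.ReflTransGen r y z → y ∈ EC W → z ∈ EC W := by
    intro W hW y z h hy
    induction h with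
    | refl => exact hy
    | tail _ h ih => have h' : φ _ = _ := h; rw [← h']; exact closed W hW _ ih
  have nonemp : ∀ W, Inv M W → ¬ Cst M W → ∃ y, y ∈ EC W := by
    intro W hW hc
    by_contra hn
    apply hc
    apply hW.cst g
    intro u hu
    by_contra h
    exact hn ⟨_, (hEC W u hu).2 h⟩
  by_contra hcon
  rw [not_or, not_or] at hcon
  obtain ⟨n1, n2, n3⟩ := hcon
  obtain ⟨x, hx⟩ := nonemp _ hZ n1
  obtain ⟨y, hy⟩ := nonemp _ hY n2
  obtain ⟨z, hz⟩ := nonemp _ (hZ.xor hY) n3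
  have bad : ∀ W y, y ∈ EC W → ¬ (W (y, true) ↔ W (y, false)) := fun W y h => (Finset.mem_filter.1 h).2
  have memV : ∀ W y, y ∈ EC W → y ∈ M.V := fun W y h => (Finset.mem_filter.1 h).1
  obtain ⟨w, w1, w2⟩ := join x (memV _ _ hx) y (memV _ _ hy)
  have a1 := closed' _ hZ _ _ w1 hx
  have a2 := closed' _ hY _ _ w2 hy
  obtain ⟨v, v1, v2⟩ := join w (memV Z _ a1) z (memV (fun u => ¬ (Z u ↔ Y u)) _ hz)
  have b1 := (Finset.mem_filter.1 (closed' _ hZ _ _ v1 a1)).2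
  have b2 := (Finset.mem_filter.1 (closed' _ hY _ _ v1 a2)).2
  have b3 := bad (fun u => ¬ (Z u ↔ Y u)) _ (closed' _ (hZ.xor hY) _ _ v2 hz)
  tauto

end

section

/-- no predecessor -/
def Fst (M : Mod) (t : Slot) : Prop := ∀ u, ¬ Next M u t
/-- no successor -/
def Lst (M : Mod) (t : Slot) : Prop := ∀ u, ¬ Next M t u

/-- list of arrows leading backwards from a slot to a first slot -/
def BC (M : Mod) : Slot → List ℕ → Prop
  | t, [] => Fst M t
  | t, a :: l => a ∈ M.A ∧ M.T a = t ∧ BC M (M.S a) l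

theorem BC.uniq {M : Mod} (g : Good0 M) {l l' : List ℕ} {t : Slot} (h : BC M t l) (h' : BC M t l') :
    l = l' := by
  induction l generalizing t l' with
  | nil =>
    cases l' with
    | nil => rfl
    | cons b l' => exact absurd ⟨b, h'.1, rfl, h'.2.1⟩ (h (M.S b))
  | cons a l ih =>
    cases l' with
    | nil => exact absurd ⟨a, h.1, rfl, h.2.1⟩ (h' (M.S a))
    | cons b l' =>
      have := g.tinj a h.1 b h'.1 (h.2.1.trans h'.2.1.symm)
      subst this
      rw [ih h.2.2 h'.2.2]

theorem BC.exists {M : Mod} {f t : Slot} (hf : Fst M f) (h : Rch M f t) : ∃ l, BC M t l := by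
  induction h with
  | refl => exact ⟨[], hf⟩
  | tail _ h ih =>
    obtain ⟨l, hl⟩ := ih
    obtain ⟨a, ha, rfl, rfl⟩ := h
    exact ⟨a :: l, ha, rfl, hl⟩

theorem fst_of_lst {M : Mod} (g : Good0 M) {t : Slot} (h : Lst M t) : ∃ f, Rch M f t ∧ Fst M f := by
  rcases first_or g (s := t) with h1 | ⟨u, h1, _⟩
  · exact h1
  · exact absurd h1 (h u)

theorem BC.of_lst {M : Mod} (g : Good0 M) {t : Slot} (h : Lst M t) : ∃ l, BC M t l := by
  obtain ⟨f, h1, h2⟩ := fst_of_lst g h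
  exact BC.exists h2 h1

theorem Fst.eq {M : Mod} {f t : Slot} (hf : Fst M t) (h : Rch M f t) : f = t := by
  cases h with
  | refl => rfl
  | tail _ h => exact absurd h (hf _)

theorem Lst.eq {M : Mod} {f t : Slot} (hf : Lst M f) (h : Rch M f t) : f = t := by
  cases h using Relation.ReflTransGen.head_induction_on with
  | refl => rfl
  | head h _ => exact absurd h (hf _)

theorem Fst.uniq {M : Mod} (g : Good0 M) {f f' t : Slot} (hf : Fst M f) (hf' : Fst M f')
    (h : Rch M f t) (h' : Rch M f' t) : f = f' := by
  rcases Rch.total_left g h h' with e | e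
  · exact hf'.eq e
  · exact (hf.eq e).symm

theorem Lst.uniq {M : Mod} (g : Good0 M) {f f' t : Slot} (hf : Lst M f) (hf' : Lst M f')
    (h : Rch M t f) (h' : Rch M t f') : f = f' := by
  rcases Rch.total_right g h h' with e | e
  · exact hf.eq e
  · exact (hf'.eq e).symm

theorem BC.first {M : Mod} {t : Slot} {l : List ℕ} (h : BC M t l) : ∃ f, Rch M f t ∧ Fst M f ∧
    (l = [] → f = t) ∧ (l ≠ [] → f = M.S l.getLast!) := by
  induction l generalizing t with
  | nil => exact ⟨t, .refl, h, fun _ => rfl, fun h => absurd rfl h⟩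
  | cons a l ih =>
    obtain ⟨f, h1, h2, h3, h4⟩ := ih h.2.2
    refine ⟨f, h1.tail ⟨a, h.1, rfl, h.2.1⟩, h2, fun h => absurd h (by simp), fun _ => ?_⟩
    cases l with
    | nil => exact h3 rfl
    | cons b l => exact h4 (by simp)

theorem BC.sub {M : Mod} (g : Good0 M) {u t : Slot} {l : List ℕ} (h : BC M t l) (hu : Rch M u t) :
    ∃ l', BC M u l' ∧ l'.length ≤ l.length := by
  induction l generalizing t with
  | nil => rw [Fst.eq h hu]; exact ⟨[], h, le_refl _⟩
  | cons a l ih =>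
    cases hu with
    | refl => exact ⟨_, h, le_refl _⟩
    | tail h1 h2 =>
      have e := h2.luniq g ⟨a, h.1, rfl, h.2.1⟩
      subst e
      obtain ⟨l', e1, e2⟩ := ih h.2.2 h1
      exact ⟨l', e1, e2.trans (by simp)⟩

theorem BC.ncard {M : Mod} (g : Good0 M) {t : Slot} {l : List ℕ} (h : BC M t l) :
    {u | Rch M u t}.Finite ∧ {u | Rch M u t}.ncard = l.length + 1 := by
  induction l generalizing t with
  | nil =>
    have : {u | Rch M u t} = {t} := by
      ext u
      exact ⟨fun hu => Fst.eq h hu, fun hu => by rw [hu]; exact Relation.ReflTransGen.refl⟩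
    rw [this]; simp
  | cons a l ih =>
    obtain ⟨i1, i2⟩ := ih h.2.2
    have hn : Next M (M.S a) t := ⟨a, h.1, rfl, h.2.1⟩
    have e : {u | Rch M u t} = insert t {u | Rch M u (M.S a)} := by
      ext u
      rw [Set.mem_insert_iff]
      constructor
      · intro hu
        cases hu with
        | refl => exact Or.inl rfl
        | tail h1 h2 => rw [h2.luniq g hn] at h1; exact Or.inr h1
      · rintro (rfl | hu)
        · exact Relation.ReflTransGen.refl
        · exact Relation.ReflTransGen.tail hu hn
    have hnot : t ∉ {u | Rch M u (M.S a)} := by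
      intro ht
      obtain ⟨l', e1, e2⟩ := h.2.2.sub g ht
      have := BC.uniq g e1 h
      rw [this] at e2
      simp at e2
    rw [e]
    refine ⟨i1.insert t, ?_⟩
    rw [Set.ncard_insert_of_notMem hnot i1, i2]
    simp

theorem cls_lst {M : Mod} (g : Good0 M) {t : Slot} (h : Lst M t) : cls M t = {u | Rch M u t} := by
  ext u
  constructor
  · intro hu
    rcases Sm.rch g hu with e | e
    · rw [h.eq e]; exact Relation.ReflTransGen.refl
    · exact e
  · intro hu
    exact (Rch.sm hu).symm

theorem BC.mem {M : Mod} (g : Good0 M) {t : Slot} {l : List ℕ} (h : BC M t l) {a : ℕ} (ha : a ∈ M.A)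
    (hr : Rch M (M.T a) t) : a ∈ l := by
  induction l generalizing t with
  | nil =>
    have := Fst.eq h hr
    exact absurd ⟨a, ha, rfl, this⟩ (h (M.S a))
  | cons b l ih =>
    by_cases e : M.T a = t
    · rw [g.tinj a ha b h.1 (e.trans h.2.1.symm)]; simp
    · cases hr with
      | refl => exact absurd rfl e
      | tail h1 h2 =>
        rw [h2.luniq g ⟨b, h.1, rfl, h.2.1⟩] at h1
        exact List.mem_cons_of_mem _ (ih h.2.2 h1)

theorem BC.rch {M : Mod} {t : Slot} {l : List ℕ} (h : BC M t l) {a : ℕ} (ha : a ∈ l) :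
    a ∈ M.A ∧ Rch M (M.T a) t := by
  induction l generalizing t with
  | nil => simp at ha
  | cons b l ih =>
    rcases List.mem_cons.1 ha with rfl | h1
    · rw [h.2.1]; exact ⟨h.1, Relation.ReflTransGen.refl⟩
    · obtain ⟨e1, e2⟩ := ih h.2.2 h1
      exact ⟨e1, Relation.ReflTransGen.tail e2 ⟨b, h.1, rfl, h.2.1⟩⟩

theorem BC_iff {M : Mod} {t : Slot} {a : ℕ} {l : List ℕ} : BC M t (a :: l) ↔
    M.T a = t ∧ (∀ b ∈ a :: l, b ∈ M.A) ∧ (a :: l).IsChain (fun a b => M.S a = M.T b) ∧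
      Fst M (M.S (a :: l).getLast!) := by
  induction l generalizing t a with
  | nil =>
    show a ∈ M.A ∧ M.T a = t ∧ Fst M (M.S a) ↔ _
    simp [List.getLast!]
    tauto
  | cons b l ih =>
    show a ∈ M.A ∧ M.T a = t ∧ BC M (M.S a) (b :: l) ↔ _
    rw [ih, List.isChain_cons_cons]
    have : (a :: b :: l).getLast! = (b :: l).getLast! := rfl
    rw [this]
    constructor
    · rintro ⟨h1, h2, h3, h4, h5, h6⟩
      refine ⟨h2, ?_, ⟨h3.symm, h5⟩, h6⟩
      intro c hc
      rcases List.mem_cons.1 hc with rfl | hc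
      · exact h1
      · exact h4 c hc
    · rintro ⟨h1, h2, ⟨h3, h4⟩, h5⟩
      exact ⟨h2 a (by simp), h1, h3.symm, fun c hc => h2 c (List.mem_cons_of_mem _ hc), h4, h5⟩

/-- model of permitted paths -/
def pm (M : Mod) : Mod := ⟨M.V, M.A, M.S, fun a => flp (M.T a)⟩

theorem pm_good {M : Mod} (g : Good0 M) : Good0 (pm M) where
  ne := g.ne
  sv := g.sv
  tv := g.tv
  sinj := g.sinj
  tinj := fun a ha b hb e => g.tinj a ha b hb (flp_inj e)
  conn := g.conn

theorem next_pm {M : Mod} {u v : Slot} : Next (pm M) u (flp v) ↔ Next M u v := by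
  constructor
  · rintro ⟨a, ha, e1, e2⟩
    exact ⟨a, ha, e1, flp_inj e2⟩
  · rintro ⟨a, ha, rfl, rfl⟩
    exact ⟨a, ha, rfl, rfl⟩

theorem lst_pm {M : Mod} {t : Slot} : Lst (pm M) t ↔ Lst M t := by
  constructor
  · intro h u hu; exact h _ (next_pm.2 hu)
  · intro h u hu
    rw [← flp_flp u, next_pm] at hu
    exact h _ hu

theorem fst_pm {M : Mod} {t : Slot} : Fst (pm M) (flp t) ↔ Fst M t := by
  constructor
  · intro h u hu; exact h _ (next_pm.2 hu)
  · intro h u hu; exact h _ (next_pm.1 hu)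

theorem lst_of_fst {M : Mod} (g : Good0 M) {f : Slot} (h : Fst M f) : ∃ t, Rch M f t ∧ Lst M t := by
  rcases exists_last g f with h1 | ⟨u, h1, _⟩
  · exact h1
  · exact absurd h1 (h u)

/-- step rank along a nilpotent right-unique relation -/
inductive Stp (M : Mod) : ℕ → Slot → Prop
  | zero {u : Slot} : Lst M u → Stp M 0 u
  | succ {n : ℕ} {u v : Slot} : Next M u v → Stp M n v → Stp M (n + 1) u

theorem Stp.uniq {M : Mod} (g : Good0 M) {n m : ℕ} {u : Slot} (h : Stp M n u) (h' : Stp M m u) :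
    n = m := by
  induction h generalizing m with
  | zero h =>
    cases h' with
    | zero _ => rfl
    | succ h1 _ => exact absurd h1 (h _)
  | succ h _ ih =>
    cases h' with
    | zero h1 => exact absurd h (h1 _)
    | succ h1 h2 =>
      have := h.runiq g h1
      subst this
      rw [ih h2]

theorem Stp.exists {M : Mod} {u t : Slot} (h : Rch M u t) (ht : Lst M t) : ∃ n, Stp M n u := by
  induction h using Relation.ReflTransGen.head_induction_on with
  | refl => exact ⟨0, .zero ht⟩
  | head h _ ih => obtain ⟨n, hn⟩ := ih; exact ⟨n + 1, .succ h hn⟩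

theorem rank_of {M : Mod} (g : Good0 M) (h : ∀ u : Slot, u.1 ∈ M.V → ∃ t, Rch (pm M) u t ∧ Lst M t) :
    ∃ r : ℕ → ℕ, ∀ a ∈ M.A, ∀ b ∈ M.A, M.S a = flp (M.T b) → r b < r a := by
  have h1 : ∀ u : Slot, u.1 ∈ M.V → ∃ n, Stp (pm M) n u := by
    intro u hu
    obtain ⟨t, h1, h2⟩ := h u hu
    exact Stp.exists h1 (lst_pm.2 h2)
  choose! n hn using h1
  refine ⟨fun a => M.A.sup (fun b => n (M.S b)) - n (M.S a), ?_⟩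
  intro a ha b hb e
  have e1 : n (M.S b) = n (M.S a) + 1 := by
    apply Stp.uniq (pm_good g) (hn _ (g.sv b hb))
    refine .succ ?_ (hn _ (g.sv a ha))
    exact ⟨b, hb, rfl, e.symm⟩
  have e2 : n (M.S b) ≤ M.A.sup (fun b => n (M.S b)) := Finset.le_sup (f := fun b => n (M.S b)) hb
  show _ - n (M.S b) < _ - n (M.S a)
  omega

end

section

/-- model of a gentle quiver -/
def mdl (Q : QuivRel) (st : SigmaTau Q) : Mod :=
  ⟨Q.V, Q.A, fun a => (Q.src a, decide (st.σ a = 1)), fun a => (Q.tgt a, decide (st.τ a = 1))⟩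

/-- sign of a slot -/
def sgn (s : Slot) : ℤ := if s.2 then 1 else -1

theorem sgn_flp (s : Slot) : sgn (flp s) = - sgn s := by
  rcases s with ⟨x, b⟩; cases b <;> simp [sgn, flp]

theorem sgn_pm (s : Slot) : sgn s = 1 ∨ sgn s = -1 := by
  rcases s with ⟨x, b⟩; cases b <;> simp [sgn]

theorem slot_ext {s t : Slot} (h : s.1 = t.1) (h2 : sgn s = sgn t) : s = t := by
  rcases s with ⟨x, b⟩; rcases t with ⟨y, c⟩
  cases b <;> cases c <;> simp_all [sgn]

variable {Q : QuivRel} {st : SigmaTau Q}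

theorem sgn_S {a : ℕ} (ha : a ∈ Q.A) : sgn ((mdl Q st).S a) = st.σ a := by
  rcases st.σ_pm a ha with h | h <;> simp [sgn, mdl, h]

theorem sgn_T {a : ℕ} (ha : a ∈ Q.A) : sgn ((mdl Q st).T a) = st.τ a := by
  rcases st.τ_pm a ha with h | h <;> simp [sgn, mdl, h]

theorem S_iff {a : ℕ} (ha : a ∈ Q.A) {t : Slot} :
    (mdl Q st).S a = t ↔ Q.src a = t.1 ∧ st.σ a = sgn t := by
  constructor
  · rintro rfl; exact ⟨rfl, (sgn_S ha).symm⟩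
  · rintro ⟨h1, h2⟩; exact slot_ext h1 ((sgn_S ha).trans h2)

theorem T_iff {a : ℕ} (ha : a ∈ Q.A) {t : Slot} :
    (mdl Q st).T a = t ↔ Q.tgt a = t.1 ∧ st.τ a = sgn t := by
  constructor
  · rintro rfl; exact ⟨rfl, (sgn_T ha).symm⟩
  · rintro ⟨h1, h2⟩; exact slot_ext h1 ((sgn_T ha).trans h2)

theorem ST_iff {a b : ℕ} (ha : a ∈ Q.A) (hb : b ∈ Q.A) :
    (mdl Q st).S a = (mdl Q st).T b ↔ Q.src a = Q.tgt b ∧ st.σ a = st.τ b := by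
  rw [S_iff ha, sgn_T hb]; rfl

theorem rel_ST (hg : IsGentle Q) {a b : ℕ} : (a, b) ∈ Q.rel ↔
    a ∈ Q.A ∧ b ∈ Q.A ∧ (mdl Q st).S a = (mdl Q st).T b := by
  constructor
  · intro h
    obtain ⟨h1, h2, h3⟩ := hg.2.2.2.1 _ h
    exact ⟨h1, h2, (ST_iff h1 h2).2 ⟨h3, (st.rel_iff a h1 b h2 h3).1 h⟩⟩
  · rintro ⟨h1, h2, h3⟩
    obtain ⟨h4, h5⟩ := (ST_iff h1 h2).1 h3
    exact (st.rel_iff a h1 b h2 h4).2 h5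

theorem toQ_mdl (hg : IsGentle Q) : toQ (mdl Q st) = Q := by
  have : (toQ (mdl Q st)).rel = Q.rel := by
    ext ⟨a, b⟩
    rw [mem_rel, rel_ST hg (st := st)]
    rfl
  cases Q
  simp only [toQ, mdl] at this ⊢
  rw [this]

theorem neg_absurd {x : ℤ} (h : x = 1 ∨ x = -1) (h2 : x = -x) : False := by omega

theorem mdl_good (hg : IsGentle Q) : Good0 (mdl Q st) where
  ne := hg.1
  sv := fun a ha => (hg.2.1 a ha).1
  tv := fun a ha => (hg.2.1 a ha).2
  sinj := by
    intro a ha b hb e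
    by_contra hn
    have h1 := (S_iff ha).1 e
    rw [sgn_S hb] at h1
    have := st.σ_src a ha b hb hn h1.1
    rw [h1.2] at this
    exact neg_absurd (st.σ_pm b hb) this
  tinj := by
    intro a ha b hb e
    by_contra hn
    have h1 := (T_iff ha).1 e
    rw [sgn_T hb] at h1
    have := st.τ_tgt a ha b hb hn h1.1
    rw [h1.2] at this
    exact neg_absurd (st.τ_pm b hb) this
  conn := fun P hP => connected_elim hg.2.2.1 P hP

theorem lst_iff {t : Slot} : Lst (mdl Q st) t ↔ ¬ ∃ a ∈ Q.A, Q.src a = t.1 ∧ st.σ a = sgn t := by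
  constructor
  · rintro h ⟨a, ha, h1⟩
    exact h _ ⟨a, ha, (S_iff ha).2 h1, rfl⟩
  · rintro h u ⟨a, ha, h1, _⟩
    exact h ⟨a, ha, (S_iff ha).1 h1⟩

theorem fst_iff {t : Slot} : Fst (mdl Q st) t ↔ ¬ ∃ a ∈ Q.A, Q.tgt a = t.1 ∧ st.τ a = sgn t := by
  constructor
  · rintro h ⟨a, ha, h1⟩
    exact h _ ⟨a, ha, rfl, (T_iff ha).2 h1⟩
  · rintro h u ⟨a, ha, _, h1⟩
    exact h ⟨a, ha, (T_iff ha).1 h1⟩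

/-- thread of a slot and list -/
def mk (t : Slot) : List ℕ → Thread
  | [] => .triv t.1 (sgn t)
  | a :: l => .arrows (a :: l)

@[simp] theorem mk_len (t : Slot) (l : List ℕ) : (mk t l).len = l.length := by
  cases l <;> rfl

theorem getLast_mem_two (a : ℕ) (l : List ℕ) : (a :: l).getLast! ∈ a :: l :=
  List.getLast_mem (l := a :: l) (by simp)

theorem mk_N (hg : IsGentle Q) {t : Slot} {l : List ℕ} (h : BC (mdl Q st) t l) (ht : Lst (mdl Q st) t)
    (hV : t.1 ∈ Q.V) : InN Q st (mk t l) := by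
  cases l with
  | nil => exact ⟨⟨hV, sgn_pm t⟩, lst_iff.1 ht, fst_iff.1 h⟩
  | cons a l =>
    obtain ⟨h1, h2, h3, h4⟩ := BC_iff.1 h
    have ha := h2 a (by simp)
    refine ⟨⟨by simp, h2, ?_⟩, ?_, ?_⟩
    · refine List.IsChain.imp_of_mem_imp ?_ h3
      intro x y hx hy e
      exact (rel_ST hg).2 ⟨h2 x hx, h2 y hy, e⟩
    · rw [lst_iff] at ht
      show ¬ ∃ b ∈ Q.A, Q.src b = Q.tgt a ∧ st.σ b = st.τ a
      obtain ⟨e1, e2⟩ := (T_iff ha).1 h1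
      rw [e1, e2]; exact ht
    · rw [fst_iff, sgn_S (h2 _ (getLast_mem_two a l))] at h4
      exact h4

theorem N_mk (hg : IsGentle Q) {w : Thread} (h : InN Q st w) :
    ∃ t l, w = mk t l ∧ BC (mdl Q st) t l ∧ Lst (mdl Q st) t ∧ t.1 ∈ Q.V := by
  obtain ⟨h1, h2, h3⟩ := h
  cases w with
  | triv x e =>
    obtain ⟨hx, he⟩ := h1
    have : ∃ t : Slot, t.1 = x ∧ sgn t = e := by
      rcases he with rfl | rfl
      · exact ⟨(x, true), rfl, rfl⟩
      · exact ⟨(x, false), rfl, rfl⟩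
    obtain ⟨t, rfl, rfl⟩ := this
    exact ⟨t, [], rfl, fst_iff.2 h3, lst_iff.2 h2, hx⟩
  | arrows l =>
    cases l with
    | nil => exact absurd rfl h1.1
    | cons a l =>
      obtain ⟨_, h4, h5⟩ := h1
      have ha := h4 a (by simp)
      refine ⟨(mdl Q st).T a, a :: l, rfl, ?_, ?_, (mdl_good hg).tv a ha⟩
      · rw [BC_iff]
        refine ⟨rfl, h4, ?_, ?_⟩
        · refine List.IsChain.imp ?_ h5
          intro x y e
          exact ((rel_ST hg).1 e).2.2
        · rw [fst_iff, sgn_S (h4 _ (getLast_mem_two a l))]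
          exact h3
      · rw [lst_iff, sgn_T ha]
        exact h2

theorem mk_inj {t t' : Slot} {l l' : List ℕ} (h : BC (mdl Q st) t l) (h' : BC (mdl Q st) t' l')
    (e : mk t l = mk t' l') : t = t' ∧ l = l' := by
  cases l with
  | nil =>
    cases l' with
    | nil =>
      simp only [mk, Thread.triv.injEq] at e
      exact ⟨slot_ext e.1 e.2, rfl⟩
    | cons b l' => simp [mk] at e
  | cons a l =>
    cases l' with
    | nil => simp [mk] at e
    | cons b l' =>
      simp only [mk, Thread.arrows.injEq, List.cons.injEq] at e
      obtain ⟨rfl, rfl⟩ := e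
      exact ⟨h.2.1.symm.trans h'.2.1, rfl⟩

theorem mk_target {t : Slot} {l : List ℕ} (h : BC (mdl Q st) t l) :
    (mk t l).target Q = t.1 ∧ (mk t l).tauAnti st = sgn t := by
  cases l with
  | nil => exact ⟨rfl, rfl⟩
  | cons a l => exact (T_iff h.1).1 h.2.1

theorem mk_source {t f : Slot} {l : List ℕ} (hg : IsGentle Q) (h : BC (mdl Q st) t l)
    (hf : Fst (mdl Q st) f) (hr : Rch (mdl Q st) f t) :
    (mk t l).source Q = f.1 ∧ (mk t l).sigma st = sgn f := by
  obtain ⟨f', h1, h2, h3, h4⟩ := h.first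
  have := Fst.uniq (mdl_good hg) hf h2 hr h1
  subst this
  cases l with
  | nil => rw [h3 rfl]; exact ⟨rfl, rfl⟩
  | cons a l =>
    exact (S_iff ((BC_iff.1 h).2.1 _ (getLast_mem_two a l))).1 (h4 (by simp)).symm

theorem phi_mk (hg : IsGentle Q) {t t' f : Slot} {l l' : List ℕ}
    (h : BC (mdl Q st) t l) (ht : Lst (mdl Q st) t) (hV : t.1 ∈ Q.V)
    (hf : Fst (mdl Q st) f) (hr : Rch (mdl Q st) f t)
    (h' : BC (mdl Q st) t' l') (ht' : Lst (mdl Q st) t') (hr' : Rch (pm (mdl Q st)) (flp f) t') :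
    PhiRel Q st (mk t l) (mk t' l') := by
  have g := mdl_good (st := st) hg
  have hfV : f.1 ∈ Q.V := ((Rch.sm hr).mem g).2 hV
  have hV' : t'.1 ∈ Q.V := ((Rch.sm hr').mem (pm_good g)).1 hfV
  have hff : Fst (pm (mdl Q st)) (flp f) := fst_pm.2 hf
  obtain ⟨l2, hl2⟩ := BC.exists hff hr'
  obtain ⟨s1, s2⟩ := mk_source hg h hf hr
  obtain ⟨q1, q2⟩ := mk_target h'
  refine ⟨mk_N hg h ht hV, mk_N hg h' ht' hV', mk t' l2, ?_⟩
  rw [s1, s2, q1, q2]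
  obtain ⟨f', e1, e2, e3, e4⟩ := hl2.first
  have := Fst.uniq (pm_good g) hff e2 hr' e1
  subst this
  have hfi : ¬ ∃ b ∈ Q.A, Q.tgt b = f.1 ∧ st.τ b = sgn f := fst_iff.1 hf
  have hli := lst_iff.1 ht'
  cases l2 with
  | nil =>
    have e3 := e3 rfl
    subst e3
    refine ⟨⟨⟨hV', sgn_pm _⟩, ?_, ?_⟩, rfl, ?_, rfl, ?_⟩
    · show ¬ ∃ a ∈ Q.A, Q.src a = f.1 ∧ st.σ a = - - sgn (flp f)
      rw [neg_neg]; exact hli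
    · show ¬ ∃ a ∈ Q.A, Q.tgt a = f.1 ∧ st.τ a = - sgn (flp f)
      rw [sgn_flp, neg_neg]; exact hfi
    · exact sgn_flp f
    · show sgn (flp f) = - - sgn (flp f)
      rw [neg_neg]
  | cons a l2 =>
    obtain ⟨c1, c2, c3, c4⟩ := BC_iff.1 hl2
    have ha : a ∈ Q.A := c2 a (by simp)
    have c1' : (mdl Q st).T a = flp t' := by
      have : flp ((mdl Q st).T a) = t' := c1
      rw [← this, flp_flp]
    have hlast : (mdl Q st).S (a :: l2).getLast! = flp f := (e4 (by simp)).symm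
    obtain ⟨x1, x2⟩ := (T_iff ha).1 c1'
    obtain ⟨y1, y2⟩ := (S_iff (c2 _ (getLast_mem_two a l2))).1 hlast
    rw [sgn_flp] at x2 y2
    refine ⟨⟨⟨⟨by simp, c2, ?_⟩, ?_⟩, ?_, ?_⟩, y1, y2, x1.symm, ?_⟩
    · refine List.IsChain.imp ?_ c3
      intro x y e
      exact congrArg Prod.fst e
    · refine List.IsChain.imp ?_ c3
      intro x y e hn
      have h1 := ((rel_ST hg (st := st)).1 hn).2.2
      have h2 : (mdl Q st).S x = flp ((mdl Q st).T y) := e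
      exact flp_ne _ (h2.symm.trans h1)
    · show ¬ ∃ b ∈ Q.A, Q.src b = Q.tgt a ∧ st.σ b = - st.τ a
      rw [x1, x2, neg_neg]; exact hli
    · show ¬ ∃ b ∈ Q.A, Q.tgt b = Q.src (a :: l2).getLast! ∧ st.τ b = - st.σ (a :: l2).getLast!
      rw [y1, y2, neg_neg]; exact hfi
    · show sgn t' = - st.τ a
      rw [x2, neg_neg]

theorem PhiRel.N {w w' : Thread} (h : Relation.EqvGen (PhiRel Q st) w w') :
    InN Q st w ↔ InN Q st w' := by
  induction h with
  | rel _ _ h => exact ⟨fun _ => h.2.1, fun _ => h.1⟩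
  | refl => exact Iff.rfl
  | symm _ _ _ ih => exact ih.symm
  | trans _ _ _ _ _ i1 i2 => exact i1.trans i2

/-- finite-dimensionality -/
theorem rank_mdl (hg : IsGentle Q) (hcard : (nodes (mdl Q st)).card = Q.V.card)
    {O1 O2 : Set Thread} (h1 : NOrbit Q st O1) (h2 : NOrbit Q st O2) (hne : O1 ≠ O2) :
    ∃ r : ℕ → ℕ, ∀ a ∈ Q.A, ∀ b ∈ Q.A, (mdl Q st).S a = flp ((mdl Q st).T b) → r b < r a := by
  have g := mdl_good (st := st) hg
  have gp := pm_good g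
  set M := mdl Q st with hM
  obtain ⟨w1, hw1, rfl⟩ := h1
  obtain ⟨w2, hw2, rfl⟩ := h2
  have hnot : ¬ Relation.EqvGen (PhiRel Q st) w1 w2 := by
    intro h
    apply hne
    ext w
    exact ⟨fun h' => (h.symm).trans _ _ _ h', fun h' => h.trans _ _ _ h'⟩
  let Z1 : Slot → Prop := fun u => ∃ t l, Rch (pm M) u t ∧ Lst M t ∧ BC M t l ∧
    Relation.EqvGen (PhiRel Q st) w1 (mk t l)
  let Z3 : Slot → Prop := fun u => ∃ t, Rch (pm M) u t ∧ Lst M t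
  have step : ∀ u v t, Next (pm M) u v → Lst M t → (Rch (pm M) u t ↔ Rch (pm M) v t) := by
    intro u v t h ht
    constructor
    · intro h'
      cases h' using Relation.ReflTransGen.head_induction_on with
      | refl => exact absurd h (lst_pm.2 ht _)
      | head h3 h4 => rw [h.runiq gp h3]; exact h4
    · intro h'; exact h'.head h
  have I1 : Inv M Z1 := by
    refine ⟨?_, ?_⟩
    · intro v w hn
      have hn := next_pm.2 hn
      constructor
      · rintro ⟨t, l, a, b, c, d⟩; exact ⟨t, l, (step _ _ t hn b).1 a, b, c, d⟩
      · rintro ⟨t, l, a, b, c, d⟩; exact ⟨t, l, (step _ _ t hn b).2 a, b, c, d⟩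
    · intro f t hfV hs hf ht
      have hr : Rch M f t := by
        have : f ∈ cls M t := hs.symm
        rw [cls_lst g ht] at this
        exact this
      obtain ⟨l, hl⟩ := BC.of_lst g ht
      obtain ⟨t', ht1, ht2⟩ := lst_of_fst gp (fst_pm.2 hf)
      rw [lst_pm] at ht2
      obtain ⟨l', hl'⟩ := BC.of_lst g ht2
      have htV : t.1 ∈ Q.V := (hs.mem g).1 hfV
      have ph := phi_mk hg hl ht htV hf hr hl' ht2 ht1
      constructor
      · rintro ⟨s, k, a, b, c, d⟩
        have := Lst.eq (lst_pm.2 ht) a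
        subst this
        have := BC.uniq g c hl
        subst this
        exact ⟨t', l', ht1, ht2, hl', d.trans _ _ _ (.rel _ _ ph)⟩
      · rintro ⟨s, k, a, b, c, d⟩
        have := Lst.uniq gp (lst_pm.2 ht2) (lst_pm.2 b) ht1 a
        subst this
        have := BC.uniq g c hl'
        subst this
        exact ⟨t, l, .refl, ht, hl, d.trans _ _ _ (.symm _ _ (.rel _ _ ph))⟩
  have I3 : Inv M Z3 := by
    refine ⟨?_, ?_⟩
    · intro v w hn
      have hn := next_pm.2 hn
      constructor
      · rintro ⟨t, a, b⟩; exact ⟨t, (step _ _ t hn b).1 a, b⟩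
      · rintro ⟨t, a, b⟩; exact ⟨t, (step _ _ t hn b).2 a, b⟩
    · intro f t hfV hs hf ht
      obtain ⟨t', ht1, ht2⟩ := lst_of_fst gp (fst_pm.2 hf)
      rw [lst_pm] at ht2
      exact ⟨fun _ => ⟨t', ht1, ht2⟩, fun _ => ⟨t, .refl, ht⟩⟩
  obtain ⟨t1, l1, e1, b1, c1, d1⟩ := N_mk hg hw1
  obtain ⟨t2, l2, e2, b2, c2, d2⟩ := N_mk hg hw2
  have z11 : Z1 t1 := ⟨t1, l1, .refl, c1, b1, by rw [← e1]; exact .refl _⟩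
  have z12 : ¬ Z1 t2 := by
    rintro ⟨s, k, a, b, c, d⟩
    have := Lst.eq (lst_pm.2 c2) a
    subst this
    have := BC.uniq g c b2
    subst this
    rw [← e2] at d
    exact hnot d
  have z31 : Z3 t1 := ⟨t1, .refl, c1⟩
  have z32 : Z3 t2 := ⟨t2, .refl, c2⟩
  apply rank_of g
  intro u hu
  rcases topo g hcard I1 I3 with h | h | h
  · exact absurd (h t1 t2 d1 d2 z11) z12
  · exact h t1 u d1 hu z31
  · exfalso
    have := h t2 t1 d2 d1 (fun e => z12 (e.2 z32))
    exact this ⟨fun _ => z31, fun _ => z11⟩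

end

section

variable {Q : QuivRel} {st : SigmaTau Q}

theorem C_iff (hg : IsGentle Q) {a : ℕ} : InC Q st a ↔ a ∈ Q.A ∧
    ∀ t, Lst (mdl Q st) t → ¬ Sm (mdl Q st) ((mdl Q st).S a) t := by
  have g := mdl_good (st := st) hg
  constructor
  · rintro ⟨ha, h⟩
    refine ⟨ha, ?_⟩
    intro t ht hs
    obtain ⟨l, hl⟩ := BC.of_lst g ht
    have hn : Next (mdl Q st) ((mdl Q st).S a) ((mdl Q st).T a) := ⟨a, ha, rfl, rfl⟩
    have hr : Rch (mdl Q st) ((mdl Q st).T a) t := by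
      have : (mdl Q st).T a ∈ cls (mdl Q st) t := hs.symm.trans hn.sm
      rw [cls_lst g ht] at this
      exact this
    have hm := hl.mem g ha hr
    have hN := mk_N hg hl ht ((hs.mem g).1 (g.sv a ha))
    cases l with
    | nil => simp at hm
    | cons b l => exact h ⟨_, hN, hm⟩
  · rintro ⟨ha, h⟩
    refine ⟨ha, ?_⟩
    rintro ⟨l, hN, hm⟩
    obtain ⟨t, l', e, hb, ht, _⟩ := N_mk hg hN
    cases l' with
    | nil => simp [mk] at e
    | cons b l' =>
      simp only [mk, Thread.arrows.injEq] at e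
      subst e
      have hn : Next (mdl Q st) ((mdl Q st).S a) ((mdl Q st).T a) := ⟨a, ha, rfl, rfl⟩
      exact h t ht (hn.sm.trans (Rch.sm (hb.rch hm).2))

theorem psi_sm {a b : ℕ} (h : Relation.EqvGen (PsiRel Q st) a b) :
    Sm (mdl Q st) ((mdl Q st).S a) ((mdl Q st).S b) ∧ (InC Q st a ↔ InC Q st b) := by
  induction h with
  | rel a b h =>
    refine ⟨?_, fun _ => h.2.1, fun _ => h.1⟩
    have : Next (mdl Q st) ((mdl Q st).S b) ((mdl Q st).S a) :=
      ⟨b, h.2.1.1, rfl, ((ST_iff h.1.1 h.2.1.1).2 ⟨h.2.2.1.symm, h.2.2.2.symm⟩).symm⟩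
    exact this.sm.symm
  | refl => exact ⟨Sm.refl _ _, Iff.rfl⟩
  | symm _ _ _ ih => exact ⟨ih.1.symm, ih.2.symm⟩
  | trans _ _ _ _ _ i1 i2 => exact ⟨i1.1.trans i2.1, i1.2.trans i2.2⟩

theorem sm_psi (hg : IsGentle Q) {a : ℕ} (ha : InC Q st a) {s : Slot}
    (h : Sm (mdl Q st) ((mdl Q st).S a) s) :
    ∃ b, InC Q st b ∧ (mdl Q st).S b = s ∧ Relation.EqvGen (PsiRel Q st) a b := by
  have g := mdl_good (st := st) hg
  refine (Sm.induct (fun s => ∃ b, InC Q st b ∧ (mdl Q st).S b = s ∧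
    Relation.EqvGen (PsiRel Q st) a b) ?_ h).1 ⟨a, ha, rfl, .refl _⟩
  rintro s t ⟨c, hc, rfl, rfl⟩
  have hn : Next (mdl Q st) ((mdl Q st).S c) ((mdl Q st).T c) := ⟨c, hc, rfl, rfl⟩
  constructor
  · rintro ⟨b, hb, e, hab⟩
    have := g.sinj b hb.1 c hc e
    subst this
    have hh := (C_iff hg).1 hb
    have : ¬ Lst (mdl Q st) ((mdl Q st).T b) := fun hl => hh.2 _ hl hn.sm
    unfold Lst at this
    push Not at this
    obtain ⟨u, d, hd, hd1, hd2⟩ := this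
    have hdC : InC Q st d := by
      refine (C_iff hg).2 ⟨hd, ?_⟩
      intro t ht hs
      rw [hd1] at hs
      exact hh.2 t ht (hn.sm.trans hs)
    refine ⟨d, hdC, hd1, hab.trans _ _ _ (.symm _ _ (.rel _ _ ⟨hdC, hb, ?_⟩))⟩
    obtain ⟨x, y⟩ := (ST_iff hd hc).1 hd1
    exact ⟨x.symm, y.symm⟩
  · rintro ⟨b, hb, e, hab⟩
    have hh := (C_iff hg).1 hb
    have hcC : InC Q st c := by
      refine (C_iff hg).2 ⟨hc, ?_⟩
      intro t ht hs
      rw [e] at hh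
      exact hh.2 t ht (hn.sm.symm.trans hs)
    refine ⟨c, hcC, rfl, hab.trans _ _ _ (.rel _ _ ⟨hb, hcC, ?_⟩)⟩
    obtain ⟨x, y⟩ := (ST_iff hb.1 hc).1 e
    exact ⟨x.symm, y.symm⟩

theorem cls_C (hg : IsGentle Q) {a : ℕ} (ha : InC Q st a) :
    cls (mdl Q st) ((mdl Q st).S a) = (mdl Q st).S '' {b | Relation.EqvGen (PsiRel Q st) a b} := by
  ext s
  constructor
  · intro h
    obtain ⟨b, h1, h2, h3⟩ := sm_psi hg ha h
    exact ⟨b, h3, h2⟩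
  · rintro ⟨b, h, rfl⟩
    exact (psi_sm h).1

theorem COrbit.sub {O : Set ℕ} (h : COrbit Q st O) : O ⊆ ↑Q.A := by
  obtain ⟨a, ha, rfl⟩ := h
  intro b hb
  exact ((psi_sm hb).2.1 ha).1

theorem S_injOn (hg : IsGentle Q) : Set.InjOn (mdl Q st).S ↑Q.A :=
  fun a ha b hb e => (mdl_good hg).sinj a ha b hb e

theorem COrbit.ncard_img (hg : IsGentle Q) {O : Set ℕ} (h : COrbit Q st O) :
    ((mdl Q st).S '' O).ncard = O.ncard :=
  Set.ncard_image_of_injOn ((S_injOn hg).mono h.sub)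

theorem COrbits_fin : {O | COrbit Q st O}.Finite := by
  refine Set.Finite.subset (Set.Finite.image (fun a => {b | Relation.EqvGen (PsiRel Q st) a b})
    (Finset.finite_toSet Q.A)) ?_
  rintro O ⟨a, ha, rfl⟩
  exact ⟨a, ha.1, rfl⟩

/-- threads are finitely many and correspond to last slots -/
theorem threads (hg : IsGentle Q) : ∃ (NN : Finset Thread) (LL : Finset Slot) (len : Slot → ℕ),
    (∀ w, w ∈ NN ↔ InN Q st w) ∧ (∀ t, t ∈ LL ↔ t.1 ∈ Q.V ∧ Lst (mdl Q st) t) ∧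
    NN.card = LL.card ∧ ∑ w ∈ NN, w.len = ∑ t ∈ LL, len t ∧
    ∀ t ∈ LL, (cls (mdl Q st) t).ncard = len t + 1 := by
  classical
  have g := mdl_good (st := st) hg
  have : ∀ t, Lst (mdl Q st) t → ∃ l, BC (mdl Q st) t l := fun t ht => BC.of_lst g ht
  choose! l hl using this
  let LL := (slots (mdl Q st)).filter (Lst (mdl Q st))
  have hLL : ∀ t, t ∈ LL ↔ t.1 ∈ Q.V ∧ Lst (mdl Q st) t := by
    intro t
    simp only [LL, Finset.mem_filter, mem_slots]
    rfl
  have hinj : Set.InjOn (fun t => mk t (l t)) ↑LL := by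
    intro t ht t' ht' e
    exact (mk_inj (hl t ((hLL t).1 ht).2) (hl t' ((hLL t').1 ht').2) e).1
  refine ⟨LL.image (fun t => mk t (l t)), LL, fun t => (l t).length, ?_, hLL, ?_, ?_, ?_⟩
  · intro w
    rw [Finset.mem_image]
    constructor
    · rintro ⟨t, ht, rfl⟩
      exact mk_N hg (hl t ((hLL t).1 ht).2) ((hLL t).1 ht).2 ((hLL t).1 ht).1
    · intro h
      obtain ⟨t, l', rfl, h1, h2, h3⟩ := N_mk hg h
      refine ⟨t, (hLL t).2 ⟨h3, h2⟩, ?_⟩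
      rw [BC.uniq g h1 (hl t h2)]
  · exact Finset.card_image_of_injOn hinj
  · rw [Finset.sum_image hinj]
    exact Finset.sum_congr rfl fun t _ => mk_len _ _
  · intro t ht
    rw [cls_lst g ((hLL t).1 ht).2]
    exact ((hl t ((hLL t).1 ht).2).ncard g).2

theorem count (hg : IsGentle Q) {m1 m2 p q : ℕ} (hp : 0 < p + m1) (hq : 0 < q + m2)
    (hf : ∀ x, fInv Q st x =
      (m1 + m2) * charFn 0 3 x + charFn (p + m1) p x + charFn (q + m2) q x) :
    (∃ O1 O2, NOrbit Q st O1 ∧ NOrbit Q st O2 ∧ O1 ≠ O2) ∧ (∀ O, COrbit Q st O → O.ncard = 3) ∧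
    {O | COrbit Q st O}.ncard = m1 + m2 ∧
    ∀ NN : Finset Thread, (∀ w, w ∈ NN ↔ InN Q st w) →
      NN.card = p + m1 + (q + m2) ∧ ∑ w ∈ NN, w.len = p + q := by
  classical
  obtain ⟨NN, LL, len, hNN, -, -, -, -⟩ := threads (st := st) hg
  let orb : Thread → Set Thread := fun w => {w' | Relation.EqvGen (PhiRel Q st) w w'}
  have orb_eq : ∀ w w', w' ∈ orb w ↔ orb w' = orb w := by
    intro w w'
    constructor
    · intro h
      ext v
      exact ⟨fun h' => Relation.EqvGen.trans _ _ _ h h', fun h' => (Relation.EqvGen.symm _ _ h).trans _ _ _ h'⟩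
    · intro h
      rw [← h]; exact Relation.EqvGen.refl _
  let X : Finset (Set Thread) := NN.image orb
  have hX : ∀ O, O ∈ X ↔ NOrbit Q st O := by
    intro O
    rw [Finset.mem_image]
    constructor
    · rintro ⟨w, hw, rfl⟩; exact ⟨w, (hNN w).1 hw, rfl⟩
    · rintro ⟨w, hw, rfl⟩; exact ⟨w, (hNN w).2 hw, rfl⟩
  have hfib : ∀ w ∈ NN, orb w = ↑(NN.filter fun v => orb v = orb w) := by
    intro w hw
    ext v
    rw [Finset.mem_coe, Finset.mem_filter, ← orb_eq]
    exact ⟨fun h => ⟨(hNN v).2 ((PhiRel.N h).1 ((hNN w).1 hw)), h⟩, fun h => h.2⟩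
  have sp : ∑ O ∈ X, pN O = NN.card := by
    rw [Finset.card_eq_sum_ones]
    apply Finset.sum_image'
    intro w hw
    rw [← Finset.card_eq_sum_ones, pN]
    conv_lhs => rw [hfib w hw]
    rw [Set.ncard_coe_finset]
  have sq : ∑ O ∈ X, qN O = ∑ w ∈ NN, w.len := by
    apply Finset.sum_image'
    intro w hw
    rw [qN]
    conv_lhs => rw [hfib w hw]
    exact finsum_mem_coe_finset _ _
  have ppos : ∀ O, NOrbit Q st O → 0 < pN O := by
    rintro O ⟨w, hw, rfl⟩
    have h1 := hfib w ((hNN w).2 hw)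
    show 0 < pN (orb w)
    rw [pN, h1, Set.ncard_coe_finset, Finset.card_pos]
    exact ⟨w, Finset.mem_filter.2 ⟨(hNN w).2 hw, rfl⟩⟩
  let key : Set Thread → ℕ × ℕ := fun O => (pN O, qN O)
  have hcnt : ∀ k : ℕ × ℕ, {O : Set Thread | NOrbit Q st O ∧ pN O = k.1 ∧ qN O = k.2}.ncard =
      (X.val.map key).count k := by
    intro k
    rw [Multiset.count_map]
    have : {O : Set Thread | NOrbit Q st O ∧ pN O = k.1 ∧ qN O = k.2} = ↑(X.filter fun O => k = key O) := by
      ext O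
      rw [Finset.mem_coe, Finset.mem_filter, hX]
      constructor
      · rintro ⟨h1, h2, h3⟩; exact ⟨h1, Prod.ext h2.symm h3.symm⟩
      · rintro ⟨h1, rfl⟩; exact ⟨h1, rfl, rfl⟩
    rw [this, Set.ncard_coe_finset]
    rfl
  have hms : X.val.map key = {(p + m1, p), (q + m2, q)} := by
    ext k
    rw [← hcnt]
    have hR : Multiset.count k {(p + m1, p), (q + m2, q)} = charFn (p + m1) p k + charFn (q + m2) q k := by
      show Multiset.count k ((p + m1, p) ::ₘ {(q + m2, q)}) = _
      rw [Multiset.count_cons, Multiset.count_singleton, add_comm]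
      rfl
    rw [hR]
    by_cases hk : k.1 = 0
    · have e1 : charFn (p + m1) p k = 0 := by
        unfold charFn; rw [if_neg]; rintro rfl; simp only at hk; omega
      have e2 : charFn (q + m2) q k = 0 := by
        unfold charFn; rw [if_neg]; rintro rfl; simp only at hk; omega
      rw [e1, e2]
      have : {O : Set Thread | NOrbit Q st O ∧ pN O = k.1 ∧ qN O = k.2} = ∅ := by
        ext O
        constructor
        · rintro ⟨h1, h2, _⟩
          have := ppos O h1
          omega
        · intro h; exact absurd h (by simp)
      rw [this, Set.ncard_empty]
    · have h := hf k
      have e1 : charFn 0 3 k = 0 := by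
        unfold charFn; rw [if_neg]; rintro rfl; simp at hk
      have e2 : {O : Set ℕ | COrbit Q st O ∧ k.1 = 0 ∧ O.ncard = k.2} = ∅ := by
        ext O
        constructor
        · rintro ⟨_, h2, _⟩; exact absurd h2 hk
        · intro h; exact absurd h (by simp)
      rw [fInv, e1, e2, Set.ncard_empty] at h
      omega
  have hcard : X.card = 2 := by
    have := congrArg Multiset.card hms
    simpa using this
  have hsp : ∑ O ∈ X, pN O = p + m1 + (q + m2) := by
    have := congrArg (fun s => (Multiset.map Prod.fst s).sum) hms
    simpa [Multiset.map_map] using this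
  have hsq : ∑ O ∈ X, qN O = p + q := by
    have := congrArg (fun s => (Multiset.map Prod.snd s).sum) hms
    simpa [Multiset.map_map] using this
  have hC : ∀ n, {O : Set ℕ | COrbit Q st O ∧ O.ncard = n}.ncard = (m1 + m2) * (if n = 3 then 1 else 0) := by
    intro n
    have h := hf (0, n)
    have e1 : charFn (p + m1) p (0, n) = 0 := by
      unfold charFn; rw [if_neg]; intro h; have := congrArg Prod.fst h; simp only at this; omega
    have e2 : charFn (q + m2) q (0, n) = 0 := by
      unfold charFn; rw [if_neg]; intro h; have := congrArg Prod.fst h; simp only at this; omega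
    have e3 : charFn 0 3 (0, n) = if n = 3 then 1 else 0 := by
      unfold charFn; simp
    have e4 : {O : Set Thread | NOrbit Q st O ∧ pN O = ((0, n) : ℕ × ℕ).1 ∧ qN O = ((0, n) : ℕ × ℕ).2} = ∅ := by
      ext O
      constructor
      · rintro ⟨h1, h2, _⟩
        have := ppos O h1
        simp only at h2
        omega
      · intro h; exact absurd h (by simp)
    rw [fInv, e1, e2, e3, e4, Set.ncard_empty] at h
    simp only [true_and] at h
    omega
  have h3 : ∀ O, COrbit Q st O → O.ncard = 3 := by
    intro O hO
    by_contra hn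
    have h := hC O.ncard
    rw [if_neg hn, mul_zero, Set.ncard_eq_zero (COrbits_fin.subset fun O h => h.1)] at h
    have : O ∈ (∅ : Set (Set ℕ)) := by rw [← h]; exact ⟨hO, rfl⟩
    exact this
  refine ⟨?_, h3, ?_, ?_⟩
  · obtain ⟨O1, O2, hne, e⟩ := Finset.card_eq_two.1 hcard
    exact ⟨O1, O2, (hX _).1 (by rw [e]; simp), (hX _).1 (by rw [e]; simp), hne⟩
  · have h := hC 3
    have : {O : Set ℕ | COrbit Q st O ∧ O.ncard = 3} = {O | COrbit Q st O} := by
      ext O; exact ⟨fun h => h.1, fun h => ⟨h, h3 O h⟩⟩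
    rw [this] at h
    simpa using h
  · intro NN' h'
    have : NN' = NN := by ext w; rw [h', hNN]
    subst this
    exact ⟨sp.symm.trans hsp, sq.symm.trans hsq⟩

theorem card_nodes (hg : IsGentle Q) (h3 : ∀ O, COrbit Q st O → O.ncard = 3)
    {LL : Finset Slot} {len : Slot → ℕ} (hLL : ∀ t, t ∈ LL ↔ t.1 ∈ Q.V ∧ Lst (mdl Q st) t)
    (hlen : ∀ t ∈ LL, (cls (mdl Q st) t).ncard = len t + 1) :
    (nodes (mdl Q st)).card = LL.card + {O | COrbit Q st O}.ncard ∧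
    2 * Q.V.card = ∑ t ∈ LL, (len t + 1) + 3 * {O | COrbit Q st O}.ncard := by
  classical
  have g := mdl_good (st := st) hg
  let K : Finset (Set ℕ) := (COrbits_fin (Q := Q) (st := st)).toFinset
  have hK : ∀ O, O ∈ K ↔ COrbit Q st O := fun O => Set.Finite.mem_toFinset _
  have hKc : {O | COrbit Q st O}.ncard = K.card := Set.ncard_eq_toFinset_card _ _
  have hnodes : nodes (mdl Q st) = LL.image (cls (mdl Q st)) ∪ K.image (Set.image (mdl Q st).S) := by
    ext c
    rw [mem_nodes, Finset.mem_union, Finset.mem_image, Finset.mem_image]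
    constructor
    · rintro ⟨s, hs, rfl⟩
      by_cases h : ∃ t, Lst (mdl Q st) t ∧ Sm (mdl Q st) s t
      · obtain ⟨t, h1, h2⟩ := h
        exact Or.inl ⟨t, (hLL t).2 ⟨(h2.mem g).1 hs, h1⟩, cls_eq.2 h2.symm⟩
      · right
        push Not at h
        have h1 : ¬ Lst (mdl Q st) s := fun hl => h s hl (Sm.refl _ _)
        unfold Lst at h1
        push Not at h1
        obtain ⟨u, a, ha, rfl, rfl⟩ := h1
        have haC : InC Q st a := (C_iff hg).2 ⟨ha, h⟩
        exact ⟨_, (hK _).2 ⟨a, haC, rfl⟩, (cls_C hg haC).symm⟩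
    · rintro (⟨t, ht, rfl⟩ | ⟨O, hO, rfl⟩)
      · exact ⟨t, ((hLL t).1 ht).1, rfl⟩
      · obtain ⟨a, ha, rfl⟩ := (hK _).1 hO
        exact ⟨(mdl Q st).S a, g.sv a ha.1, cls_C hg ha⟩
  have hdisj : Disjoint (LL.image (cls (mdl Q st))) (K.image (Set.image (mdl Q st).S)) := by
    rw [Finset.disjoint_left]
    intro c h1 h2
    rw [Finset.mem_image] at h1 h2
    obtain ⟨t, ht, rfl⟩ := h1
    obtain ⟨O, hO, e⟩ := h2
    obtain ⟨a, ha, rfl⟩ := (hK _).1 hO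
    rw [← cls_C hg ha, cls_eq] at e
    exact ((C_iff hg).1 ha).2 t ((hLL t).1 ht).2 e
  have i1 : Set.InjOn (cls (mdl Q st)) ↑LL := by
    intro t ht t' ht' e
    have h1 := cls_eq.1 e
    rcases h1.rch g with h | h
    · exact Lst.eq ((hLL t).1 ht).2 h
    · exact (Lst.eq ((hLL t').1 ht').2 h).symm
  have i2 : Set.InjOn (Set.image (mdl Q st).S) ↑K := by
    intro O hO O' hO' e
    exact ((S_injOn hg).image_eq_image_iff ((hK O).1 hO).sub ((hK O').1 hO').sub).1 e
  constructor
  · rw [hnodes, Finset.card_union_of_disjoint hdisj, Finset.card_image_of_injOn i1,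
      Finset.card_image_of_injOn i2, hKc]
  · have e1 : 2 * Q.V.card = (slots (mdl Q st)).card := by
      rw [Finset.card_product]
      simp only [Finset.card_univ, Fintype.card_bool]
      rw [mul_comm]; rfl
    have e2 : nodes (mdl Q st) = (slots (mdl Q st)).image (cls (mdl Q st)) := by
      unfold nodes; congr
    have e3 : ∑ c ∈ nodes (mdl Q st), c.ncard = (slots (mdl Q st)).card := by
      rw [e2, Finset.card_eq_sum_ones]
      apply Finset.sum_image'
      intro s hs
      rw [← Finset.card_eq_sum_ones, ← Set.ncard_coe_finset]
      congr 1
      ext t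
      rw [Finset.mem_coe, Finset.mem_filter, mem_slots, cls_eq]
      constructor
      · intro h; exact ⟨((Sm.mem g h).1 (mem_slots.1 hs)), Sm.symm h⟩
      · intro h; exact h.2.symm
    rw [e1, ← e3, hnodes, Finset.sum_union hdisj, Finset.sum_image i1, Finset.sum_image i2, hKc]
    congr 1
    · exact Finset.sum_congr rfl hlen
    · rw [Finset.sum_congr rfl (g := fun _ => 3)]
      · simp [mul_comm]
      · intro O hO
        rw [COrbit.ncard_img hg ((hK O).1 hO), h3 O ((hK O).1 hO)]

theorem final (Q : QuivRel) (st : SigmaTau Q) (hA : ClassAtilde Q st) :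
    ∃ Q' : QuivRel, RefEquiv Q Q' ∧ IsGentle Q' ∧ (∀ a, ¬ BranchArrow Q' a) ∧
      (∀ O, ¬ BranchTriangle Q' O) := by
  obtain ⟨hg, m1, m2, p, q, hp, hq, hf⟩ := hA
  have g := mdl_good (st := st) hg
  obtain ⟨⟨O1, O2, n1, n2, hne⟩, h3, hc, hN⟩ := count hg hp hq hf
  obtain ⟨NN, LL, len, hNN, hLL, k1, k2, k3⟩ := threads (st := st) hg
  obtain ⟨c1, c2⟩ := hN NN hNN
  obtain ⟨d1, d2⟩ := card_nodes hg h3 hLL k3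
  have hcard : (nodes (mdl Q st)).card = Q.V.card := by
    rw [Finset.sum_add_distrib, ← k2, c2, Finset.sum_const, smul_eq_mul, mul_one] at d2
    omega
  have hrank := rank_mdl hg hcard n1 n2 hne
  have good : Good (mdl Q st) := by
    refine { g with noloop := ?_, rank := hrank }
    intro a ha e
    rcases fst_eq e with e | e
    · have hn : Next (mdl Q st) ((mdl Q st).S a) ((mdl Q st).S a) := ⟨a, ha, rfl, e.symm⟩
      have hcl : ∀ t, Sm (mdl Q st) ((mdl Q st).S a) t → t = (mdl Q st).S a := by
        intro t ht
        refine (Sm.induct (fun t => t = (mdl Q st).S a) ?_ ht).1 rfl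
        intro u v huv
        constructor
        · rintro rfl; exact huv.runiq g hn
        · rintro rfl; exact huv.luniq g hn
      have haC : InC Q st a := by
        refine (C_iff hg).2 ⟨ha, ?_⟩
        intro t ht hs
        rw [hcl t hs] at ht
        exact ht _ hn
      have hO : COrbit Q st _ := ⟨a, haC, rfl⟩
      have e1 := h3 _ hO
      rw [← hO.ncard_img hg, ← cls_C hg haC] at e1
      have : cls (mdl Q st) ((mdl Q st).S a) = {(mdl Q st).S a} := by
        ext t
        exact ⟨fun h => hcl t h, fun h => by rw [h]; exact Sm.refl _ _⟩
      rw [this, Set.ncard_singleton] at e1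
      omega
    · obtain ⟨r, hr⟩ := hrank
      exact lt_irrefl _ (hr a ha a ha e)
  have := final_of good hcard
  rw [toQ_mdl hg] at this
  exact this

end

/-- Every `𝚫 ∈ Ã` is reflection-equivalent to a gentle
quiver without branch arrows and without branch triangles. -/
theorem stmt14 (Q : QuivRel) (st : SigmaTau Q) (hA : ClassAtilde Q st) :
    ∃ Q' : QuivRel, IsGentle Q' ∧ (∀ a : ℕ, ¬ BranchArrow Q' a) ∧
      (∀ O : Finset ℕ, ¬ BranchTriangle Q' O) ∧ RefEquiv Q Q' := by
  obtain ⟨Q', h1, h2, h3, h4⟩ := final Q st hA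
  exact ⟨Q', h2, h3, h4, h1⟩

end GentleQuiv
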